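/- arXiv:1411.2397 — 3 statements merged into one kernel-verified Lean document; each statement's English description precedes it below -/
import Mathlib

section
/- Let K be a number field with ring of integers O_K. Identify a pair (Q1, Q2) of quadratic forms in the five variables T0,…,T4 with coefficients in K with its coefficient vector, a point of the affine space A^30(K) = K^30. Call (Q1, Q2) a Hasse counterexample if: (1) the common zero locus X of Q1 and Q2 in P^4 over an algebraic closure of K is nonempty and at every common zero of Q1 and Q2 over the algebraic closure the 2×5 Jacobian matrix of (Q1, Q2) has rank 2 (so X is a smooth complete intersection of two quadrics, i.e. a del Pezzo surface of degree four over K); (2) X(K_𝔩) ≠ ∅ for every nonzero prime ideal 𝔩 of O_K, and for every embedding σ: K → ℝ the surface obtained by applying σ to the coefficients has a real point (i.e. X has an adelic point); (3) X has no K-rational point. Then the set of Hasse counterexamples is Zariski dense in the space of pairs: every polynomial in 30 variables with coefficients in K that vanishes at the coefficient vector of every Hasse counterexample is the zero polynomial. (Equivalently, the degree four del Pezzo surfaces over K that violate the Hasse principle are Zariski dense in the Grassmann scheme Gr(2,15)_K parametrizing pencils of quinary quadrics.) -/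
open IsDedekindDomain NumberField MvPolynomial

set_option maxHeartbeats 1000000
set_option synthInstance.maxHeartbeats 400000

/-- Index set for the 15 coefficients of a quinary quadratic form; a pair of quadratic
forms thus has coefficient vector in `K^30 = (Fin 2 × QIdx) → K`. -/
abbrev QIdx : Type := {q : Fin 5 × Fin 5 // q.1 ≤ q.2}

/-- The quadratic form in `T0,…,T4` with coefficient vector `c`. -/
noncomputable def quadForm {K : Type*} [CommRing K] (c : QIdx → K) :
    MvPolynomial (Fin 5) K :=
  ∑ q : QIdx, MvPolynomial.C (c q) * MvPolynomial.X q.val.1 * MvPolynomial.X q.val.2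

variable {K : Type*} [Field K]

/-- The pair of quadrics with coefficients `c` has a nonzero common solution over `F`
(with coefficients transported along `φ : K →+* F`). -/
def HasSolution {F : Type*} [Field F] (φ : K →+* F) (c : Fin 2 → QIdx → K) : Prop :=
  ∃ t : Fin 5 → F, t ≠ 0 ∧ ∀ i : Fin 2, MvPolynomial.eval₂ φ t (quadForm (c i)) = 0

/-- The common zero locus of the two quadrics is a degree four del Pezzo surface:
over an algebraic closure it is nonempty, and at every common zero the `2×5` Jacobian
matrix has rank `2`. -/
def IsDelPezzoPair [NumberField K] (c : Fin 2 → QIdx → K) : Prop :=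
  HasSolution (algebraMap K (AlgebraicClosure K)) c ∧
  ∀ t : Fin 5 → AlgebraicClosure K, t ≠ 0 →
    (∀ i : Fin 2, MvPolynomial.eval₂ (algebraMap K (AlgebraicClosure K)) t
      (quadForm (c i)) = 0) →
    (Matrix.of fun (i : Fin 2) (m : Fin 5) =>
      MvPolynomial.eval₂ (algebraMap K (AlgebraicClosure K)) t
        (MvPolynomial.pderiv m (quadForm (c i)))).rank = 2

/-- The pair of quadrics with coefficients `c` defines a degree four del Pezzo surface
over `K` that violates the Hasse principle: it has points over every completion of `K`
but no `K`-rational point. -/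
def IsHasseCounterexample [NumberField K] (c : Fin 2 → QIdx → K) : Prop :=
  IsDelPezzoPair c ∧
  (∀ v : HeightOneSpectrum (𝓞 K),
    HasSolution (algebraMap K (v.adicCompletion K)) c) ∧
  (∀ σ : K →+* ℝ, HasSolution σ c) ∧
  ¬ HasSolution (RingHom.id K) c


namespace HasseDense

/-- value of the quadratic form with coefficients `c` -/
def qv {F : Type*} [Field F] (φ : K →+* F) (c : QIdx → K) (t : Fin 5 → F) : F :=
  ∑ q : QIdx, φ (c q) * t q.val.1 * t q.val.2

/-- the polar form -/
def qb {F : Type*} [Field F] (φ : K →+* F) (c : QIdx → K) (t s : Fin 5 → F) : F :=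
  ∑ q : QIdx, φ (c q) * (t q.val.1 * s q.val.2 + s q.val.1 * t q.val.2)

lemma eval_quadForm {F : Type*} [Field F] (φ : K →+* F) (c : QIdx → K) (t : Fin 5 → F) :
    MvPolynomial.eval₂ φ t (quadForm c) = qv φ c t := by
  simp [quadForm, qv, MvPolynomial.eval₂_sum]

lemma eval_pderiv {F : Type*} [Field F] (φ : K →+* F) (c : QIdx → K) (t : Fin 5 → F)
    (m : Fin 5) :
    MvPolynomial.eval₂ φ t (MvPolynomial.pderiv m (quadForm c)) = qb φ c t (Pi.single m 1) := by
  simp only [quadForm, qb, map_sum, MvPolynomial.eval₂_sum]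
  refine Finset.sum_congr rfl fun q _ => ?_
  simp only [Derivation.leibniz, MvPolynomial.pderiv_C, MvPolynomial.pderiv_X, smul_eq_mul,
    MvPolynomial.eval₂_add, MvPolynomial.eval₂_mul, MvPolynomial.eval₂_C, MvPolynomial.eval₂_X,
    mul_zero, add_zero]
  have h : ∀ i : Fin 5, MvPolynomial.eval₂ φ t ((Pi.single m (1 : MvPolynomial (Fin 5) K) : Fin 5 → MvPolynomial (Fin 5) K) i)
      = (Pi.single m (1 : F) : Fin 5 → F) i := by
    intro i
    by_cases hi : i = m
    · subst hi; simp
    · simp [Pi.single_eq_of_ne hi]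
  rw [h, h]
  ring

lemma qb_eq {F : Type*} [Field F] (φ : K →+* F) (c : QIdx → K) (t s : Fin 5 → F) :
    qb φ c t s = qv φ c (t + s) - qv φ c t - qv φ c s := by
  simp only [qb, qv, ← Finset.sum_sub_distrib]
  refine Finset.sum_congr rfl fun q _ => ?_
  simp only [Pi.add_apply]; ring

lemma qb_single_sum {F : Type*} [Field F] (φ : K →+* F) (c : QIdx → K) (t s : Fin 5 → F) :
    qb φ c t s = ∑ m, s m * qb φ c t (Pi.single m 1) := by
  simp only [qb, Finset.mul_sum]
  rw [Finset.sum_comm]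
  refine Finset.sum_congr rfl fun q _ => ?_
  have h : ∀ j : Fin 5, s j = ∑ m, s m * (Pi.single m (1 : F) : Fin 5 → F) j := by
    intro j
    rw [Finset.sum_eq_single j]
    · simp
    · intro b _ hb; rw [Pi.single_eq_of_ne (Ne.symm hb)]; simp
    · simp
  conv_lhs => rw [h q.val.1, h q.val.2]
  rw [Finset.mul_sum, Finset.sum_mul, ← Finset.sum_add_distrib, Finset.mul_sum]
  refine Finset.sum_congr rfl fun m _ => ?_
  ring

lemma rank_two_iff {F : Type*} [Field F] (N : Matrix (Fin 2) (Fin 5) F) :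
    N.rank = 2 ↔ ∀ α β : F, (∀ m, α * N 0 m + β * N 1 m = 0) → α = 0 ∧ β = 0 := by
  have h1 : N.rank = 2 ↔ LinearIndependent F N.row := by
    rw [linearIndependent_iff_card_eq_finrank_span, Matrix.rank_eq_finrank_span_row]
    simp [eq_comm, Set.finrank]
  rw [h1]
  have h2 : N.row = ![N 0, N 1] := by
    ext i j; fin_cases i <;> rfl
  rw [h2, LinearIndependent.pair_iff]
  constructor
  · intro h α β hm
    exact h α β (by ext m; simpa using hm m)
  · intro h α β hm
    exact h α β (fun m => by simpa using congrFun hm m)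

/-- smoothness in terms of polar forms -/
lemma rank_jac_iff {F : Type*} [Field F] (φ : K →+* F) (c : Fin 2 → QIdx → K) (t : Fin 5 → F) :
    (Matrix.of fun (i : Fin 2) (m : Fin 5) =>
      MvPolynomial.eval₂ φ t (MvPolynomial.pderiv m (quadForm (c i)))).rank = 2 ↔
    ∀ α β : F, (∀ s, α * qb φ (c 0) t s + β * qb φ (c 1) t s = 0) → α = 0 ∧ β = 0 := by
  rw [rank_two_iff]
  simp only [Matrix.of_apply, eval_pderiv]
  refine forall_congr' fun α => forall_congr' fun β => ?_
  refine ⟨fun h hs => h fun m => hs _, fun h hm => h fun s => ?_⟩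
  rw [qb_single_sum, qb_single_sum φ (c 1), Finset.mul_sum, Finset.mul_sum,
    ← Finset.sum_add_distrib]
  refine Finset.sum_eq_zero fun m _ => ?_
  linear_combination s m * hm m

/-- coefficient vector of the form `t ↦ tᵀ N t` -/
def coef (N : Matrix (Fin 5) (Fin 5) K) : QIdx → K := fun q =>
  if q.val.1 = q.val.2 then N q.val.1 q.val.2 else N q.val.1 q.val.2 + N q.val.2 q.val.1

lemma sum_QIdx {F : Type*} [AddCommMonoid F] (f : Fin 5 → Fin 5 → F) :
    ∑ q : QIdx, f q.val.1 q.val.2 =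
      f 0 0 + f 0 1 + f 0 2 + f 0 3 + f 0 4 + f 1 1 + f 1 2 + f 1 3 + f 1 4 + f 2 2 + f 2 3
        + f 2 4 + f 3 3 + f 3 4 + f 4 4 := by
  have : ∑ q : QIdx, f q.val.1 q.val.2
      = ∑ k : Fin 5, ∑ l : Fin 5, if k ≤ l then f k l else 0 := by
    rw [← Finset.sum_product', Finset.univ_product_univ, ← Finset.sum_filter]
    exact (Finset.sum_subtype (Finset.univ.filter fun q : Fin 5 × Fin 5 => q.1 ≤ q.2)
      (by simp) (fun q => f q.1 q.2)).symm
  rw [this]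
  simp only [Fin.sum_univ_five]
  simp (decide := true) only [if_true, if_false, zero_add, add_zero]
  simp only [← add_assoc]

lemma qv_coef {F : Type*} [Field F] (φ : K →+* F) (N : Matrix (Fin 5) (Fin 5) K)
    (t : Fin 5 → F) : qv φ (coef N) t = t ⬝ᵥ (N.map φ).mulVec t := by
  have h := sum_QIdx (fun i j => φ (if i = j then N i j else N i j + N j i) * t i * t j)
  rw [qv]
  simp only [coef]
  rw [h]
  simp (decide := true) only [if_true, if_false, dotProduct, Matrix.mulVec, Fin.sum_univ_five,
    Matrix.map_apply, map_add]
  ring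

/-- the pair obtained from the pair `M` by the substitution `g` and the recombination `h` -/
def act (g : Matrix (Fin 5) (Fin 5) K) (h : Matrix (Fin 2) (Fin 2) K)
    (M : Fin 2 → Matrix (Fin 5) (Fin 5) K) : Fin 2 → QIdx → K := fun i =>
  coef (g.transpose * (h i 0 • M 0 + h i 1 • M 1) * g)

lemma qv_act {F : Type*} [Field F] (φ : K →+* F) (g : Matrix (Fin 5) (Fin 5) K)
    (h : Matrix (Fin 2) (Fin 2) K)
    (M : Fin 2 → Matrix (Fin 5) (Fin 5) K) (t : Fin 5 → F) (i : Fin 2) :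
    qv φ (act g h M i) t = φ (h i 0) * qv φ (coef (M 0)) ((g.map φ).mulVec t)
      + φ (h i 1) * qv φ (coef (M 1)) ((g.map φ).mulVec t) := by
  rw [act, qv_coef, qv_coef, qv_coef]
  have : (g.transpose * (h i 0 • M 0 + h i 1 • M 1) * g).map φ =
      (g.map φ).transpose * (φ (h i 0) • (M 0).map φ + φ (h i 1) • (M 1).map φ) * (g.map φ) := by
    rw [Matrix.map_mul, Matrix.map_mul, Matrix.transpose_map]
    congr 2
    ext a b; simp
  rw [this, ← Matrix.mulVec_mulVec, ← Matrix.mulVec_mulVec, Matrix.dotProduct_mulVec,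
    Matrix.vecMul_transpose, Matrix.add_mulVec, Matrix.smul_mulVec, Matrix.smul_mulVec,
    dotProduct_add, dotProduct_smul, dotProduct_smul, smul_eq_mul, smul_eq_mul]

lemma hasSolution_iff {F : Type*} [Field F] (φ : K →+* F) (c : Fin 2 → QIdx → K) :
    HasSolution φ c ↔ ∃ t : Fin 5 → F, t ≠ 0 ∧ qv φ (c 0) t = 0 ∧ qv φ (c 1) t = 0 := by
  simp only [HasSolution, eval_quadForm, Fin.forall_fin_two]

lemma map_inv {F : Type*} [Field F] (φ : K →+* F) {n : ℕ} (g : Matrix (Fin n) (Fin n) K)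
    (hg : g.det ≠ 0) : (g.map φ) * (g⁻¹.map φ) = 1 ∧ (g⁻¹.map φ) * (g.map φ) = 1 := by
  have hu : IsUnit g.det := isUnit_iff_ne_zero.mpr hg
  constructor
  · rw [← Matrix.map_mul, Matrix.mul_nonsing_inv _ hu]; simp
  · rw [← Matrix.map_mul, Matrix.nonsing_inv_mul _ hu]; simp

lemma two_kill {F : Type*} [Field F] (φ : K →+* F) (h : Matrix (Fin 2) (Fin 2) K)
    (hh : h.det ≠ 0) (x y : F) (h0 : φ (h 0 0) * x + φ (h 0 1) * y = 0)
    (h1 : φ (h 1 0) * x + φ (h 1 1) * y = 0) : x = 0 ∧ y = 0 := by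
  have hd : φ (h 0 0) * φ (h 1 1) - φ (h 0 1) * φ (h 1 0) ≠ 0 := by
    rw [← map_mul, ← map_mul, ← map_sub, ← Matrix.det_fin_two]
    exact (map_ne_zero φ).mpr hh
  constructor
  · refine (mul_eq_zero.mp (?_ : _ * x = 0)).resolve_left hd
    linear_combination φ (h 1 1) * h0 - φ (h 0 1) * h1
  · refine (mul_eq_zero.mp (?_ : _ * y = 0)).resolve_left hd
    linear_combination φ (h 0 0) * h1 - φ (h 1 0) * h0

lemma two_kill' {F : Type*} [Field F] (φ : K →+* F) (h : Matrix (Fin 2) (Fin 2) K)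
    (hh : h.det ≠ 0) (x y : F) (h0 : φ (h 0 0) * x + φ (h 1 0) * y = 0)
    (h1 : φ (h 0 1) * x + φ (h 1 1) * y = 0) : x = 0 ∧ y = 0 :=
  two_kill φ h.transpose (by rwa [Matrix.det_transpose]) x y h0 h1

lemma hasSolution_act {F : Type*} [Field F] (φ : K →+* F) (g : Matrix (Fin 5) (Fin 5) K)
    (h : Matrix (Fin 2) (Fin 2) K) (hg : g.det ≠ 0) (hh : h.det ≠ 0)
    (M : Fin 2 → Matrix (Fin 5) (Fin 5) K) :
    HasSolution φ (act g h M) ↔ HasSolution φ (fun i => coef (M i)) := by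
  rw [hasSolution_iff, hasSolution_iff]
  obtain ⟨h1, h2⟩ := map_inv φ g hg
  constructor
  · rintro ⟨t, ht, e0, e1⟩
    rw [qv_act] at e0 e1
    refine ⟨(g.map φ).mulVec t, ?_, two_kill φ h hh _ _ e0 e1⟩
    intro h0
    apply ht
    rw [← Matrix.one_mulVec t, ← h2, ← Matrix.mulVec_mulVec, h0, Matrix.mulVec_zero]
  · rintro ⟨t, ht, e0, e1⟩
    have key : (g.map φ).mulVec ((g⁻¹.map φ).mulVec t) = t := by
      rw [Matrix.mulVec_mulVec, h1, Matrix.one_mulVec]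
    refine ⟨(g⁻¹.map φ).mulVec t, ?_, ?_, ?_⟩
    · intro h0
      apply ht
      rw [← key, h0, Matrix.mulVec_zero]
    · rw [qv_act, key, e0, e1]; simp
    · rw [qv_act, key, e0, e1]; simp

lemma isHasse_act [NumberField K] (g : Matrix (Fin 5) (Fin 5) K)
    (h : Matrix (Fin 2) (Fin 2) K) (hg : g.det ≠ 0) (hh : h.det ≠ 0)
    (M : Fin 2 → Matrix (Fin 5) (Fin 5) K)
    (H : IsHasseCounterexample (fun i => coef (M i))) : IsHasseCounterexample (act g h M) := by
  obtain ⟨⟨H1, H2⟩, H3, H4, H5⟩ := H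
  refine ⟨⟨(hasSolution_act _ g h hg hh M).mpr H1, ?_⟩,
    fun v => (hasSolution_act _ g h hg hh M).mpr (H3 v),
    fun v => (hasSolution_act _ g h hg hh M).mpr (H4 v),
    fun v => H5 ((hasSolution_act _ g h hg hh M).mp v)⟩
  intro t ht e
  set φ := algebraMap K (AlgebraicClosure K) with hφ
  obtain ⟨h1, h2⟩ := map_inv φ g hg
  rw [rank_jac_iff]
  intro α β hs
  simp only [eval_quadForm, Fin.forall_fin_two, qv_act] at e
  have hz := two_kill φ h hh _ _ e.1 e.2
  have H6 := H2 ((g.map φ).mulVec t) (by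
    intro h0
    apply ht
    rw [← Matrix.one_mulVec t, ← h2, ← Matrix.mulVec_mulVec, h0, Matrix.mulVec_zero])
    (by
      simp only [eval_quadForm, Fin.forall_fin_two]
      exact hz)
  rw [rank_jac_iff] at H6
  have H7 := H6 (φ (h 0 0) * α + φ (h 1 0) * β) (φ (h 0 1) * α + φ (h 1 1) * β) (by
    intro s
    have key : (g.map φ).mulVec ((g⁻¹.map φ).mulVec s) = s := by
      rw [Matrix.mulVec_mulVec, h1, Matrix.one_mulVec]
    have := hs ((g⁻¹.map φ).mulVec s)
    simp only [qb_eq, qv_act, Matrix.mulVec_add, key] at this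
    simp only [qb_eq]
    linear_combination this)
  exact two_kill' φ h hh _ _ H7.1 H7.2

end HasseDense

namespace HasseDense

lemma totalDegree_pderiv_le {σ : Type*} (Q : MvPolynomial σ K) (j : σ) (n : ℕ)
    (hn : Q.totalDegree ≤ n + 1) : (pderiv j Q).totalDegree ≤ n := by
  rw [totalDegree]
  refine Finset.sup_le fun m hm => ?_
  rw [mem_support_iff, coeff_pderiv] at hm
  have h1 : m + Finsupp.single j 1 ∈ Q.support := by
    rw [mem_support_iff]; exact left_ne_zero_of_mul hm
  have h2 := (le_totalDegree h1).trans hn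
  rw [Finsupp.sum_add_index' (by simp) (by simp)] at h2
  simpa using h2

lemma stable_zero {σ : Type*} [CharZero K] (I : Set (MvPolynomial σ K))
    (hst : ∀ Q ∈ I, ∀ j, pderiv j Q ∈ I) (hc : ∀ a : K, C a ∈ I → a = 0) :
    ∀ (n : ℕ), ∀ Q ∈ I, Q.totalDegree ≤ n → Q = 0 := by
  intro n
  induction n with
  | zero =>
    intro Q hQ hn
    have h := totalDegree_eq_zero_iff_eq_C.mp (Nat.le_zero.mp hn)
    rw [h] at hQ
    rw [h, hc _ hQ, C_0]
  | succ n ih =>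
    intro Q hQ hn
    have hd : ∀ j, pderiv j Q = 0 := fun j =>
      ih _ (hst Q hQ j) (totalDegree_pderiv_le Q j n hn)
    have h0 : Q.totalDegree ≤ 0 := by
      rw [totalDegree]
      refine Finset.sup_le fun m hm => ?_
      rw [mem_support_iff] at hm
      by_contra hne
      have hm0 : m ≠ 0 := by rintro rfl; simp at hne
      obtain ⟨j, hj⟩ := Finsupp.ne_iff.mp hm0
      have h1 := congrArg (coeff (m - Finsupp.single j 1)) (hd j)
      rw [coeff_pderiv, tsub_add_cancel_of_le, coeff_zero] at h1
      · rcases mul_eq_zero.mp h1 with h | h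
        · exact hm h
        · exact Nat.cast_add_one_ne_zero _ h
      · rw [Finsupp.single_le_iff]
        exact Nat.one_le_iff_ne_zero.mpr hj
    have h := totalDegree_eq_zero_iff_eq_C.mp (Nat.le_zero.mp h0)
    rw [h] at hQ
    rw [h, hc _ hQ, C_0]

/-- restriction of a polynomial to a quadratic curve -/
noncomputable def onCurve {σ : Type*} (w0 w1 w2 : σ → K) : MvPolynomial σ K →ₐ[K] Polynomial K :=
  aeval fun j => Polynomial.C (w0 j) + Polynomial.C (w1 j) * Polynomial.X
    + Polynomial.C (w2 j) * Polynomial.X ^ 2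

lemma eval_onCurve {σ : Type*} (w0 w1 w2 : σ → K) (Q : MvPolynomial σ K) (t : K) :
    (onCurve w0 w1 w2 Q).eval t = eval (fun j => w0 j + t * w1 j + t ^ 2 * w2 j) Q := by
  induction Q using MvPolynomial.induction_on with
  | C a => simp [onCurve]
  | add p q hp hq => simp [hp, hq]
  | mul_X p j hp => rw [map_mul, map_mul, Polynomial.eval_mul, hp]; simp [onCurve]; left; ring

lemma derivative_onCurve {σ : Type*} [Fintype σ] (w0 w1 w2 : σ → K) (Q : MvPolynomial σ K) :
    Polynomial.derivative (onCurve w0 w1 w2 Q) =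
      ∑ j, onCurve w0 w1 w2 (pderiv j Q) * Polynomial.derivative (onCurve w0 w1 w2 (X j)) := by
  classical
  induction Q using MvPolynomial.induction_on with
  | C a => simp [onCurve]
  | add p q hp hq => simp [hp, hq, add_mul, Finset.sum_add_distrib]
  | mul_X p i hp =>
    rw [map_mul, Polynomial.derivative_mul, hp]
    simp only [Derivation.leibniz, smul_eq_mul, map_add, map_mul, add_mul,
      Finset.sum_add_distrib]
    rw [add_comm]
    congr 1
    · rw [Finset.sum_eq_single i]
      · simp
      · intro b _ hb; rw [pderiv_X_of_ne (Ne.symm hb)]; simp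
      · simp
    · rw [Finset.sum_mul]
      exact Finset.sum_congr rfl fun j _ => by ring

lemma curve_zero {σ : Type*} (w0 w1 w2 : σ → K) (Q : MvPolynomial σ K)
    (hinf : {t : K | eval (fun j => w0 j + t * w1 j + t ^ 2 * w2 j) Q = 0}.Infinite) :
    onCurve w0 w1 w2 Q = 0 := by
  refine Polynomial.eq_zero_of_infinite_isRoot _ ?_
  convert hinf using 3
  rw [Polynomial.IsRoot, eval_onCurve]

lemma curve_all {σ : Type*} (w0 w1 w2 : σ → K) (Q : MvPolynomial σ K)
    (hinf : {t : K | eval (fun j => w0 j + t * w1 j + t ^ 2 * w2 j) Q = 0}.Infinite) (t : K) :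
    eval (fun j => w0 j + t * w1 j + t ^ 2 * w2 j) Q = 0 := by
  rw [← eval_onCurve, curve_zero w0 w1 w2 Q hinf, Polynomial.eval_zero]

lemma curve_deriv {σ : Type*} [Fintype σ] (w0 w1 w2 : σ → K) (Q : MvPolynomial σ K)
    (hinf : {t : K | eval (fun j => w0 j + t * w1 j + t ^ 2 * w2 j) Q = 0}.Infinite) :
    ∑ j, eval w0 (pderiv j Q) * w1 j = 0 := by
  have h := derivative_onCurve w0 w1 w2 Q
  rw [curve_zero w0 w1 w2 Q hinf] at h
  have h2 := congrArg (Polynomial.eval 0) h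
  rw [Polynomial.eval_finsetSum] at h2
  simp only [Polynomial.derivative_zero, Polynomial.eval_zero, Polynomial.eval_mul,
    eval_onCurve] at h2
  rw [h2]
  refine Finset.sum_congr rfl fun j _ => ?_
  simp [onCurve]

/-- The family of pencils. -/
def Mx (D a b : K) : Fin 2 → Matrix (Fin 5) (Fin 5) K :=
  ![!![0, 1, 0, 0, 0; 0, 0, 0, 0, 0; 0, 0, -1, 0, 0; 0, 0, 0, D, 0; 0, 0, 0, 0, 0],
    !![a, a + b, 0, 0, 0; 0, b, 0, 0, 0; 0, 0, -1, 0, 0; 0, 0, 0, 0, 0; 0, 0, 0, 0, D]]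

lemma coef_add (M N : Matrix (Fin 5) (Fin 5) K) : coef (M + N) = coef M + coef N := by
  ext q; simp only [coef, Pi.add_apply, Matrix.add_apply]; split_ifs <;> ring

lemma coef_smul (r : K) (N : Matrix (Fin 5) (Fin 5) K) : coef (r • N) = r • coef N := by
  ext q; simp only [coef, Pi.smul_apply, Matrix.smul_apply, smul_eq_mul]; split_ifs <;> ring

lemma coef_transpose (N : Matrix (Fin 5) (Fin 5) K) : coef N.transpose = coef N := by
  ext q; simp only [coef, Matrix.transpose_apply]; split_ifs with h
  · rw [h]
  · ring

lemma coef_surj (c : QIdx → K) : ∃ N, coef N = c := by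
  refine ⟨Matrix.of fun i j => if h : i ≤ j then c ⟨(i, j), h⟩ else 0, ?_⟩
  ext ⟨⟨i, j⟩, h⟩
  simp only at h
  simp only [coef, Matrix.of_apply]
  split_ifs with h1 h2
  · rfl
  · exact absurd (le_antisymm h h2) h1
  · rw [add_zero]

lemma linear_kill [CharZero K] (D a b : K) (hD : D ≠ 0) (hab : a ≠ b)
    (hΔ : (a + b - 1) ^ 2 - 4 * a * b ≠ 0)
    (Λ : Fin 2 → Matrix (Fin 5) (Fin 5) K →ₗ[K] K)
    (hs : ∀ j N, Λ j N.transpose = Λ j N)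
    (h1 : ∀ E, Λ 0 (E.transpose * Mx D a b 0 + Mx D a b 0 * E)
      + Λ 1 (E.transpose * Mx D a b 1 + Mx D a b 1 * E) = 0)
    (h2 : ∀ j k, Λ j (Mx D a b k) = 0)
    (h3 : Λ 1 (!![1, 1, 0, 0, 0; 0, 0, 0, 0, 0; 0, 0, 0, 0, 0; 0, 0, 0, 0, 0; 0, 0, 0, 0, 0]) = 0)
    (h4 : Λ 1 (!![0, 1, 0, 0, 0; 0, 1, 0, 0, 0; 0, 0, 0, 0, 0; 0, 0, 0, 0, 0; 0, 0, 0, 0, 0]) = 0) :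
    ∀ j N, Λ j N = 0 := by
  set L : Fin 2 → Fin 5 → Fin 5 → K := fun j k l => Λ j (Matrix.single k l 1) with hL
  have hsym : ∀ j k l, L j k l = L j l k := by
    intro j k l
    simp only [hL]
    rw [← hs, Matrix.transpose_single]
  have hexp : ∀ j N, Λ j N = ∑ k, ∑ l, N k l * L j k l := by
    intro j N
    conv_lhs => rw [Matrix.matrix_eq_sum_single N]
    simp only [map_sum, hL]
    refine Finset.sum_congr rfl fun k _ => Finset.sum_congr rfl fun l _ => ?_
    rw [← smul_eq_mul, ← map_smul, Matrix.smul_single, smul_eq_mul, mul_one]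
  have hE : ∀ m n, ∑ l, ((Mx D a b 0 m l + Mx D a b 0 l m) * L 0 l n
      + (Mx D a b 1 m l + Mx D a b 1 l m) * L 1 l n) = 0 := by
    intro m n
    have key : ∀ (M : Matrix (Fin 5) (Fin 5) K) (j : Fin 2),
        Λ j ((Matrix.single m n (1:K)).transpose * M + M * Matrix.single m n 1)
          = ∑ l, (M m l + M l m) * L j l n := by
      intro M j
      rw [hexp]
      simp only [Matrix.transpose_single, Matrix.add_apply, add_mul, Finset.sum_add_distrib]
      congr 1
      · rw [Finset.sum_eq_single n]
        · refine Finset.sum_congr rfl fun l _ => ?_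
          rw [Matrix.single_mul_apply_same, one_mul, hsym]
        · intro k _ hk
          refine Finset.sum_eq_zero fun l _ => ?_
          rw [Matrix.single_mul_apply_of_ne _ _ _ _ _ hk, zero_mul]
        · simp
      · refine Finset.sum_congr rfl fun k _ => ?_
        rw [Finset.sum_eq_single n]
        · rw [Matrix.mul_single_apply_same, mul_one]
        · intro l _ hl
          rw [Matrix.mul_single_apply_of_ne _ _ _ _ _ hl, zero_mul]
        · simp
    have := h1 (Matrix.single m n 1)
    rw [key, key, ← Finset.sum_add_distrib] at this
    exact this
  have e0 : ∀ n, L 0 1 n + 2 * a * L 1 0 n + (a + b) * L 1 1 n = 0 := by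
    intro n
    have := hE 0 n
    simp [Mx, Fin.sum_univ_five] at this
    linear_combination this
  have e1 : ∀ n, L 0 0 n + (a + b) * L 1 0 n + 2 * b * L 1 1 n = 0 := by
    intro n
    have := hE 1 n
    simp [Mx, Fin.sum_univ_five] at this
    linear_combination this
  have e2 : ∀ n, L 0 2 n + L 1 2 n = 0 := by
    intro n
    have := hE 2 n
    simp [Mx, Fin.sum_univ_five] at this
    linear_combination (-1 / 2 : K) * this
  have e3 : ∀ n, L 0 3 n = 0 := by
    intro n
    have := hE 3 n
    simp [Mx, Fin.sum_univ_five] at this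
    rcases this with h | h
    · exact absurd h hD
    · exact h
  have e4 : ∀ n, L 1 4 n = 0 := by
    intro n
    have := hE 4 n
    simp [Mx, Fin.sum_univ_five] at this
    rcases this with h | h
    · exact absurd h hD
    · exact h
  rw [hexp] at h3 h4
  simp [Fin.sum_univ_five] at h3 h4
  have h01 := h2 0 1
  have h10 := h2 1 0
  have h11 := h2 1 1
  rw [hexp] at h01 h10 h11
  simp [Mx, Fin.sum_univ_five] at h01 h10 h11
  have hba : a - b ≠ 0 := sub_ne_zero.mpr hab
  -- the `uv` block
  have f1 : L 1 0 1 = 0 := by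
    have s := hsym 0 0 1
    have s1 := hsym 1 0 1
    have p := e0 0
    have q := e1 1
    have : (a - b) * L 1 0 1 = 0 := by
      linear_combination -(1/2:K) * (p - q + s) + a * h3 - b * h4 - (a + b) / 2 * s1
    exact (mul_eq_zero.mp this).resolve_left hba
  have f0 : L 1 0 0 = 0 := by linear_combination h3 - f1
  have f2 : L 1 1 1 = 0 := by linear_combination h4 - f1
  have f1' : L 1 1 0 = 0 := by rw [hsym]; exact f1
  have g1 : L 0 1 0 = 0 := by linear_combination e0 0 - 2 * a * f0 - (a + b) * f1'
  have g2 : L 0 1 1 = 0 := by linear_combination e0 1 - 2 * a * f1 - (a + b) * f2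
  have g0 : L 0 0 0 = 0 := by linear_combination e1 0 - (a + b) * f0 - 2 * b * f1'
  have g1' : L 0 0 1 = 0 := by rw [hsym]; exact g1
  -- column x
  have x0 := e2 0
  have x1 := e2 1
  rw [hsym, hsym 1] at x0 x1
  have px := e0 2
  have qx := e1 2
  have u0 : L 1 0 2 = 0 := by
    refine (mul_eq_zero.mp (?_ : _ * L 1 0 2 = 0)).resolve_left hΔ
    linear_combination (a + b - 1) * qx - 2 * b * px - (a + b - 1) * x0 + 2 * b * x1
  have u1 : L 1 1 2 = 0 := by
    refine (mul_eq_zero.mp (?_ : _ * L 1 1 2 = 0)).resolve_left hΔ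
    linear_combination (a + b - 1) * px - 2 * a * qx - (a + b - 1) * x1 + 2 * a * x0
  have u0' : L 0 0 2 = 0 := by linear_combination x0 - u0
  have u1' : L 0 1 2 = 0 := by linear_combination x1 - u1
  -- column y
  have y0 : L 0 0 3 = 0 := by rw [hsym]; exact e3 0
  have y1 : L 0 1 3 = 0 := by rw [hsym]; exact e3 1
  have hab2 : (a - b) ^ 2 ≠ 0 := pow_ne_zero 2 hba
  have y0' : L 1 0 3 = 0 := by
    refine (mul_eq_zero.mp (?_ : _ * L 1 0 3 = 0)).resolve_left hab2
    linear_combination (a + b) * (e1 3 - y0) - 2 * b * (e0 3 - y1)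
  have y1' : L 1 1 3 = 0 := by
    refine (mul_eq_zero.mp (?_ : _ * L 1 1 3 = 0)).resolve_left hab2
    linear_combination (a + b) * (e0 3 - y1) - 2 * a * (e1 3 - y0)
  have z0 : L 1 0 4 = 0 := by rw [hsym]; exact e4 0
  have z1 : L 1 1 4 = 0 := by rw [hsym]; exact e4 1
  have z0' : L 0 0 4 = 0 := by linear_combination e1 4 - (a + b) * z0 - 2 * b * z1
  have z1' : L 0 1 4 = 0 := by linear_combination e0 4 - 2 * a * z0 - (a + b) * z1
  have k23 : L 0 2 3 = 0 := by rw [hsym]; exact e3 2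
  have k23' : L 1 2 3 = 0 := by linear_combination e2 3 - k23
  have k24 : L 1 2 4 = 0 := by rw [hsym]; exact e4 2
  have k24' : L 0 2 4 = 0 := by linear_combination e2 4 - k24
  have k34 : L 1 3 4 = 0 := by rw [hsym]; exact e4 3
  have k22 : L 1 2 2 = 0 := by
    linear_combination -h11 + a * f0 + (a + b) * f1 + b * f2 + D * e4 4
  have k22' : L 0 2 2 = 0 := by linear_combination e2 2 - k22
  have k33 : L 1 3 3 = 0 := by
    refine (mul_eq_zero.mp (?_ : D * L 1 3 3 = 0)).resolve_left hD
    linear_combination h10 - f1 + k22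
  have k44 : L 0 4 4 = 0 := by
    refine (mul_eq_zero.mp (?_ : D * L 0 4 4 = 0)).resolve_left hD
    linear_combination h01 - a * g0 - (a + b) * g1' - b * g2 + k22'
  have all : ∀ j k l, L j k l = 0 := by
    have up : ∀ j k l, k ≤ l → L j k l = 0 := by
      intro j k l hkl
      fin_cases j <;> fin_cases k <;> fin_cases l <;> first | assumption | exact e3 _ | exact e4 _ | (exfalso; revert hkl; decide)
    intro j k l
    rcases le_total k l with h | h
    · exact up j k l h
    · rw [hsym]; exact up j l k h
  intro j N
  rw [hexp]
  exact Finset.sum_eq_zero fun k _ => Finset.sum_eq_zero fun l _ => by rw [all, mul_zero]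

end HasseDense

namespace HasseDense

lemma poly_inf [CharZero K] (p : Polynomial K) (hp : p ≠ 0) : {t : K | p.eval t ≠ 0}.Infinite := by
  have h : {t : K | p.eval t = 0}.Finite := by
    have := Polynomial.finite_setOfPred_isRoot hp
    simpa [Polynomial.IsRoot] using this
  have := h.infinite_compl
  exact this

lemma det_inf [CharZero K] {n : ℕ} (E : Matrix (Fin n) (Fin n) K) :
    {t : K | (1 + t • E).det ≠ 0}.Infinite := by
  let p : Polynomial K := (1 + (Polynomial.X : Polynomial K) • E.map Polynomial.C).det
  have hev : ∀ t, p.eval t = (1 + t • E).det := by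
    intro t
    simp only [p]
    rw [← Polynomial.coe_evalRingHom, RingHom.map_det]
    congr 1
    ext i j
    by_cases hij : i = j <;> simp [hij] <;> ring
  have hp : p ≠ 0 := by
    intro h0
    have := hev 0
    rw [h0] at this
    simp at this
  simpa only [hev] using poly_inf p hp

/-- coefficient vector in `K^30` -/
def pt (g : Matrix (Fin 5) (Fin 5) K) (h : Matrix (Fin 2) (Fin 2) K)
    (M : Fin 2 → Matrix (Fin 5) (Fin 5) K) : Fin 2 × QIdx → K := fun q => act g h M q.1 q.2

lemma pt_add (g : Matrix (Fin 5) (Fin 5) K) (h : Matrix (Fin 2) (Fin 2) K)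
    (M N : Fin 2 → Matrix (Fin 5) (Fin 5) K) : pt g h (M + N) = pt g h M + pt g h N := by
  ext q
  simp only [pt, act, Pi.add_apply]
  have := fun A B : Matrix (Fin 5) (Fin 5) K => congrFun (coef_add A B) q.2
  simp only [Pi.add_apply] at this
  rw [← this]
  congr 2
  simp only [smul_add]
  noncomm_ring

lemma pt_smul (g : Matrix (Fin 5) (Fin 5) K) (h : Matrix (Fin 2) (Fin 2) K) (r : K)
    (M : Fin 2 → Matrix (Fin 5) (Fin 5) K) : pt g h (r • M) = r • pt g h M := by
  ext q
  simp only [pt, act, Pi.smul_apply]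
  have := fun A : Matrix (Fin 5) (Fin 5) K => congrFun (coef_smul r A) q.2
  simp only [Pi.smul_apply] at this
  rw [← this]
  congr 2
  rw [smul_comm (h q.1 0), smul_comm (h q.1 1), ← smul_add, Matrix.mul_smul, Matrix.smul_mul]

lemma pt_curve (g : Matrix (Fin 5) (Fin 5) K) (h : Matrix (Fin 2) (Fin 2) K) (t : K)
    (M N O : Fin 2 → Matrix (Fin 5) (Fin 5) K) : pt g h (M + t • N + t ^ 2 • O) =
    fun j => pt g h M j + t * pt g h N j + t ^ 2 * pt g h O j := by
  rw [pt_add, pt_add, pt_smul, pt_smul]; rfl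

lemma pt_g (g E : Matrix (Fin 5) (Fin 5) K) (h : Matrix (Fin 2) (Fin 2) K) (t : K)
    (M : Fin 2 → Matrix (Fin 5) (Fin 5) K) : pt ((1 + t • E) * g) h M =
    pt g h (M + t • (fun i => E.transpose * M i + M i * E)
      + t ^ 2 • fun i => E.transpose * M i * E) := by
  ext q
  simp only [pt, act, Pi.add_apply, Pi.smul_apply]
  congr 1
  simp only [Matrix.transpose_mul, Matrix.transpose_add, Matrix.transpose_one,
    Matrix.transpose_smul]
  rw [← Matrix.mul_assoc]
  congr 1
  rw [Matrix.mul_assoc g.transpose, Matrix.mul_assoc g.transpose]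
  congr 1
  simp only [Matrix.mul_add, Matrix.add_mul, Matrix.one_mul, Matrix.mul_one, smul_add,
    Matrix.mul_smul, Matrix.smul_mul, smul_smul, pow_two]
  module

lemma pt_h (g : Matrix (Fin 5) (Fin 5) K) (h E : Matrix (Fin 2) (Fin 2) K) (t : K)
    (M : Fin 2 → Matrix (Fin 5) (Fin 5) K) : pt g (h * (1 + t • E)) M =
    pt g h (M + t • (fun i => E i 0 • M 0 + E i 1 • M 1) + t ^ 2 • (0 : Fin 2 → Matrix (Fin 5) (Fin 5) K)) := by
  ext q
  simp only [pt, act, Pi.add_apply, Pi.smul_apply]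
  congr 3
  simp [Matrix.mul_apply, Matrix.one_apply, Fin.sum_univ_two]
  module

lemma Mx_a (D a b t : K) : Mx D (a + t) b = Mx D a b + t • (![0,
    !![1, 1, 0, 0, 0; 0, 0, 0, 0, 0; 0, 0, 0, 0, 0; 0, 0, 0, 0, 0; 0, 0, 0, 0, 0]] : Fin 2 → Matrix (Fin 5) (Fin 5) K)
     + t ^ 2 • (0 : Fin 2 → Matrix (Fin 5) (Fin 5) K) := by
  funext i
  fin_cases i
  · simp [Mx]
  · ext k l
    fin_cases k <;> fin_cases l <;> simp [Mx]
    ring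

lemma Mx_b (D a b t : K) : Mx D a (b + t) = Mx D a b + t • (![0,
    !![0, 1, 0, 0, 0; 0, 1, 0, 0, 0; 0, 0, 0, 0, 0; 0, 0, 0, 0, 0; 0, 0, 0, 0, 0]] : Fin 2 → Matrix (Fin 5) (Fin 5) K)
     + t ^ 2 • (0 : Fin 2 → Matrix (Fin 5) (Fin 5) K) := by
  funext i
  fin_cases i
  · simp [Mx]
  · ext k l
    fin_cases k <;> fin_cases l <;> simp [Mx]
    ring

/-- the space of polynomials vanishing on the family -/
def van (D : K) : Set (MvPolynomial (Fin 2 × QIdx) K) := {Q | ∀ g h, g.det ≠ 0 → h.det ≠ 0 →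
  ∀ a b : K, a ≠ b → (a + b - 1) ^ 2 - 4 * a * b ≠ 0 → eval (pt g h (Mx D a b)) Q = 0}

lemma lam_zero [CharZero K] (D a b : K) (hD : D ≠ 0) (hab : a ≠ b)
    (hΔ : (a + b - 1) ^ 2 - 4 * a * b ≠ 0) (g : Matrix (Fin 5) (Fin 5) K)
    (h : Matrix (Fin 2) (Fin 2) K) (hg : g.det ≠ 0) (hh : h.det ≠ 0)
    (lam : Fin 2 × QIdx → K)
    (h1 : ∀ E : Matrix (Fin 5) (Fin 5) K, ∑ j, lam j * pt g h (fun i => E.transpose * Mx D a b i + Mx D a b i * E) j = 0)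
    (h2 : ∀ E : Matrix (Fin 2) (Fin 2) K, ∑ j, lam j * pt g h (fun i => E i 0 • Mx D a b 0 + E i 1 • Mx D a b 1) j = 0)
    (h3 : ∑ j, lam j * pt g h ![0, !![1, 1, 0, 0, 0; 0, 0, 0, 0, 0; 0, 0, 0, 0, 0; 0, 0, 0, 0, 0; 0, 0, 0, 0, 0]] j = 0)
    (h4 : ∑ j, lam j * pt g h ![0, !![0, 1, 0, 0, 0; 0, 1, 0, 0, 0; 0, 0, 0, 0, 0; 0, 0, 0, 0, 0; 0, 0, 0, 0, 0]] j = 0) :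
    lam = 0 := by
  let T : (Fin 2 → Matrix (Fin 5) (Fin 5) K) →ₗ[K] K :=
    { toFun := fun N => ∑ j, lam j * pt g h N j
      map_add' := by
        intro M N
        rw [pt_add, ← Finset.sum_add_distrib]
        exact Finset.sum_congr rfl fun j _ => by rw [Pi.add_apply]; ring
      map_smul' := by
        intro r M
        rw [pt_smul, RingHom.id_apply, smul_eq_mul, Finset.mul_sum]
        exact Finset.sum_congr rfl fun j _ => by rw [Pi.smul_apply, smul_eq_mul]; ring }
  have hT : ∀ N, T N = ∑ j, lam j * pt g h N j := fun N => rfl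
  let Λ : Fin 2 → Matrix (Fin 5) (Fin 5) K →ₗ[K] K := fun j =>
    T ∘ₗ LinearMap.single K (fun _ : Fin 2 => Matrix (Fin 5) (Fin 5) K) j
  have hΛ : ∀ N, T N = Λ 0 (N 0) + Λ 1 (N 1) := by
    intro N
    simp only [Λ, LinearMap.comp_apply, ← map_add, LinearMap.single_apply]
    congr 1
    funext i
    fin_cases i <;> simp
  have key := linear_kill D a b hD hab hΔ Λ ?_ ?_ ?_ ?_ ?_
  · have hT0 : ∀ N, T N = 0 := fun N => by rw [hΛ, key, key, add_zero]
    funext ⟨i, q⟩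
    obtain ⟨N, hN⟩ := coef_surj (Pi.single q (1:K))
    have hu : IsUnit g.det := isUnit_iff_ne_zero.mpr hg
    have huh : IsUnit h.det := isUnit_iff_ne_zero.mpr hh
    have := hT0 (fun k => h⁻¹ k i • (g⁻¹.transpose * N * g⁻¹))
    rw [hT, Finset.sum_eq_single (i, q)] at this
    · have e : pt g h (fun k => h⁻¹ k i • (g⁻¹.transpose * N * g⁻¹)) (i, q) = 1 := by
        simp only [pt, act, smul_smul, ← add_smul]
        have : h i 0 * h⁻¹ 0 i + h i 1 * h⁻¹ 1 i = (h * h⁻¹) i i := by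
          rw [Matrix.mul_apply, Fin.sum_univ_two]
        rw [this, Matrix.mul_nonsing_inv _ huh, Matrix.one_apply_eq, one_smul,
          ← Matrix.mul_assoc, ← Matrix.mul_assoc, Matrix.mul_assoc _ _ g,
          Matrix.nonsing_inv_mul _ hu, ← Matrix.transpose_mul,
          Matrix.nonsing_inv_mul _ hu, Matrix.transpose_one, Matrix.one_mul, Matrix.mul_one, hN]
        simp
      rw [e, mul_one] at this
      exact this
    · rintro ⟨k, q'⟩ _ hne
      have e : pt g h (fun k => h⁻¹ k i • (g⁻¹.transpose * N * g⁻¹)) (k, q') = 0 := by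
        simp only [pt, act, smul_smul, ← add_smul]
        have : h k 0 * h⁻¹ 0 i + h k 1 * h⁻¹ 1 i = (h * h⁻¹) k i := by
          rw [Matrix.mul_apply, Fin.sum_univ_two]
        rw [this, Matrix.mul_nonsing_inv _ huh, Matrix.mul_smul, Matrix.smul_mul,
          ← Matrix.mul_assoc, ← Matrix.mul_assoc, Matrix.mul_assoc _ _ g,
          Matrix.nonsing_inv_mul _ hu, ← Matrix.transpose_mul,
          Matrix.nonsing_inv_mul _ hu, Matrix.transpose_one, Matrix.one_mul, Matrix.mul_one,
          coef_smul, hN, Pi.smul_apply, smul_eq_mul]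
        by_cases hk : k = i
        · subst hk
          have : q' ≠ q := fun h => hne (by rw [h])
          rw [Pi.single_eq_of_ne this, mul_zero]
        · rw [Matrix.one_apply_ne hk, zero_mul]
      rw [e, mul_zero]
    · simp
  · intro j N
    simp only [Λ, LinearMap.comp_apply, hT]
    refine Finset.sum_congr rfl fun q _ => ?_
    congr 1
    simp only [pt, act]
    rw [← coef_transpose]
    congr 1
    simp only [Matrix.transpose_mul, Matrix.transpose_transpose, Matrix.mul_assoc,
      LinearMap.single_apply]
    congr 2
    fin_cases j <;> simp
  · intro E
    have := h1 E
    rw [← hT, hΛ] at this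
    exact this
  · intro j k
    have := h2 (Matrix.single j k 1)
    rw [← hT, hΛ] at this
    fin_cases j <;> fin_cases k <;> simpa [Matrix.single] using this
  · have := h3
    rw [← hT, hΛ] at this
    simpa using this
  · have := h4
    rw [← hT, hΛ] at this
    simpa using this

lemma van_stable [CharZero K] (D : K) (hD : D ≠ 0) (Q) (hQ : Q ∈ van D) (j) :
    pderiv j Q ∈ van D := by
  intro g h hg hh a b hab hΔ
  have dir : ∀ N O : Fin 2 → Matrix (Fin 5) (Fin 5) K,
      {t : K | eval (pt g h (Mx D a b + t • N + t ^ 2 • O)) Q = 0}.Infinite →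
      ∑ j, eval (pt g h (Mx D a b)) (pderiv j Q) * pt g h N j = 0 := by
    intro N O hinf
    refine curve_deriv _ _ (pt g h O) Q ?_
    simpa only [pt_curve] using hinf
  have hl := lam_zero D a b hD hab hΔ g h hg hh
    (fun j => eval (pt g h (Mx D a b)) (pderiv j Q)) ?_ ?_ ?_ ?_
  · exact congrFun hl j
  · intro E
    refine dir _ (fun i => E.transpose * Mx D a b i * E) ((det_inf E).mono fun t ht => ?_)
    rw [Set.mem_ofPred_eq, ← pt_g]
    exact hQ _ _ (by rw [Matrix.det_mul]; exact mul_ne_zero ht hg) hh a b hab hΔ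
  · intro E
    refine dir _ 0 ((det_inf E).mono fun t ht => ?_)
    rw [Set.mem_ofPred_eq, ← pt_h]
    exact hQ _ _ hg (by rw [Matrix.det_mul]; exact mul_ne_zero hh ht) a b hab hΔ
  · refine dir _ 0 ?_
    let p : Polynomial K := (Polynomial.C (a - b) + Polynomial.X) *
      ((Polynomial.C (a + b - 1) + Polynomial.X) ^ 2 - 4 * Polynomial.C b * (Polynomial.C a + Polynomial.X))
    have hp : p ≠ 0 := by
      intro h0
      have := congrArg (Polynomial.eval 0) h0
      simp [p] at this
      rcases this with h | h
      · exact hab (sub_eq_zero.mp h)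
      · exact hΔ (by linear_combination h)
    refine (poly_inf p hp).mono fun t ht => ?_
    rw [Set.mem_ofPred_eq, ← Mx_a]
    simp [p] at ht
    refine hQ _ _ hg hh _ _ (fun h => ht.1 (by linear_combination h)) (fun h => ht.2 (by linear_combination h))
  · refine dir _ 0 ?_
    let p : Polynomial K := (Polynomial.C (a - b) - Polynomial.X) *
      ((Polynomial.C (a + b - 1) + Polynomial.X) ^ 2 - 4 * Polynomial.C a * (Polynomial.C b + Polynomial.X))
    have hp : p ≠ 0 := by
      intro h0
      have := congrArg (Polynomial.eval 0) h0
      simp [p] at this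
      rcases this with h | h
      · exact hab (sub_eq_zero.mp h)
      · exact hΔ (by linear_combination h)
    refine (poly_inf p hp).mono fun t ht => ?_
    rw [Set.mem_ofPred_eq, ← Mx_b]
    simp [p] at ht
    refine hQ _ _ hg hh _ _ (fun h => ht.1 (by linear_combination h)) (fun h => ht.2 (by linear_combination h))

theorem density [CharZero K] (D : K) (hD : D ≠ 0) (good : K → K → Prop)
    (hinf : {a | {b | good a b}.Infinite}.Infinite) (P : MvPolynomial (Fin 2 × QIdx) K)
    (hP : ∀ g h, g.det ≠ 0 → h.det ≠ 0 → ∀ a b, good a b → eval (pt g h (Mx D a b)) P = 0) :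
    P = 0 := by
  refine stable_zero (van D) (van_stable D hD) ?_ _ P ?_ le_rfl
  · intro c hc
    have := hc 1 1 (by simp) (by simp) 1 2 (by norm_num) (by norm_num)
    simpa using this
  · intro g h hg hh
    have s1 : ∀ a, {b | good a b}.Infinite → ∀ b, eval (pt g h (Mx D a b)) P = 0 := by
      intro a ha b
      have := curve_all _ _ _ P (?_ : {t : K | eval (fun j => pt g h (Mx D a 0) j + t * pt g h ![0, !![0, 1, 0, 0, 0; 0, 1, 0, 0, 0; 0, 0, 0, 0, 0; 0, 0, 0, 0, 0; 0, 0, 0, 0, 0]] j + t ^ 2 * pt g h 0 j) P = 0}.Infinite) b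
      · rw [← pt_curve, ← Mx_b, zero_add] at this
        exact this
      · refine ha.mono fun t ht => ?_
        rw [Set.mem_ofPred_eq, ← pt_curve, ← Mx_b, zero_add]
        exact hP g h hg hh a t ht
    intro a b _ _
    have := curve_all _ _ _ P (?_ : {t : K | eval (fun j => pt g h (Mx D 0 b) j + t * pt g h ![0, !![1, 1, 0, 0, 0; 0, 0, 0, 0, 0; 0, 0, 0, 0, 0; 0, 0, 0, 0, 0; 0, 0, 0, 0, 0]] j + t ^ 2 * pt g h 0 j) P = 0}.Infinite) a
    · rw [← pt_curve, ← Mx_a, zero_add] at this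
      exact this
    · refine hinf.mono fun t ht => ?_
      rw [Set.mem_ofPred_eq, ← pt_curve, ← Mx_a, zero_add]
      exact s1 t ht b

end HasseDense

namespace HasseDense

lemma qv_Mx0 {F : Type*} [Field F] (φ : K →+* F) (D a b : K) (t : Fin 5 → F) :
    qv φ (coef (Mx D a b 0)) t = t 0 * t 1 - t 2 ^ 2 + φ D * t 3 ^ 2 := by
  rw [qv_coef]
  simp [Mx, Matrix.mulVec, dotProduct, Fin.sum_univ_five]
  ring

lemma qv_Mx1 {F : Type*} [Field F] (φ : K →+* F) (D a b : K) (t : Fin 5 → F) :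
    qv φ (coef (Mx D a b 1)) t =
      (t 0 + t 1) * (φ a * t 0 + φ b * t 1) - t 2 ^ 2 + φ D * t 4 ^ 2 := by
  rw [qv_coef]
  simp [Mx, Matrix.mulVec, dotProduct, Fin.sum_univ_five]
  ring

lemma sol_of {F : Type*} [Field F] (φ : K →+* F) (D a b : K) (u v x y z : F)
    (hne : u ≠ 0 ∨ v ≠ 0 ∨ x ≠ 0 ∨ y ≠ 0 ∨ z ≠ 0) (h1 : u * v = x ^ 2 - φ D * y ^ 2)
    (h2 : (u + v) * (φ a * u + φ b * v) = x ^ 2 - φ D * z ^ 2) :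
    HasSolution φ (fun i => coef (Mx D a b i)) := by
  rw [hasSolution_iff]
  refine ⟨![u, v, x, y, z], ?_, ?_, ?_⟩
  · intro h
    have e0 := congrFun h 0
    have e1 := congrFun h 1
    have e2 := congrFun h 2
    have e3 := congrFun h 3
    have e4 := congrFun h 4
    simp at e0 e1 e2 e3 e4
    simp [e0, e1, e2, e3, e4] at hne
  · rw [qv_Mx0]
    simp
    linear_combination h1
  · rw [qv_Mx1]
    simp
    linear_combination h2

lemma sol_sqrt {F : Type*} [Field F] (φ : K →+* F) (D a b : K) (r : F) (hr : r ^ 2 = φ D) :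
    HasSolution φ (fun i => coef (Mx D a b i)) :=
  sol_of φ D a b 0 0 r 1 1 (by simp) (by linear_combination -hr) (by linear_combination -hr)

lemma sol_elim {F : Type*} [Field F] (φ : K →+* F) (D a b : K)
    (h : HasSolution φ (fun i => coef (Mx D a b i))) : ∃ u v x y z : F,
      ¬ (u = 0 ∧ v = 0 ∧ x = 0 ∧ y = 0 ∧ z = 0) ∧ u * v = x ^ 2 - φ D * y ^ 2 ∧
      (u + v) * (φ a * u + φ b * v) = x ^ 2 - φ D * z ^ 2 := by
  rw [hasSolution_iff] at h
  obtain ⟨t, ht, h0, h1⟩ := h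
  rw [qv_Mx0] at h0
  rw [qv_Mx1] at h1
  refine ⟨t 0, t 1, t 2, t 3, t 4, ?_, by linear_combination h0, by linear_combination h1⟩
  rintro ⟨e0, e1, e2, e3, e4⟩
  apply ht
  funext i
  fin_cases i <;> assumption

lemma smooth {F : Type*} [Field F] [CharZero F] (φ : K →+* F) (D a b : K) (hD : D ≠ 0)
    (ha : a ≠ 0) (hb : b ≠ 0) (hab : a ≠ b) (hΔ : (a + b - 1) ^ 2 - 4 * a * b ≠ 0)
    (t : Fin 5 → F) (ht : t ≠ 0) (h0 : qv φ (coef (Mx D a b 0)) t = 0)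
    (h1 : qv φ (coef (Mx D a b 1)) t = 0) (α β : F)
    (hs : ∀ s, α * qb φ (coef (Mx D a b 0)) t s + β * qb φ (coef (Mx D a b 1)) t s = 0) :
    α = 0 ∧ β = 0 := by
  rw [qv_Mx0] at h0
  rw [qv_Mx1] at h1
  simp only [qb_eq, qv_Mx0, qv_Mx1] at hs
  have E0 := hs ![1, 0, 0, 0, 0]
  have E1 := hs ![0, 1, 0, 0, 0]
  have E2 := hs ![0, 0, 1, 0, 0]
  have E3 := hs ![0, 0, 0, 1, 0]
  have E4 := hs ![0, 0, 0, 0, 1]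
  simp at E0 E1 E2 E3 E4
  have hD' : φ D ≠ 0 := (map_ne_zero φ).mpr hD
  have ha' : φ a ≠ 0 := (map_ne_zero φ).mpr ha
  have hb' : φ b ≠ 0 := (map_ne_zero φ).mpr hb
  have hab' : φ a - φ b ≠ 0 := by rw [← map_sub]; exact (map_ne_zero φ).mpr (sub_ne_zero.mpr hab)
  have hΔ' : (φ a + φ b - 1) ^ 2 - 4 * φ a * φ b ≠ 0 := by
    have := (map_ne_zero φ).mpr hΔ
    simp only [map_sub, map_add, map_mul, map_pow, map_one, map_ofNat] at this
    exact this
  have hz : ¬ (t 0 = 0 ∧ t 1 = 0 ∧ t 2 = 0 ∧ t 3 = 0 ∧ t 4 = 0) := by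
    rintro ⟨e0, e1, e2, e3, e4⟩
    apply ht
    funext i
    fin_cases i <;> assumption
  generalize t 0 = u at *
  generalize t 1 = v at *
  generalize t 2 = x at *
  generalize t 3 = y at *
  generalize t 4 = z at *
  generalize φ D = d at *
  generalize φ a = a' at *
  generalize φ b = b' at *
  have G0 : α * v + β * (2 * a' * u + (a' + b') * v) = 0 := by linear_combination E0
  have G1 : α * u + β * ((a' + b') * u + 2 * b' * v) = 0 := by linear_combination E1
  have G2 : (α + β) * x = 0 := by linear_combination (-1/2 : F) * E2
  have G3 : α * y = 0 := by
    refine (mul_eq_zero.mp (?_ : d * (α * y) = 0)).resolve_left hD'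
    rcases E3 with h | h
    · rw [h]; ring
    · linear_combination (α / 2) * h
  have G4 : β * z = 0 := by
    refine (mul_eq_zero.mp (?_ : d * (β * z) = 0)).resolve_left hD'
    rcases E4 with h | h
    · rw [h]; ring
    · linear_combination (β / 2) * h
  clear E0 E1 E2 E3 E4 hs
  have sqz : ∀ w : F, d * w ^ 2 = 0 → w = 0 := fun w hw =>
    pow_eq_zero_iff (two_ne_zero) |>.mp ((mul_eq_zero.mp hw).resolve_left hD')
  by_cases hα : α = 0
  · by_cases hβ : β = 0
    · exact ⟨hα, hβ⟩
    · exfalso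
      subst hα
      have z0 := (mul_eq_zero.mp G4).resolve_left hβ
      have x0 : x = 0 := (mul_eq_zero.mp G2).resolve_left (by simpa using hβ)
      have k0 : 2 * a' * u + (a' + b') * v = 0 :=
        (mul_eq_zero.mp (by linear_combination G0 : β * (2 * a' * u + (a' + b') * v) = 0)).resolve_left hβ
      have k1 : (a' + b') * u + 2 * b' * v = 0 :=
        (mul_eq_zero.mp (by linear_combination G1 : β * ((a' + b') * u + 2 * b' * v) = 0)).resolve_left hβ
      have u0 : u = 0 := by
        refine (mul_eq_zero.mp (?_ : (a' - b') ^ 2 * u = 0)).resolve_left (pow_ne_zero 2 hab')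
        linear_combination (a' + b') * k1 - 2 * b' * k0
      have v0 : v = 0 := by
        refine (mul_eq_zero.mp (?_ : (a' - b') ^ 2 * v = 0)).resolve_left (pow_ne_zero 2 hab')
        linear_combination (a' + b') * k0 - 2 * a' * k1
      subst u0 v0 x0
      exact hz ⟨rfl, rfl, rfl, sqz _ (by linear_combination h0), z0⟩
  · exfalso
    have y0 := (mul_eq_zero.mp G3).resolve_left hα
    by_cases hβ : β = 0
    · subst hβ
      have v0 : v = 0 := (mul_eq_zero.mp (by linear_combination G0 : α * v = 0)).resolve_left hα
      have u0 : u = 0 := (mul_eq_zero.mp (by linear_combination G1 : α * u = 0)).resolve_left hα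
      have x0 : x = 0 := (mul_eq_zero.mp (by linear_combination G2 : α * x = 0)).resolve_left hα
      subst u0 v0 x0
      exact hz ⟨rfl, rfl, rfl, y0, sqz _ (by linear_combination h1)⟩
    · have z0 := (mul_eq_zero.mp G4).resolve_left hβ
      subst y0 z0
      by_cases hαβ : α + β = 0
      · have k0 : 2 * a' * u + (a' + b' - 1) * v = 0 :=
          (mul_eq_zero.mp (by linear_combination G0 - v * hαβ : β * (2 * a' * u + (a' + b' - 1) * v) = 0)).resolve_left hβ
        have k1 : (a' + b' - 1) * u + 2 * b' * v = 0 :=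
          (mul_eq_zero.mp (by linear_combination G1 - u * hαβ : β * ((a' + b' - 1) * u + 2 * b' * v) = 0)).resolve_left hβ
        have u0 : u = 0 := by
          refine (mul_eq_zero.mp (?_ : _ * u = 0)).resolve_left hΔ'
          linear_combination (a' + b' - 1) * k1 - 2 * b' * k0
        have v0 : v = 0 := by
          refine (mul_eq_zero.mp (?_ : _ * v = 0)).resolve_left hΔ'
          linear_combination (a' + b' - 1) * k0 - 2 * a' * k1
        subst u0 v0
        exact hz ⟨rfl, rfl, pow_eq_zero_iff (two_ne_zero) |>.mp (by linear_combination -h0), rfl, rfl⟩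
      · have x0 := (mul_eq_zero.mp G2).resolve_left hαβ
        subst x0
        have uv : u * v = 0 := by linear_combination h0
        rcases mul_eq_zero.mp uv with h | h
        · subst h
          have : b' * v ^ 2 = 0 := by linear_combination h1
          exact hz ⟨rfl, pow_eq_zero_iff (two_ne_zero) |>.mp ((mul_eq_zero.mp this).resolve_left hb'), rfl, rfl, rfl⟩
        · subst h
          have : a' * u ^ 2 = 0 := by linear_combination h1
          exact hz ⟨pow_eq_zero_iff (two_ne_zero) |>.mp ((mul_eq_zero.mp this).resolve_left ha'), rfl, rfl, rfl, rfl⟩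

/-- reduction of the Hasse counterexample property to arithmetic -/
lemma isHasse_of [NumberField K] (p : ℕ) (hp : p ≠ 0) (a b : K)
    (ha : a ≠ 0) (hb : b ≠ 0) (hab : a ≠ b) (hΔ : (a + b - 1) ^ 2 - 4 * a * b ≠ 0)
    (hloc : ∀ v : HeightOneSpectrum (𝓞 K),
      HasSolution (algebraMap K (v.adicCompletion K)) (fun i => coef (Mx (p : K) a b i)))
    (hglob : ¬ HasSolution (RingHom.id K) (fun i => coef (Mx (p : K) a b i))) :
    IsHasseCounterexample (fun i => coef (Mx (p : K) a b i)) := by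
  refine ⟨⟨?_, ?_⟩, hloc, ?_, hglob⟩
  · obtain ⟨r, hr⟩ := IsAlgClosed.exists_pow_nat_eq (algebraMap K (AlgebraicClosure K) p) (n := 2) (by norm_num)
    exact sol_sqrt _ _ _ _ r hr
  · intro t ht e
    rw [rank_jac_iff]
    intro α β hs
    simp only [eval_quadForm, Fin.forall_fin_two] at e
    have : CharZero (AlgebraicClosure K) := charZero_of_injective_algebraMap (algebraMap K (AlgebraicClosure K)).injective
    exact smooth _ _ a b (by exact_mod_cast hp) ha hb hab hΔ t ht e.1 e.2 α β hs
  · intro σ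
    refine sol_sqrt _ _ _ _ (Real.sqrt p) ?_
    rw [Real.sq_sqrt (by positivity), map_natCast]

end HasseDense

set_option linter.all false
namespace HasseDense

section Local
variable {R : Type*} [CommRing R] [HenselianLocalRing R]

lemma quad_hensel (b c a : R) (h0 : IsLocalRing.residue R (a ^ 2 + b * a + c) = 0)
    (h1 : IsLocalRing.residue R (2 * a + b) ≠ 0) :
    ∃ r : R, r ^ 2 + b * r + c = 0 ∧ IsLocalRing.residue R r = IsLocalRing.residue R a := by
  have hm : (Polynomial.X ^ 2 + (Polynomial.C b * Polynomial.X + Polynomial.C c) : Polynomial R).Monic := by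
    apply Polynomial.monic_X_pow_add
    refine lt_of_le_of_lt Polynomial.degree_linear_le ?_
    norm_num
  obtain ⟨r, hr, hr2⟩ := HenselianLocalRing.is_henselian _ hm a (by
      rw [← IsLocalRing.residue_eq_zero_iff]
      rw [← h0]; congr 1; simp; ring) (by
      rw [← IsLocalRing.residue_ne_zero_iff_isUnit]
      convert h1 using 2
      simp [Polynomial.derivative_X_pow]; try ring)
  refine ⟨r, ?_, ?_⟩
  · have : _ = _ := hr
    simp at this
    linear_combination this
  · rw [← IsLocalRing.residue_eq_zero_iff, map_sub, sub_eq_zero] at hr2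
    exact hr2

variable {k : Type*} [Field k] [Finite k] (e : k →+* IsLocalRing.ResidueField R)

lemma lift_e (a : k) : ∃ r : R, IsLocalRing.residue R r = e a := IsLocalRing.residue_surjective _

lemma sqrt_hensel (h2 : (2 : k) ≠ 0) (δ α : R) (δ0 a : k) (hδ : IsLocalRing.residue R δ = e δ0)
    (hδ0 : δ0 ≠ 0) (ha : a ≠ 0) (hα : IsLocalRing.residue R α = e (δ0 * a ^ 2)) :
    ∃ b : R, δ * b ^ 2 = α ∧ IsLocalRing.residue R b = e a := by
  obtain ⟨a', ha'⟩ := lift_e e a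
  have hu : IsUnit δ := by
    rw [← IsLocalRing.residue_ne_zero_iff_isUnit, hδ]; exact (map_ne_zero e).mpr hδ0
  obtain ⟨δi, hi⟩ := hu.exists_right_inv
  have hi' : IsLocalRing.residue R δi * e δ0 = 1 := by
    rw [← hδ, ← map_mul, mul_comm, hi, map_one]
  obtain ⟨r, hr, hr2⟩ := quad_hensel (R := R) 0 (-(δi * α)) a' (by
    simp only [map_add, map_mul, map_neg, map_pow, ha', hα]
    simp only [map_zero]
    linear_combination (-(e a)^2) * hi') (by
    simp only [map_add, map_mul, ha', map_zero, add_zero, map_ofNat]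
    have := (map_ne_zero e).mpr (mul_ne_zero h2 ha)
    simpa only [map_mul, map_ofNat] using this)
  refine ⟨r, ?_, hr2.trans ha'⟩
  linear_combination δ * hr + α * hi

lemma local_half (h2 : (2 : k) ≠ 0) (D c d : R) (D0 c0 d0 : k)
    (hD : IsLocalRing.residue R D = e D0) (hc : IsLocalRing.residue R c = e c0)
    (hd : IsLocalRing.residue R d = e d0) (hD0 : D0 ≠ 0) (hns : ¬ IsSquare D0)
    (hc0 : c0 = 0) (hd0 : d0 ≠ 0) : ∃ u y z : R, u * 1 = 0 ^ 2 - D * y ^ 2 ∧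
      (u + 1) * (c * u + d * 1) = 0 ^ 2 - D * z ^ 2 := by
  subst hc0
  have := Fintype.ofFinite k
  obtain ⟨y0, z0, h⟩ := FiniteField.exists_root_sum_quadratic (R := k)
    (f := Polynomial.C (d0 * D0) * Polynomial.X ^ 2 + Polynomial.C 0 * Polynomial.X + Polynomial.C 0)
    (g := Polynomial.C (-D0) * Polynomial.X ^ 2 + Polynomial.C 0 * Polynomial.X + Polynomial.C (-d0))
    (Polynomial.degree_quadratic (mul_ne_zero hd0 hD0))
    (Polynomial.degree_quadratic (neg_ne_zero.mpr hD0)) (by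
      rcases FiniteField.even_card_iff_char_two (F := k) |>.symm with h
      by_contra hh
      have h3 : Fintype.card k % 2 = 0 := by omega
      have h4 := FiniteField.even_card_iff_char_two.mpr h3
      apply h2
      have := CharP.cast_eq_zero k (ringChar k)
      rw [h4] at this
      exact_mod_cast this)
  simp at h
  have hz0 : z0 ≠ 0 := by
    rintro rfl
    apply hns
    have h5 : D0 * y0 ^ 2 = 1 := by
      refine mul_left_cancel₀ hd0 ?_
      linear_combination h
    have hy : y0 ≠ 0 := by rintro rfl; simp at h5
    refine ⟨y0⁻¹, ?_⟩
    field_simp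
    linear_combination h5
  obtain ⟨y, hy⟩ := lift_e e y0
  obtain ⟨z, hz, -⟩ := sqrt_hensel e h2 D (- ((- D * y ^ 2 + 1) * (c * (- D * y ^ 2) + d))) D0 z0 hD hD0 hz0 (by
    simp only [map_add, map_mul, map_neg, map_pow, hy, hD, hc, hd, map_one]
    simp only [map_zero]
    have := congrArg e h
    simp only [map_add, map_mul, map_neg, map_pow, map_zero] at this
    linear_combination this)
  refine ⟨- D * y ^ 2, y, z, by ring, by linear_combination hz⟩

lemma chevalley (D0 c0 d0 : k) : ∃ u v x y z : k, ¬ (u = 0 ∧ v = 0 ∧ x = 0 ∧ y = 0 ∧ z = 0) ∧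
    u * v = x ^ 2 - D0 * y ^ 2 ∧ (u + v) * (c0 * u + d0 * v) = x ^ 2 - D0 * z ^ 2 := by
  classical
  have := Fintype.ofFinite k
  let q := ringChar k
  let f : Fin 2 → MvPolynomial (Fin 5) k := fun i => quadForm (coef (Mx D0 c0 d0 i))
  have hdeg : ∀ i, (f i).totalDegree ≤ 2 := by
    intro i
    simp only [f, quadForm]
    refine totalDegree_finsetSum_le fun q _ => ?_
    refine (totalDegree_mul _ _).trans ?_
    rw [totalDegree_X]
    have := totalDegree_mul (C (coef (Mx D0 c0 d0 i) q)) (X (R := k) q.val.1)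
    rw [totalDegree_X, totalDegree_C] at this
    omega
  have hf : ∀ i t, eval t (f i) = qv (RingHom.id k) (coef (Mx D0 c0 d0 i)) t := by
    intro i t
    rw [← eval_quadForm, eval₂_id]
  have hd := char_dvd_card_solutions_of_add_lt (K := k) (σ := Fin 5) q (f₁ := f 0) (f₂ := f 1) (by
    have := hdeg 0
    have := hdeg 1
    simp
    omega)
  have hq : q.Prime := CharP.char_is_prime k q
  have z0 : eval (0 : Fin 5 → k) (f 0) = 0 ∧ eval (0 : Fin 5 → k) (f 1) = 0 := by
    rw [hf, hf, qv_Mx0, qv_Mx1]; simp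
  have hcard : 1 < Fintype.card { x : Fin 5 → k // eval x (f 0) = 0 ∧ eval x (f 1) = 0 } := by
    have hpos : 0 < Fintype.card { x : Fin 5 → k // eval x (f 0) = 0 ∧ eval x (f 1) = 0 } :=
      Fintype.card_pos_iff.mpr ⟨⟨0, z0⟩⟩
    exact lt_of_lt_of_le hq.one_lt (Nat.le_of_dvd hpos hd)
  obtain ⟨⟨t, ht⟩, hne⟩ := Fintype.exists_ne_of_one_lt_card hcard ⟨0, z0⟩
  have htne : t ≠ 0 := fun h => hne (by simpa using h)
  exact sol_elim (RingHom.id k) D0 c0 d0 ((hasSolution_iff _ _).mpr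
    ⟨t, htne, by rw [← hf]; exact ht.1, by rw [← hf]; exact ht.2⟩)

lemma local_both (h2 : (2 : k) ≠ 0) (D c d : R) (D0 c0 d0 : k)
    (hD : IsLocalRing.residue R D = e D0) (hD0 : D0 ≠ 0) (u v x : R) (y0 z0 : k) (u0 v0 x0 : k)
    (hc : IsLocalRing.residue R c = e c0) (hd : IsLocalRing.residue R d = e d0)
    (hu : IsLocalRing.residue R u = e u0) (hv : IsLocalRing.residue R v = e v0)
    (hx : IsLocalRing.residue R x = e x0)
    (E1 : u0 * v0 = x0 ^ 2 - D0 * y0 ^ 2)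
    (E2 : (u0 + v0) * (c0 * u0 + d0 * v0) = x0 ^ 2 - D0 * z0 ^ 2) 
    (hy : y0 ≠ 0 ∨ u * v = x ^ 2) (hz : z0 ≠ 0 ∨ (u + v) * (c * u + d * v) = x ^ 2) :
    ∃ y z : R, u * v = x ^ 2 - D * y ^ 2 ∧ (u + v) * (c * u + d * v) = x ^ 2 - D * z ^ 2 := by
  have hy' : ∃ y, u * v = x ^ 2 - D * y ^ 2 := by
    rcases hy with hy | hy
    · obtain ⟨y, hy, -⟩ := sqrt_hensel e h2 D (x ^ 2 - u * v) D0 y0 hD hD0 hy (by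
        have := congrArg e E1
        simp only [map_sub, map_mul, map_pow, hu, hv, hx] at this ⊢
        linear_combination -this)
      exact ⟨y, by linear_combination hy⟩
    · exact ⟨0, by linear_combination hy⟩
  have hz' : ∃ z, (u + v) * (c * u + d * v) = x ^ 2 - D * z ^ 2 := by
    rcases hz with hz | hz
    · obtain ⟨z, hz, -⟩ := sqrt_hensel e h2 D (x ^ 2 - (u + v) * (c * u + d * v)) D0 z0 hD hD0 hz (by
        have := congrArg e E2
        simp only [map_sub, map_mul, map_pow, map_add, hu, hv, hx, hc, hd] at this ⊢
        linear_combination -this)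
      exact ⟨z, by linear_combination hz⟩
    · exact ⟨0, by linear_combination hz⟩
  obtain ⟨y, hy⟩ := hy'
  obtain ⟨z, hz⟩ := hz'
  exact ⟨y, z, hy, hz⟩

lemma div_lift (a b : R) (a0 b0 : k) (ha : IsLocalRing.residue R a = e a0)
    (hb : IsLocalRing.residue R b = e b0) (hb0 : b0 ≠ 0) :
    ∃ q : R, b * q = a ∧ IsLocalRing.residue R q = e (a0 / b0) := by
  have hu : IsUnit b := by
    rw [← IsLocalRing.residue_ne_zero_iff_isUnit, hb]; exact (map_ne_zero e).mpr hb0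
  obtain ⟨bi, hi⟩ := hu.exists_right_inv
  refine ⟨bi * a, by linear_combination a * hi, ?_⟩
  have hb1 := (map_ne_zero e).mpr hb0
  have hi' : IsLocalRing.residue R bi * e b0 = 1 := by
    rw [← hb, ← map_mul, mul_comm, hi, map_one]
  rw [map_mul, ha, map_div₀]
  field_simp
  linear_combination e a0 * hi'

lemma local_full (h2 : (2 : k) ≠ 0) (D c d : R) (D0 c0 d0 : k)
    (hD : IsLocalRing.residue R D = e D0) (hc : IsLocalRing.residue R c = e c0)
    (hd : IsLocalRing.residue R d = e d0) (hD0 : D0 ≠ 0) (hcd : c0 ≠ 0 ∨ d0 ≠ 0) :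
    ∃ u v x y z : R, ¬ (u = 0 ∧ v = 0 ∧ x = 0 ∧ y = 0 ∧ z = 0) ∧ u * v = x ^ 2 - D * y ^ 2 ∧
      (u + v) * (c * u + d * v) = x ^ 2 - D * z ^ 2 := by
  by_cases hns : IsSquare D0
  · obtain ⟨r0, hr0⟩ := hns
    have hr : r0 ≠ 0 := by rintro rfl; simp at hr0; exact hD0 hr0
    obtain ⟨r, hr, -⟩ := sqrt_hensel e h2 1 D 1 r0 (by simp) one_ne_zero hr (by rw [hD, hr0]; congr 1; ring)
    refine ⟨0, 0, r, 1, 1, by simp, by linear_combination -hr, by linear_combination -hr⟩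
  by_cases hc0 : c0 = 0
  · obtain ⟨u, y, z, h1, h2⟩ := local_half e h2 D c d D0 c0 d0 hD hc hd hD0 hns hc0 (hcd.resolve_left (not_not.mpr hc0))
    exact ⟨u, 1, 0, y, z, by simp, h1, h2⟩
  by_cases hd0 : d0 = 0
  · obtain ⟨u, y, z, h1, h2⟩ := local_half e h2 D d c D0 d0 c0 hD hd hc hD0 hns hd0 hc0
    exact ⟨1, u, 0, y, z, by simp, by linear_combination h1, by linear_combination h2⟩
  clear hcd
  obtain ⟨u0, v0, x0, y0, z0, hne, E1, E2⟩ := chevalley D0 c0 d0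
  have nz : ∀ (r : R) (r0 : k), IsLocalRing.residue R r = e r0 → r0 ≠ 0 → r ≠ 0 := by
    rintro r r0 h h0 rfl
    rw [map_zero] at h
    exact (map_ne_zero e).mpr h0 h.symm
  obtain ⟨u, hu⟩ := lift_e e u0
  obtain ⟨v, hv⟩ := lift_e e v0
  obtain ⟨x, hx⟩ := lift_e e x0
  -- in all cases at least one of `u, v, x` is nonzero
  have hne' : ¬ (u0 = 0 ∧ v0 = 0) := by
    rintro ⟨rfl, rfl⟩
    by_cases hy : y0 = 0
    · subst hy
      have hx0 : x0 = 0 := pow_eq_zero_iff two_ne_zero |>.mp (by linear_combination -E1)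
      subst hx0
      have : z0 ^ 2 = 0 := (mul_eq_zero.mp (by linear_combination E2 : D0 * z0 ^ 2 = 0)).resolve_left hD0
      exact hne ⟨rfl, rfl, rfl, rfl, pow_eq_zero_iff two_ne_zero |>.mp this⟩
    · apply hns
      refine ⟨x0 / y0, ?_⟩
      field_simp
      linear_combination E1
  by_cases hy : y0 = 0
  · subst hy
    by_cases hz : z0 = 0
    · subst hz
      have hv0 : v0 ≠ 0 := by
        rintro rfl
        have hx0 : x0 ^ 2 = 0 := by linear_combination -E1
        have : c0 * u0 ^ 2 = 0 := by linear_combination E2 + hx0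
        exact hne' ⟨pow_eq_zero_iff two_ne_zero |>.mp ((mul_eq_zero.mp this).resolve_left hc0), rfl⟩
      have hx0 : x0 ≠ 0 := by
        rintro rfl
        have hu0 : u0 = 0 := (mul_eq_zero.mp (by linear_combination E1 : u0 * v0 = 0)).resolve_right hv0
        subst hu0
        have : d0 * v0 ^ 2 = 0 := by linear_combination E2
        exact hv0 (pow_eq_zero_iff two_ne_zero |>.mp ((mul_eq_zero.mp this).resolve_left hd0))
      set s := x0 / v0 with hs
      have hs0 : s ≠ 0 := div_ne_zero hx0 hv0
      have hD1 : 1 - D0 ≠ 0 := fun h => hns ⟨1, by linear_combination -h⟩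
      obtain ⟨u', hu'⟩ := lift_e e (s ^ 2)
      obtain ⟨x', hx'⟩ := lift_e e (s * (1 + D0) / (1 - D0))
      have hy' : 2 * s / (1 - D0) ≠ 0 := div_ne_zero (mul_ne_zero h2 hs0) hD1
      have e1 : s ^ 2 * 1 = (s * (1 + D0) / (1 - D0)) ^ 2 - D0 * (2 * s / (1 - D0)) ^ 2 := by
        field_simp
        ring
      have e2 : (s ^ 2 + 1) * (c0 * s ^ 2 + d0 * 1) = s ^ 2 := by
        have hu0 : u0 = x0 ^ 2 / v0 := by field_simp; linear_combination E1
        have hsv : x0 = s * v0 := by rw [hs]; field_simp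
        rw [hsv] at E2 hu0
        have hu1 : u0 = s ^ 2 * v0 := by rw [hu0]; field_simp
        rw [hu1] at E2
        have hv2 : v0 ^ 2 ≠ 0 := pow_ne_zero 2 hv0
        refine mul_left_cancel₀ hv2 ?_
        linear_combination E2
      obtain ⟨y, z, h3, h4⟩ := local_both e h2 D c d D0 c0 d0 hD hD0 u' 1 x' _ _ _ 1 _ hc hd hu' (by simp) hx'
        e1 (by rw [e2, ← e1]; ring) (Or.inl hy') (Or.inl hy')
      exact ⟨u', 1, x', y, z, by simp, h3, h4⟩
    · by_cases hu0 : u0 = 0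
      · have hv0 : v0 ≠ 0 := fun h => hne' ⟨hu0, h⟩
        obtain ⟨u', hu1, hu2⟩ := div_lift e (x ^ 2) v (x0 ^ 2) v0 (by rw [map_pow, hx, map_pow]) hv hv0
        have : x0 ^ 2 / v0 = u0 := by field_simp; linear_combination -E1
        rw [this] at hu2
        obtain ⟨y, z, h3, h4⟩ := local_both e h2 D c d D0 c0 d0 hD hD0 u' v x _ _ _ _ _ hc hd hu2 hv hx
          E1 E2 (Or.inr (by linear_combination hu1)) (Or.inl hz)
        exact ⟨u', v, x, y, z, fun h => nz v v0 hv hv0 h.2.1, h3, h4⟩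
      · obtain ⟨v', hv1, hv2⟩ := div_lift e (x ^ 2) u (x0 ^ 2) u0 (by rw [map_pow, hx, map_pow]) hu hu0
        have : x0 ^ 2 / u0 = v0 := by field_simp; linear_combination -E1
        rw [this] at hv2
        obtain ⟨y, z, h3, h4⟩ := local_both e h2 D c d D0 c0 d0 hD hD0 u v' x _ _ _ _ _ hc hd hu hv2 hx
          E1 E2 (Or.inr (by linear_combination hv1)) (Or.inl hz)
        exact ⟨u, v', x, y, z, fun h => nz u u0 hu hu0 h.1, h3, h4⟩
  · by_cases hz : z0 = 0
    · subst hz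
      by_cases hx0 : x0 = 0
      · subst hx0
        have h5 : (u0 + v0) * (c0 * u0 + d0 * v0) = 0 := by linear_combination E2
        have h6 : c0 * u0 + d0 * v0 = 0 := by
          refine (mul_eq_zero.mp h5).resolve_left fun h => hns ⟨u0 / y0, ?_⟩
          field_simp
          linear_combination E1 - u0 * h
        have hv0 : v0 ≠ 0 := by
          rintro rfl
          have : c0 * u0 = 0 := by linear_combination h6
          exact hne' ⟨(mul_eq_zero.mp this).resolve_left hc0, rfl⟩
        obtain ⟨u', hu1, hu2⟩ := div_lift e (-(d * v)) c (-(d0 * v0)) c0 (by simp [hd, hv]) hc hc0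
        have : -(d0 * v0) / c0 = u0 := by field_simp; linear_combination -h6
        rw [this] at hu2
        obtain ⟨y, z, h3, h4⟩ := local_both e h2 D c d D0 c0 d0 hD hD0 u' v 0 _ _ _ _ _ hc hd hu2 hv (by simp)
          E1 E2 (Or.inl hy) (Or.inr (by linear_combination (u' + v) * hu1))
        exact ⟨u', v, 0, y, z, fun h => nz v v0 hv hv0 h.2.1, h3, h4⟩
      · obtain ⟨x', hx1, hx2⟩ := sqrt_hensel e h2 1 ((u + v) * (c * u + d * v)) 1 x0 (by simp) one_ne_zero hx0 (by
          have := congrArg e E2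
          simp only [map_sub, map_mul, map_pow, map_add, hu, hv, hc, hd, map_zero, map_one] at this ⊢
          linear_combination this)
        obtain ⟨y, z, h3, h4⟩ := local_both e h2 D c d D0 c0 d0 hD hD0 u v x' _ _ _ _ _ hc hd hu hv hx2
          E1 E2 (Or.inl hy) (Or.inr (by linear_combination -hx1))
        exact ⟨u, v, x', y, z, fun h => nz x' x0 hx2 hx0 h.2.2.1, h3, h4⟩
    · obtain ⟨y, z, h3, h4⟩ := local_both e h2 D c d D0 c0 d0 hD hD0 u v x _ _ _ _ _ hc hd hu hv hx
        E1 E2 (Or.inl hy) (Or.inl hz)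
      refine ⟨u, v, x, y, z, fun h => hne' ⟨?_, ?_⟩, h3, h4⟩
      · by_contra h0; exact nz u u0 hu h0 h.1
      · by_contra h0; exact nz v v0 hv h0 h.2.1

end Local
end HasseDense

namespace HasseDense

lemma hensel_p {R : Type*} [CommRing R] [HenselianLocalRing R] (c d s r : R)
    (h2 : ¬ (2 : IsLocalRing.ResidueField R) = 0) (hs : ¬ IsLocalRing.residue R s = 0)
    (hsr : ¬ IsLocalRing.residue R s ^ 2 - IsLocalRing.residue R r = 0)
    (h1 : IsLocalRing.residue R c * ((1 + IsLocalRing.residue R s ^ 2) * (1 + IsLocalRing.residue R r)) - 1 = 0)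
    (h3 : IsLocalRing.residue R d - IsLocalRing.residue R c * IsLocalRing.residue R s ^ 2 * IsLocalRing.residue R r = 0) :
    ∃ w X : R, X ^ 2 = w ∧ (w + 1) * (c * w + d) = w := by
  have hcu : IsUnit c := by
    rw [← IsLocalRing.residue_ne_zero_iff_isUnit]
    intro h
    rw [h] at h1
    simp at h1
  obtain ⟨ci, hci⟩ := hcu.exists_right_inv
  have hci' : IsLocalRing.residue R c * IsLocalRing.residue R ci = 1 := by rw [← map_mul, hci, map_one]
  obtain ⟨w, hw, hw2⟩ := quad_hensel (R := R) (ci * (c + d - 1)) (ci * d) (s ^ 2) (by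
    simp only [map_sub, map_mul, map_add, map_one, map_pow]
    generalize IsLocalRing.residue R c = C at *
    generalize IsLocalRing.residue R d = D at *
    generalize IsLocalRing.residue R s = S at *
    generalize IsLocalRing.residue R r = T at *
    generalize IsLocalRing.residue R ci = I at *
    linear_combination I * (h3 * (1 + S ^ 2) + S ^ 2 * h1) - S ^ 4 * hci') (by
    intro h
    apply hsr
    simp only [map_sub, map_mul, map_add, map_one, map_pow, map_ofNat] at h
    generalize IsLocalRing.residue R c = C at *
    generalize IsLocalRing.residue R d = D at *
    generalize IsLocalRing.residue R s = S at *
    generalize IsLocalRing.residue R r = T at *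
    generalize IsLocalRing.residue R ci = I at *
    linear_combination h - I * h3 - I * h1 + (S ^ 2 + T) * hci')
  obtain ⟨X, hX, -⟩ := quad_hensel (R := R) 0 (-w) s (by
    simp only [map_sub, map_mul, map_add, map_one, map_pow, map_neg, map_zero, hw2]; ring) (by
    simp only [map_add, map_mul, map_ofNat, map_zero, add_zero]
    exact mul_ne_zero h2 hs)
  refine ⟨w, X, by linear_combination hX, ?_⟩
  linear_combination c * hw - ((c + d - 1) * w + d) * hci

section Adic
variable [NumberField K] (v : HeightOneSpectrum (𝓞 K))

lemma norm_le_one_iff' (x : v.adicCompletion K) : ‖x‖ ≤ 1 ↔ x ∈ v.adicCompletionIntegers K := by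
  rw [HeightOneSpectrum.mem_adicCompletionIntegers]
  exact Valued.toNormedField.norm_le_one_iff

lemma mem_pow_iff (ϖ : v.adicCompletionIntegers K) (hϖ : ϖ ≠ 0) (n : ℕ) (x : v.adicCompletionIntegers K) :
    x ∈ Ideal.span {ϖ} ^ n ↔ ‖(x : v.adicCompletion K)‖ ≤ ‖(ϖ : v.adicCompletion K)‖ ^ n := by
  rw [Ideal.span_singleton_pow, Ideal.mem_span_singleton]
  have h0 : (ϖ : v.adicCompletion K) ≠ 0 := by simpa using hϖ
  constructor
  · rintro ⟨y, rfl⟩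
    have := (norm_le_one_iff' v (y : v.adicCompletion K)).mpr y.2
    push_cast
    rw [norm_mul, norm_pow]
    exact mul_le_of_le_one_right (by positivity) this
  · intro h
    have hy : ((x : v.adicCompletion K) / (ϖ : v.adicCompletion K) ^ n) ∈ v.adicCompletionIntegers K := by
      rw [← norm_le_one_iff', norm_div, norm_pow]
      exact div_le_one_of_le₀ h (by positivity)
    refine ⟨⟨_, hy⟩, ?_⟩
    apply Subtype.ext
    push_cast
    field_simp

instance adicComplete : IsAdicComplete (IsLocalRing.maximalIdeal (v.adicCompletionIntegers K)) (v.adicCompletionIntegers K) where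
  haus' := (IsHausdorff.of_le_jacobson _ _ (IsLocalRing.maximalIdeal_le_jacobson _)).haus
  prec' := by
    intro f hf
    obtain ⟨ϖ, hϖ⟩ := IsDiscreteValuationRing.exists_irreducible (v.adicCompletionIntegers K)
    have hm := hϖ.maximalIdeal_eq
    have hϖ0 := hϖ.ne_zero
    have hlt : ‖(ϖ : v.adicCompletion K)‖ < 1 := by
      by_contra h
      rw [not_lt] at h
      have h1 : (1 : v.adicCompletionIntegers K) ∈ Ideal.span {ϖ} ^ 1 := by
        rw [mem_pow_iff v ϖ hϖ0]; simpa using h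
      rw [pow_one, ← hm] at h1
      exact (Ideal.ne_top_iff_one _).mp (IsLocalRing.maximalIdeal.isMaximal _).ne_top h1
    rw [hm] at hf ⊢
    simp only [smul_eq_mul, Ideal.mul_top, SModEq.sub_mem, mem_pow_iff v ϖ hϖ0] at hf ⊢
    have hc : CauchySeq (fun n => (f n : v.adicCompletion K)) := by
      refine cauchySeq_of_le_geometric _ 1 hlt fun n => ?_
      rw [dist_eq_norm, one_mul]
      simpa using hf (Nat.le_succ n)
    obtain ⟨L, hL⟩ := cauchySeq_tendsto_of_complete hc
    have hL1 : ∀ n, ‖(f n : v.adicCompletion K) - L‖ ≤ ‖(ϖ : v.adicCompletion K)‖ ^ n := by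
      intro n
      have h1 : Filter.Tendsto (fun m => ‖(f n : v.adicCompletion K) - f m‖) Filter.atTop (nhds ‖(f n : v.adicCompletion K) - L‖) :=
        (tendsto_const_nhds.sub hL).norm
      refine le_of_tendsto h1 (Filter.eventually_atTop.mpr ⟨n, fun m hm => ?_⟩)
      simpa using hf hm
    have hLm : L ∈ v.adicCompletionIntegers K := by
      rw [← norm_le_one_iff']
      exact le_of_tendsto hL.norm (Filter.Eventually.of_forall fun m => (norm_le_one_iff' v _).mpr (f m).2)
    exact ⟨⟨L, hLm⟩, fun n => by simpa using hL1 n⟩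

instance henselian_adic : HenselianLocalRing (v.adicCompletionIntegers K) where
  is_henselian := by
    intro f hf a h1 h2
    exact HenselianRing.is_henselian f hf a h1 (h2.map _)

lemma residue_zero_iff (a : 𝓞 K) :
    IsLocalRing.residue (v.adicCompletionIntegers K) (algebraMap (𝓞 K) (v.adicCompletionIntegers K) a) = 0
      ↔ a ∈ v.asIdeal := by
  rw [← not_iff_not, ← ne_eq, IsLocalRing.residue_ne_zero_iff_isUnit,
    HeightOneSpectrum.adicCompletionIntegers.isUnit_iff_valued_eq_one,
    ← HeightOneSpectrum.valuation_eq_one_iff_notMem (K := K), ← HeightOneSpectrum.valuedAdicCompletion_eq_valuation]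
  rfl

lemma sol_of_int (p : ℕ) (c d : 𝓞 K) (u w x y z : v.adicCompletionIntegers K)
    (hne : ¬ (u = 0 ∧ w = 0 ∧ x = 0 ∧ y = 0 ∧ z = 0))
    (h1 : u * w = x ^ 2 - (p : v.adicCompletionIntegers K) * y ^ 2)
    (h2 : (u + w) * (algebraMap (𝓞 K) (v.adicCompletionIntegers K) c * u
      + algebraMap (𝓞 K) (v.adicCompletionIntegers K) d * w) = x ^ 2 - (p : v.adicCompletionIntegers K) * z ^ 2) :
    HasSolution (algebraMap K (v.adicCompletion K)) (fun i => coef (Mx (p : K) (c : K) (d : K) i)) := by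
  have hc : ∀ a : 𝓞 K, algebraMap K (v.adicCompletion K) (a : K) = (algebraMap (𝓞 K) (v.adicCompletionIntegers K) a : v.adicCompletionIntegers K) := by
    intro a; rfl
  refine sol_of _ _ _ _ (u : v.adicCompletion K) w x y z ?_ ?_ ?_
  · by_contra hh
    push Not at hh
    apply hne
    simpa using hh
  · rw [map_natCast]
    exact_mod_cast congrArg (Subtype.val) h1
  · rw [map_natCast, hc, hc]
    exact_mod_cast congrArg (Subtype.val) h2

lemma loc_good (p : ℕ) (c d : 𝓞 K) (hp : (p : 𝓞 K) ∉ v.asIdeal) (h2 : (2 : 𝓞 K) ∉ v.asIdeal)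
    (hcd : ¬ (c ∈ v.asIdeal ∧ d ∈ v.asIdeal)) :
    HasSolution (algebraMap K (v.adicCompletion K)) (fun i => coef (Mx (p : K) (c : K) (d : K) i)) := by
  have : v.asIdeal.IsMaximal := v.isMaximal
  let _ : Field (𝓞 K ⧸ v.asIdeal) := Ideal.Quotient.field _
  have : Finite (𝓞 K ⧸ v.asIdeal) := Ideal.finiteQuotientOfFreeOfNeBot _ v.ne_bot
  let e : (𝓞 K ⧸ v.asIdeal) →+* IsLocalRing.ResidueField (v.adicCompletionIntegers K) :=
    Ideal.Quotient.lift v.asIdeal ((IsLocalRing.residue (v.adicCompletionIntegers K)).comp (algebraMap (𝓞 K) (v.adicCompletionIntegers K)))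
      (fun a ha => (residue_zero_iff v a).mpr ha)
  have he : ∀ a, IsLocalRing.residue _ (algebraMap (𝓞 K) (v.adicCompletionIntegers K) a) = e (Ideal.Quotient.mk _ a) := by
    intro a; simp [e]
  have hz : ∀ a : 𝓞 K, Ideal.Quotient.mk v.asIdeal a = 0 ↔ a ∈ v.asIdeal := fun a => Ideal.Quotient.eq_zero_iff_mem
  obtain ⟨u, w, x, y, z, hne, e1, e2⟩ := local_full e (by
      intro h
      exact h2 ((hz 2).mp (by rw [map_ofNat]; exact h))) _ _ _ _ _ _ (he p) (he c) (he d)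
    (by rwa [ne_eq, hz]) (by rw [ne_eq, ne_eq, hz, hz]; tauto)
  rw [map_natCast] at e1 e2
  exact sol_of_int v p c d u w x y z hne e1 e2

lemma loc_two (p m : ℕ) (hp : p = 1 + 8 * m) (c d : 𝓞 K) (h2 : (2 : 𝓞 K) ∈ v.asIdeal) :
    HasSolution (algebraMap K (v.adicCompletion K)) (fun i => coef (Mx (p : K) (c : K) (d : K) i)) := by
  have h2' := (residue_zero_iff v 2).mpr h2
  rw [map_ofNat, map_ofNat] at h2'
  obtain ⟨t, ht, -⟩ := quad_hensel (R := v.adicCompletionIntegers K) 1 (-(2 * (m : v.adicCompletionIntegers K))) 0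
    (by
      simp only [map_add, map_neg, map_mul, map_ofNat, map_pow, map_zero, map_one]
      rw [h2']; ring) (by simp)
  have : (1 + 2 * t) ^ 2 = (p : v.adicCompletionIntegers K) := by
    rw [hp]; push_cast; linear_combination 4 * ht
  exact sol_of_int v p c d 0 0 (1 + 2 * t) 1 1 (by simp) (by linear_combination -this) (by linear_combination -this)

lemma loc_p (p : ℕ) (c d s r : 𝓞 K) (h2 : (2 : 𝓞 K) ∉ v.asIdeal)
    (hs : s ∉ v.asIdeal) (hsr : s ^ 2 - r ∉ v.asIdeal)
    (h1 : c * ((1 + s ^ 2) * (1 + r)) - 1 ∈ v.asIdeal) (h3 : d - c * s ^ 2 * r ∈ v.asIdeal) :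
    HasSolution (algebraMap K (v.adicCompletion K)) (fun i => coef (Mx (p : K) (c : K) (d : K) i)) := by
  rw [← residue_zero_iff] at h1 h3 h2 hs hsr
  simp only [map_sub, map_mul, map_add, map_one, map_pow, map_natCast, map_ofNat] at h1 h3 h2 hs hsr
  obtain ⟨w, X, e1, e2⟩ := hensel_p _ _ _ _ h2 hs hsr h1 h3
  exact sol_of_int v p c d w 1 X 0 0 (by simp) (by linear_combination -e1) (by linear_combination e2 - e1)

end Adic
end HasseDense

namespace HasseDense

section Val
variable {Γ : Type*} [LinearOrderedCommGroupWithZero Γ] (v : Valuation K Γ)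

lemma sq_lt_one' {a : Γ} (h : a ^ 2 < 1) : a < 1 := by
  by_contra hh
  rw [not_lt] at hh
  exact absurd h (not_lt.mpr (one_le_pow₀ hh))

lemma sq_eq_one' {a : Γ} (h : a ^ 2 = 1) : a = 1 :=
  (pow_eq_one_iff_of_nonneg zero_le two_ne_zero).mp h

lemma map_sub_of_ne' {x y : K} (h : v x ≠ v y) : v (x - y) = max (v x) (v y) := by
  rcases lt_or_gt_of_ne h with h | h
  · rw [Valuation.map_sub_eq_of_lt_right _ h, max_eq_right h.le]
  · rw [Valuation.map_sub_eq_of_lt_left _ h, max_eq_left h.le]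

/-- inert case: the norm form has even valuation -/
lemma inert_val (D : K) (hD : v D = 1) (hn : ∀ Y, ¬ v (D * Y ^ 2 - 1) < 1) (x y : K) :
    v (x ^ 2 - D * y ^ 2) = max (v x) (v y) ^ 2 := by
  have e1 : v (D * y ^ 2) = v y ^ 2 := by rw [map_mul, map_pow, hD, one_mul]
  rcases lt_trichotomy (v x) (v y) with h | h | h
  · have : v (x ^ 2) < v (D * y ^ 2) := by
      rw [e1, map_pow]; exact pow_lt_pow_left₀ h zero_le two_ne_zero
    rw [map_sub_of_ne' _ this.ne, max_eq_right this.le, e1, max_eq_right h.le]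
  · rw [h, max_self]
    by_cases hx : x = 0
    · subst hx
      have : y = 0 := by rw [map_zero] at h; exact (v.zero_iff).mp h.symm
      subst this; simp
    · have hvx : v x ≠ 0 := (v.ne_zero_iff).mpr hx
      have e2 : x ^ 2 - D * y ^ 2 = - (x ^ 2 * (D * (y / x) ^ 2 - 1)) := by field_simp; ring
      have h3 : v (D * (y / x) ^ 2 - 1) = 1 := by
        refine le_antisymm ?_ (not_lt.mp (hn _))
        refine (v.map_sub _ _).trans ?_
        rw [map_one, map_mul, map_pow, map_div₀, hD, h, div_self (h ▸ hvx)]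
        simp
      rw [e2, Valuation.map_neg, map_mul, h3, map_pow, mul_one, h]
  · have : v (D * y ^ 2) < v (x ^ 2) := by
      rw [e1, map_pow]; exact pow_lt_pow_left₀ h zero_le two_ne_zero
    rw [map_sub_of_ne' _ this.ne', max_eq_left this.le, map_pow, max_eq_left h.le]

lemma inert_even (D c d r X Y Z : K) (hD : v D = 1) (hn : ∀ Y, ¬ v (D * Y ^ 2 - 1) < 1)
    (hc : v c ≤ 1) (hd : v d ≤ 1) (h1 : r = X ^ 2 - D * Y ^ 2)
    (h2 : (r + 1) * (c * r + d) = X ^ 2 - D * Z ^ 2) : ∃ g, v (r * (r + 1)) = g ^ 2 := by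
  have e1 := inert_val v D hD hn X Y
  have e2 := inert_val v D hD hn X Z
  rw [← h1] at e1
  rw [← h2] at e2
  rcases lt_trichotomy (v r) 1 with h | h | h
  · refine ⟨max (v X) (v Y), ?_⟩
    rw [map_mul, Valuation.map_add_eq_of_lt_right _ (by rwa [map_one]), map_one, mul_one, e1]
  · refine ⟨1, ?_⟩
    rw [map_mul, h, one_mul, one_pow]
    refine le_antisymm ?_ ?_
    · refine (v.map_add _ _).trans ?_
      rw [h, map_one, max_self]
    · by_contra hlt
      rw [not_le] at hlt
      have h3 : v (c * r + d) ≤ 1 := by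
        refine (v.map_add _ _).trans (max_le ?_ hd)
        rw [map_mul, h, mul_one]; exact hc
      have h4 : v ((r + 1) * (c * r + d)) < 1 := by
        rw [map_mul]
        exact (mul_le_of_le_one_right' h3).trans_lt hlt
      rw [e2] at h4
      have h5 : v X < 1 := (le_max_left _ _).trans_lt (sq_lt_one' h4)
      apply hn Y
      rw [show D * Y ^ 2 - 1 = X ^ 2 - (r + 1) by rw [h1]; ring]
      refine (v.map_sub _ _).trans_lt (max_lt ?_ hlt)
      rw [map_pow]
      exact pow_lt_one₀ zero_le h5 two_ne_zero
  · refine ⟨v r, ?_⟩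
    rw [map_mul, Valuation.map_add_eq_of_lt_left _ (by rwa [map_one]), sq]

/-- ramified case -/
lemma ram_ne (D : K) (hD0 : v D ≠ 0) (hD : ∀ g, v D ≠ g ^ 2) (x y : K) (h : v x ^ 2 = v D * v y ^ 2) :
    x = 0 ∧ y = 0 := by
  by_cases hy : y = 0
  · subst hy
    rw [map_zero] at h
    simp only [ne_eq, OfNat.ofNat_ne_zero, not_false_eq_true, zero_pow, mul_zero, pow_eq_zero_iff, map_eq_zero] at h
    exact ⟨h, rfl⟩
  · exfalso
    apply hD (v x / v y)
    have : v y ≠ 0 := (v.ne_zero_iff).mpr hy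
    rw [div_pow, h]
    field_simp

lemma ram_val (D : K) (hD0 : v D ≠ 0) (hD : ∀ g, v D ≠ g ^ 2) (x y : K) :
    v (x ^ 2 - D * y ^ 2) = max (v x ^ 2) (v D * v y ^ 2) := by
  have e1 : v (D * y ^ 2) = v D * v y ^ 2 := by rw [map_mul, map_pow]
  by_cases h : v x ^ 2 = v D * v y ^ 2
  · obtain ⟨rfl, rfl⟩ := ram_ne v D hD0 hD x y h
    simp
  · rw [map_sub_of_ne']
    · rw [map_pow, e1]
    · rw [map_pow, e1]; exact h

lemma ram_zero (D c d u w x y z : K) (hD0 : v D ≠ 0) (hD : ∀ g, v D ≠ g ^ 2) (hc : v c = 1) (hd : v d = 1)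
    (hne : ¬ (u = 0 ∧ w = 0 ∧ x = 0 ∧ y = 0 ∧ z = 0))
    (h1 : u * w = x ^ 2 - D * y ^ 2) (h2 : (u + w) * (c * u + d * w) = x ^ 2 - D * z ^ 2) :
    u ≠ 0 ∧ w ≠ 0 ∧ u + w ≠ 0 := by
  have key : ∀ x y : K, x ^ 2 = D * y ^ 2 → x = 0 ∧ y = 0 := by
    intro x y h
    apply ram_ne v D hD0 hD x y
    rw [← map_pow, ← map_pow, ← map_mul, h]
  have key2 : ∀ (e x y : K), v e = 1 → e * x ^ 2 = - (D * y ^ 2) → x = 0 ∧ y = 0 := by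
    intro e x y he h
    apply ram_ne v D hD0 hD x y
    rw [← map_pow, ← map_pow, ← map_mul, ← Valuation.map_neg v (D * y ^ 2), ← h, map_mul, he, one_mul]
  refine ⟨?_, ?_, ?_⟩
  · rintro rfl
    obtain ⟨rfl, rfl⟩ := key x y (by linear_combination -h1)
    obtain ⟨rfl, rfl⟩ := key2 d w z hd (by linear_combination h2)
    simp at hne
  · rintro rfl
    obtain ⟨rfl, rfl⟩ := key x y (by linear_combination -h1)
    obtain ⟨rfl, rfl⟩ := key2 c u z hc (by linear_combination h2)
    simp at hne
  · intro h
    obtain ⟨rfl, rfl⟩ := key x z (by linear_combination (c * u + d * w) * h - h2)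
    obtain ⟨rfl, rfl⟩ := key u y (by linear_combination u * h - h1)
    have : w = 0 := by simpa using h
    subst this
    simp at hne

lemma ram_main (D c d s t r X Y Z : K) (hD0 : v D ≠ 0) (hD : ∀ g, v D ≠ g ^ 2) (hc : v c = 1) (hd : v d = 1)
    (ht2 : ∀ x, ¬ v (x ^ 2 - t) < 1) (hr : r ≠ 0)
    (g1 : v (c * ((1 + s ^ 2) * (1 + t)) - 1) < 1) (g2 : v (d - c * s ^ 2 * t) < 1)
    (h1 : r = X ^ 2 - D * Y ^ 2)
    (h2 : (r + 1) * (c * r + d) = X ^ 2 - D * Z ^ 2) : v r = 1 ∧ v (r - s ^ 2) < 1 := by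
  have e1 := ram_val v D hD0 hD X Y
  have e2 := ram_val v D hD0 hD X Z
  have hsq : ∀ g y : K, v D * v y ^ 2 = v g ^ 2 → g = 0 := by
    intro g y h
    exact (ram_ne v D hD0 hD g y h.symm).1
  have hsq1 : ∀ y : K, v D * v y ^ 2 ≠ 1 := by
    intro y h
    exact one_ne_zero (hsq 1 y (by rw [h, map_one, one_pow]))
  rw [← h1] at e1
  rw [← h2] at e2
  have hr1 : v r = 1 := by
    rcases lt_trichotomy (v r) 1 with h | h | h
    · exfalso
      have h3 : v ((r + 1) * (c * r + d)) = 1 := by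
        rw [map_mul, Valuation.map_add_eq_of_lt_right _ (by rwa [map_one]), Valuation.map_add_eq_of_lt_right, map_one, hd, one_mul]
        rw [map_mul, hc, one_mul, hd]; exact h
      rw [h3] at e2
      have hX : v X ^ 2 < 1 := (le_max_left _ _).trans_lt (e1 ▸ h)
      rcases max_choice (v X ^ 2) (v D * v Z ^ 2) with h4 | h4
      · rw [← e2] at h4; exact hX.ne h4.symm
      · rw [← e2] at h4; exact hsq1 Z h4.symm
    · exact h
    · exfalso
      have h3 : v ((r + 1) * (c * r + d)) = v r ^ 2 := by
        rw [map_mul, Valuation.map_add_eq_of_lt_left _ (by rwa [map_one]), Valuation.map_add_eq_of_lt_left, map_mul, hc, one_mul, sq]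
        rw [map_mul, hc, one_mul, hd]; exact h
      rw [h3] at e2
      rcases max_choice (v X ^ 2) (v D * v Z ^ 2) with h4 | h4
      · rw [← e2] at h4
        have : v X ^ 2 ≤ v r := e1 ▸ le_max_left _ _
        rw [← h4] at this
        have h5 : v r < v r ^ 2 := by
          rw [sq]; exact lt_mul_of_one_lt_left (zero_lt_one.trans h) h
        exact absurd this (not_le.mpr h5)
      · rw [← e2] at h4
        exact hr (hsq r Z h4.symm)
  refine ⟨hr1, ?_⟩
  rw [hr1] at e1
  have hY : v (D * Y ^ 2) < 1 := by
    rw [map_mul, map_pow]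
    exact lt_of_le_of_ne (e1.symm ▸ le_max_right _ _) (hsq1 Y)
  have h3 : v ((r + 1) * (c * r + d)) ≤ 1 := by
    rw [map_mul]
    refine mul_le_one' ?_ ?_
    · refine (v.map_add _ _).trans ?_
      rw [hr1, map_one, max_self]
    · refine (v.map_add _ _).trans ?_
      rw [map_mul, hr1, hc, hd]; simp
  have hZ : v (D * Z ^ 2) < 1 := by
    rw [map_mul, map_pow]
    refine lt_of_le_of_ne ?_ (hsq1 Z)
    exact le_trans (le_max_right _ _) (e2 ▸ h3)
  have h4 : v (c * ((r - s ^ 2) * (r - t))) < 1 := by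
    have : c * ((r - s ^ 2) * (r - t)) = (D * Y ^ 2 - D * Z ^ 2) - (r * (c * ((1 + s ^ 2) * (1 + t)) - 1)
      + (r + 1) * (d - c * s ^ 2 * t)) := by linear_combination h2 - h1
    rw [this]
    refine (v.map_sub _ _).trans_lt (max_lt ((v.map_sub _ _).trans_lt (max_lt hY hZ)) ((v.map_add _ _).trans_lt (max_lt ?_ ?_)))
    · rwa [map_mul, hr1, one_mul]
    · rw [map_mul]
      refine lt_of_le_of_lt (mul_le_of_le_one_left' ?_) g2
      refine (v.map_add _ _).trans ?_
      rw [hr1, map_one, max_self]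
  rw [map_mul, hc, one_mul, map_mul] at h4
  have h5 : 1 ≤ v (r - t) := by
    by_contra hh
    rw [not_le] at hh
    apply ht2 X
    rw [show X ^ 2 - t = (r - t) + D * Y ^ 2 by rw [h1]; ring]
    exact (v.map_add _ _).trans_lt (max_lt hh hY)
  exact lt_of_le_of_lt (le_mul_of_one_le_right' h5) h4

end Val
end HasseDense

namespace HasseDense

section Recip
variable [NumberField K]

lemma norm_congr (p : ℕ) (x y : 𝓞 K) (h : x - y ∈ Ideal.span {(p : 𝓞 K)}) :
    ((Algebra.norm ℤ x : ℤ) : ZMod p) = ((Algebra.norm ℤ y : ℤ) : ZMod p) := by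
  obtain ⟨k, hk⟩ := Ideal.mem_span_singleton.mp h
  have hx : x = y + p • k := by rw [nsmul_eq_mul]; linear_combination hk
  let b := RingOfIntegers.basis K
  rw [Algebra.norm_eq_matrix_det b, Algebra.norm_eq_matrix_det b,
    ← eq_intCast (Int.castRingHom (ZMod p)), ← eq_intCast (Int.castRingHom (ZMod p)), RingHom.map_det, RingHom.map_det, hx]
  congr 1
  ext i j
  rw [map_add, map_nsmul]
  simp only [RingHom.mapMatrix_apply, Matrix.map_apply, Matrix.add_apply, Matrix.smul_apply, map_add, map_nsmul]
  simp

lemma absNorm_isSquare (p : ℕ) [Fact p.Prime] (hp8 : p % 8 = 1) (v : HeightOneSpectrum (𝓞 K))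
    (h : (2 : 𝓞 K) ∈ v.asIdeal ∨ ∃ x : 𝓞 K, x ^ 2 - p ∈ v.asIdeal) :
    IsSquare ((Ideal.absNorm v.asIdeal : ℕ) : ZMod p) := by
  have : v.asIdeal.IsMaximal := v.isMaximal
  let _ : Field (𝓞 K ⧸ v.asIdeal) := Ideal.Quotient.field _
  have : Finite (𝓞 K ⧸ v.asIdeal) := Ideal.finiteQuotientOfFreeOfNeBot _ v.ne_bot
  obtain ⟨q, hq⟩ := CharP.exists (𝓞 K ⧸ v.asIdeal)
  have hqp : q.Prime := CharP.char_is_prime (𝓞 K ⧸ v.asIdeal) q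
  have : Fact q.Prime := ⟨hqp⟩
  let _ : Algebra (ZMod q) (𝓞 K ⧸ v.asIdeal) := ZMod.algebra _ q
  have hcard : Ideal.absNorm v.asIdeal = q ^ Module.finrank (ZMod q) (𝓞 K ⧸ v.asIdeal) := by
    rw [Ideal.absNorm_apply, Submodule.cardQuot_apply]
    have := Module.natCard_eq_pow_finrank (K := ZMod q) (V := 𝓞 K ⧸ v.asIdeal)
    rw [Nat.card_zmod] at this
    exact this
  rw [hcard]
  push_cast
  rcases Nat.even_or_odd (Module.finrank (ZMod q) (𝓞 K ⧸ v.asIdeal)) with he | ho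
  · exact he.isSquare_pow _
  suffices hs : IsSquare (q : ZMod p) from hs.pow _
  have hp2 : p ≠ 2 := by rintro rfl; omega
  by_cases h2 : (2 : 𝓞 K) ∈ v.asIdeal
  · have : ((2 : ℕ) : 𝓞 K ⧸ v.asIdeal) = 0 := by
      have := Ideal.Quotient.eq_zero_iff_mem.mpr h2
      rw [map_ofNat] at this
      exact_mod_cast this
    rw [CharP.cast_eq_zero_iff _ q] at this
    rw [(Nat.prime_dvd_prime_iff_eq hqp Nat.prime_two).mp this]
    have := (ZMod.exists_sq_eq_two_iff hp2).mpr (Or.inl hp8)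
    exact_mod_cast this
  · obtain ⟨x, hx⟩ := h.resolve_left h2
    have hq2 : q ≠ 2 := by
      rintro rfl
      apply h2
      rw [← Ideal.Quotient.eq_zero_iff_mem, map_ofNat]
      exact_mod_cast CharP.cast_eq_zero (𝓞 K ⧸ v.asIdeal) 2
    rw [ZMod.exists_sq_eq_prime_iff_of_mod_four_eq_one (by omega) hq2]
    have hx' : (algebraMap (ZMod q) (𝓞 K ⧸ v.asIdeal)) (p : ZMod q) = (Ideal.Quotient.mk v.asIdeal x) ^ 2 := by
      rw [map_natCast, ← map_natCast (Ideal.Quotient.mk v.asIdeal), ← map_pow, eq_comm, Ideal.Quotient.eq]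
      exact hx
    have hN := congrArg (Algebra.norm (ZMod q)) hx'
    rw [Algebra.norm_algebraMap, map_pow] at hN
    obtain ⟨k, hk⟩ := ho
    rw [hk] at hN
    by_cases hpz : (p : ZMod q) = 0
    · rw [hpz]; exact ⟨0, by simp⟩
    · refine ⟨Algebra.norm (ZMod q) (Ideal.Quotient.mk v.asIdeal x) / (p : ZMod q) ^ k, ?_⟩
      field_simp
      rw [← hN]; ring

lemma norm_isSquare (p : ℕ) [Fact p.Prime] (hp8 : p % 8 = 1) (G : 𝓞 K) (hG : G ≠ 0)
    (h : ∀ v : HeightOneSpectrum (𝓞 K), ((2 : 𝓞 K) ∈ v.asIdeal ∨ ∃ x : 𝓞 K, x ^ 2 - p ∈ v.asIdeal) ∨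
      ∃ g, v.valuation K (G : K) = g ^ 2) :
    IsSquare ((Algebra.norm ℤ G : ℤ) : ZMod p) := by
  have hspan : Ideal.span {G} ≠ 0 := by
    rwa [Ideal.zero_eq_bot, ne_eq, Ideal.span_singleton_eq_bot]
  have h1 : IsSquare ((Ideal.absNorm (Ideal.span {G}) : ℕ) : ZMod p) := by
    rw [← Ideal.finprod_heightOneSpectrum_factorization hspan]
    refine finprod_induction (fun I => IsSquare ((Ideal.absNorm I : ℕ) : ZMod p)) ?_ ?_ ?_
    · simp
    · intro I J hI hJ
      rw [map_mul]; push_cast; exact hI.mul hJ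
    · intro v
      rw [HeightOneSpectrum.maxPowDividing, map_pow]
      push_cast
      rcases h v with h | ⟨g, hg⟩
      · exact (absNorm_isSquare p hp8 v h).pow _
      · rw [HeightOneSpectrum.valuation_of_algebraMap, HeightOneSpectrum.intValuation_if_neg _ hG] at hg
        have hg0 : g ≠ 0 := by
          rintro rfl
          simp at hg
        rw [← WithZero.exp_log hg0, ← WithZero.exp_nsmul, WithZero.exp_inj] at hg
        apply Even.isSquare_pow
        rw [← Int.even_coe_nat]
        refine ⟨- WithZero.log g, ?_⟩
        simp only [nsmul_eq_mul] at hg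
        push_cast at hg
        linarith
  rw [Ideal.absNorm_span_singleton] at h1
  have hm1 : IsSquare (-1 : ZMod p) := ZMod.exists_sq_eq_neg_one_iff.mpr (by omega)
  rcases Int.natAbs_eq (Algebra.norm ℤ G) with h2 | h2
  · rw [h2, Int.cast_natCast]; exact h1
  · rw [h2, Int.cast_neg, Int.cast_natCast]
    rw [neg_eq_neg_one_mul]
    exact hm1.mul h1

end Recip
end HasseDense

namespace HasseDense

section NoPoint
variable [NumberField K]

lemma c_add (a b : 𝓞 K) : ((a + b : 𝓞 K) : K) = (a : K) + b := map_add (algebraMap (𝓞 K) K) a b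
lemma c_sub (a b : 𝓞 K) : ((a - b : 𝓞 K) : K) = (a : K) - b := map_sub (algebraMap (𝓞 K) K) a b
lemma c_mul (a b : 𝓞 K) : ((a * b : 𝓞 K) : K) = (a : K) * b := map_mul (algebraMap (𝓞 K) K) a b
lemma c_pow (a : 𝓞 K) (n : ℕ) : ((a ^ n : 𝓞 K) : K) = (a : K) ^ n := map_pow (algebraMap (𝓞 K) K) a n

lemma approx (v : HeightOneSpectrum (𝓞 K)) (x : K) (hx : v.valuation K x ≤ 1) :
    ∃ a : 𝓞 K, v.valuation K ((a : K) - x) < 1 := by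
  obtain ⟨a, ha⟩ := v.exists_valuation_sub_lt_of_integer hx 1
  exact ⟨a, by simpa using ha⟩

lemma val_lt (v : HeightOneSpectrum (𝓞 K)) (a : 𝓞 K) : v.valuation K (a : K) < 1 ↔ a ∈ v.asIdeal :=
  v.valuation_lt_one_iff_mem a

lemma val_one (v : HeightOneSpectrum (𝓞 K)) (a : 𝓞 K) : v.valuation K (a : K) = 1 ↔ a ∉ v.asIdeal :=
  v.valuation_eq_one_iff_notMem

lemma val_le (v : HeightOneSpectrum (𝓞 K)) (a : 𝓞 K) : v.valuation K (a : K) ≤ 1 := v.valuation_le_one a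

lemma val_p (v : HeightOneSpectrum (𝓞 K)) (a : 𝓞 K) (h1 : a ∈ v.asIdeal) (h2 : a ∉ v.asIdeal ^ 2) (g) :
    v.valuation K (a : K) ≠ g ^ 2 := by
  rw [HeightOneSpectrum.valuation_of_algebraMap]
  intro h
  have h1' : v.intValuation a ≤ WithZero.exp (-((1 : ℕ) : ℤ)) := by
    rw [v.intValuation_le_pow_iff_mem]; simpa using h1
  have h2' : ¬ v.intValuation a ≤ WithZero.exp (-((2 : ℕ) : ℤ)) := by
    rw [v.intValuation_le_pow_iff_mem]; exact h2
  rw [h] at h1' h2'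
  have hg0 : g ≠ 0 := by
    rintro rfl
    simp at h2'
  rw [← WithZero.exp_log hg0, ← WithZero.exp_nsmul, WithZero.exp_le_exp] at h1' h2'
  simp only [nsmul_eq_mul] at h1' h2'
  push_cast at h1' h2'
  omega

lemma nonsq_approx (v : HeightOneSpectrum (𝓞 K)) (t : 𝓞 K) (ht : ∀ x : 𝓞 K, x ^ 2 - t ∉ v.asIdeal) (x : K) :
    ¬ v.valuation K (x ^ 2 - t) < 1 := by
  intro h
  have hx : v.valuation K x ≤ 1 := by
    have h1 : v.valuation K (x ^ 2) ≤ 1 := by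
      rw [show x ^ 2 = (x ^ 2 - t) + t by ring]
      exact (Valuation.map_add _ _ _).trans (max_le h.le (val_le v t))
    rw [map_pow] at h1
    by_contra hh
    rw [not_le] at hh
    exact absurd h1 (not_le.mpr (one_lt_pow₀ hh two_ne_zero))
  obtain ⟨a, ha⟩ := approx v x hx
  apply ht a
  rw [← val_lt]
  rw [c_sub, c_pow, show (a : K) ^ 2 - t = ((a : K) - x) * ((a : K) + x) + (x ^ 2 - t) by ring]
  refine (Valuation.map_add _ _ _).trans_lt (max_lt ?_ h)
  rw [map_mul]
  refine lt_of_le_of_lt (mul_le_of_le_one_right' ?_) ha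
  exact (Valuation.map_add _ _ _).trans (max_le (val_le v a) hx)

lemma inert_hn (v : HeightOneSpectrum (𝓞 K)) (p : 𝓞 K) (hp : p ∉ v.asIdeal) (ht : ∀ x : 𝓞 K, x ^ 2 - p ∉ v.asIdeal) (Y : K) :
    ¬ v.valuation K ((p : K) * Y ^ 2 - 1) < 1 := by
  intro h
  have hp1 := (val_one v p).mpr hp
  have h1 : v.valuation K Y ^ 2 = 1 := by
    rw [← map_pow, ← one_mul (v.valuation K (Y ^ 2)), ← hp1, ← map_mul,
      show (p : K) * Y ^ 2 = ((p : K) * Y ^ 2 - 1) + 1 by ring, Valuation.map_add_eq_of_lt_right, map_one, hp1]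
    rwa [map_one]
  have hY : Y ≠ 0 := by
    rintro rfl
    simp at h1
  apply nonsq_approx v p ht (Y⁻¹)
  rw [show Y⁻¹ ^ 2 - (p : K) = -(((p : K) * Y ^ 2 - 1) * (Y⁻¹) ^ 2) by field_simp; ring, Valuation.map_neg, map_mul, map_pow, map_inv₀, inv_pow, h1]
  simpa using h

theorem no_point (p : ℕ) [Fact p.Prime] (hp8 : p % 8 = 1) (c d s t : 𝓞 K)
    (hunr : ∀ v : HeightOneSpectrum (𝓞 K), (p : 𝓞 K) ∈ v.asIdeal → (p : 𝓞 K) ∉ v.asIdeal ^ 2)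
    (hrad : ∀ x : 𝓞 K, (∀ v : HeightOneSpectrum (𝓞 K), (p : 𝓞 K) ∈ v.asIdeal → x ∈ v.asIdeal) → x ∈ Ideal.span {(p : 𝓞 K)})
    (ht : ∀ v : HeightOneSpectrum (𝓞 K), (p : 𝓞 K) ∈ v.asIdeal → ∀ x : 𝓞 K, x ^ 2 - t ∉ v.asIdeal)
    (hs : ∃ s' : 𝓞 K, s * s' - 1 ∈ Ideal.span {(p : 𝓞 K)})
    (h1 : c * ((1 + s ^ 2) * (1 + t)) - 1 ∈ Ideal.span {(p : 𝓞 K)})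
    (h3 : d - c * s ^ 2 * t ∈ Ideal.span {(p : 𝓞 K)})
    (hN : ¬ IsSquare ((Algebra.norm ℤ (s ^ 2 + 1) : ℤ) : ZMod p)) :
    ¬ HasSolution (RingHom.id K) (fun i => coef (Mx (p : K) (c : K) (d : K) i)) := by
  have hp0 : (p : 𝓞 K) ≠ 0 := by
    exact_mod_cast (Fact.out : p.Prime).ne_zero
  have hsub : ∀ v : HeightOneSpectrum (𝓞 K), (p : 𝓞 K) ∈ v.asIdeal → Ideal.span {(p : 𝓞 K)} ≤ v.asIdeal := by
    intro v hv
    rwa [Ideal.span_singleton_le_iff_mem]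
  have hcc : ∀ v : HeightOneSpectrum (𝓞 K), (p : 𝓞 K) ∈ v.asIdeal → c ∉ v.asIdeal := by
    intro v hv hc
    have := hsub v hv h1
    have h5 : (1 : 𝓞 K) ∈ v.asIdeal := by
      have := v.asIdeal.sub_mem (v.asIdeal.mul_mem_right ((1 + s ^ 2) * (1 + t)) hc) this
      simpa using this
    exact v.isPrime.ne_top ((Ideal.eq_top_iff_one _).mpr h5)
  have hss : ∀ v : HeightOneSpectrum (𝓞 K), (p : 𝓞 K) ∈ v.asIdeal → s ∉ v.asIdeal := by
    intro v hv hc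
    obtain ⟨s', hs'⟩ := hs
    have := hsub v hv hs'
    have h5 : (1 : 𝓞 K) ∈ v.asIdeal := by
      have := v.asIdeal.sub_mem (v.asIdeal.mul_mem_right s' hc) this
      simpa using this
    exact v.isPrime.ne_top ((Ideal.eq_top_iff_one _).mpr h5)
  have hdd : ∀ v : HeightOneSpectrum (𝓞 K), (p : 𝓞 K) ∈ v.asIdeal → d ∉ v.asIdeal := by
    intro v hv hc
    have := v.asIdeal.sub_mem hc (hsub v hv h3)
    rw [sub_sub_cancel] at this
    rcases v.isPrime.mem_or_mem this with h | h
    · rcases v.isPrime.mem_or_mem h with h | h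
      · exact hcc v hv h
      · exact hss v hv (v.isPrime.mem_of_pow_mem _ h)
    · exact ht v hv 0 (by simpa using h)
  intro hsol
  obtain ⟨u, w, x, y, z, hne, e1, e2⟩ := sol_elim _ _ _ _ hsol
  simp only [RingHom.id_apply] at e1 e2
  have hpK : ((p : 𝓞 K) : K) = (p : K) := by simp
  -- a prime above p
  obtain ⟨v0, hv0⟩ : ∃ v0 : HeightOneSpectrum (𝓞 K), (p : 𝓞 K) ∈ v0.asIdeal := by
    by_contra hno
    push Not at hno
    have h1 := hrad 1 (fun v hv => absurd hv (hno v))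
    apply hN
    have := norm_congr p (s ^ 2 + 1) 0 (by simpa using Ideal.mul_mem_left _ (s ^ 2 + 1) h1)
    rw [this]
    have : Nontrivial (𝓞 K) := inferInstance
    rw [Algebra.norm_zero]; simp
  have hvp : ∀ v : HeightOneSpectrum (𝓞 K), v.valuation K (p : K) ≠ 0 := by
    intro v
    rw [Valuation.ne_zero_iff, ← hpK]
    simpa using hp0
  have hvp2 : ∀ v : HeightOneSpectrum (𝓞 K), (p : 𝓞 K) ∈ v.asIdeal → ∀ g, v.valuation K (p : K) ≠ g ^ 2 := by
    intro v hv g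
    rw [← hpK]
    exact val_p v _ hv (hunr v hv) g
  obtain ⟨hu, hw, huw⟩ := ram_zero (v0.valuation K) _ _ _ u w x y z (hvp v0) (hvp2 v0 hv0)
    ((val_one v0 c).mpr (hcc v0 hv0)) ((val_one v0 d).mpr (hdd v0 hv0)) hne e1 e2
  set r := u / w with hr
  have hr0 : r ≠ 0 := div_ne_zero hu hw
  have hr1 : r + 1 ≠ 0 := by
    rw [hr, div_add_one hw]; exact div_ne_zero huw hw
  have f1 : r = (x / w) ^ 2 - (p : K) * (y / w) ^ 2 := by
    rw [hr]; field_simp; linear_combination e1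
  have f2 : (r + 1) * ((c : K) * r + d) = (x / w) ^ 2 - (p : K) * (z / w) ^ 2 := by
    rw [hr]; field_simp; linear_combination e2
  have hram : ∀ v : HeightOneSpectrum (𝓞 K), (p : 𝓞 K) ∈ v.asIdeal → v.valuation K r = 1 ∧ v.valuation K (r - (s : K) ^ 2) < 1 := by
    intro v hv
    refine ram_main (v.valuation K) (p : K) c d s t r (x / w) (y / w) (z / w) (hvp v) (hvp2 v hv)
      ((val_one v c).mpr (hcc v hv)) ((val_one v d).mpr (hdd v hv)) (nonsq_approx v t (ht v hv)) hr0 ?_ ?_ f1 f2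
    · have := (val_lt v _).mpr (hsub v hv h1)
      simpa using this
    · have := (val_lt v _).mpr (hsub v hv h3)
      simpa using this
  -- denominators
  obtain ⟨β, a, hβ, hβa⟩ : ∃ β a : 𝓞 K, β - 1 ∈ Ideal.span {(p : 𝓞 K)} ∧ (a : K) = β * r := by
    let I : Ideal (𝓞 K) :=
      { carrier := {b | ∃ a : 𝓞 K, (a : K) = b * r}
        zero_mem' := ⟨0, by simp⟩
        add_mem' := by
          rintro b b' ⟨a, ha⟩ ⟨a', ha'⟩
          exact ⟨a + a', by rw [c_add, c_add, ha, ha']; ring⟩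
        smul_mem' := by
          rintro k b ⟨a, ha⟩
          exact ⟨k * a, by rw [smul_eq_mul, c_mul, c_mul, ha]; ring⟩ }
    have htop : I ⊔ Ideal.span {(p : 𝓞 K)} = ⊤ := by
      by_contra hcon
      obtain ⟨m, hm, hle⟩ := Ideal.exists_le_maximal _ hcon
      have hpm : (p : 𝓞 K) ∈ m := hle (Ideal.mem_sup_right (Ideal.mem_span_singleton_self _))
      let v : HeightOneSpectrum (𝓞 K) := ⟨m, hm.isPrime, by
        rintro rfl
        exact hp0 (by simpa using hpm)⟩
      obtain ⟨n, b, hb⟩ := v.exists_primeCompl_mul_eq_of_integer r (hram v hpm).1.le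
      apply b.2
      exact hle (Ideal.mem_sup_left (show (b : 𝓞 K) ∈ I from ⟨n, by rw [mul_comm]; exact hb.symm⟩))
    have h1 : (1 : 𝓞 K) ∈ I ⊔ Ideal.span {(p : 𝓞 K)} := by rw [htop]; trivial
    obtain ⟨β, ⟨a, ha⟩, k, hk, hsum⟩ := Submodule.mem_sup.mp h1
    refine ⟨β, a, ?_, ha⟩
    rw [← hsum, sub_add_cancel_left]
    exact neg_mem hk
  have hβv : ∀ v : HeightOneSpectrum (𝓞 K), (p : 𝓞 K) ∈ v.asIdeal → v.valuation K ((β : K) - 1) < 1 := by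
    intro v hv
    have := (val_lt v _).mpr (hsub v hv hβ)
    simpa using this
  have hβ0 : β ≠ 0 := by
    rintro rfl
    have := hβv v0 hv0
    simp at this
  have has : a - s ^ 2 ∈ Ideal.span {(p : 𝓞 K)} := by
    apply hrad
    intro v hv
    rw [← val_lt]
    rw [c_sub, c_pow, hβa, show (β : K) * r - (s : K) ^ 2 = β * (r - (s : K) ^ 2) + ((β : K) - 1) * (s : K) ^ 2 by ring]
    refine (Valuation.map_add _ _ _).trans_lt (max_lt ?_ ?_)
    · rw [map_mul]
      exact lt_of_le_of_lt (mul_le_of_le_one_left' (val_le v β)) (hram v hv).2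
    · rw [map_mul]
      refine lt_of_le_of_lt (mul_le_of_le_one_right' ?_) (hβv v hv)
      have := val_le v (s ^ 2)
      simpa using this
  have hGK : ((a * (a + β) : 𝓞 K) : K) = (β : K) ^ 2 * (r * (r + 1)) := by
    rw [c_mul, c_add, hβa]; ring
  have hG0 : a * (a + β) ≠ 0 := by
    intro h
    rw [h] at hGK
    have hβK : (β : K) ≠ 0 := by simpa using hβ0
    have : (β : K) ^ 2 * (r * (r + 1)) ≠ 0 := mul_ne_zero (pow_ne_zero _ hβK) (mul_ne_zero hr0 hr1)
    exact this (by rw [← hGK]; simp)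
  have hsq := norm_isSquare p hp8 (a * (a + β)) hG0 (by
    intro v
    by_cases hv : (2 : 𝓞 K) ∈ v.asIdeal ∨ ∃ x : 𝓞 K, x ^ 2 - p ∈ v.asIdeal
    · exact Or.inl hv
    · right
      push Not at hv
      have hpv : (p : 𝓞 K) ∉ v.asIdeal := by
        intro h
        apply hv.2 0
        simpa using h
      obtain ⟨g, hg⟩ := inert_even (v.valuation K) (p : K) c d r (x / w) (y / w) (z / w)
        (by rw [← hpK]; exact (val_one v _).mpr hpv)
        (by rw [← hpK]; exact inert_hn v p hpv hv.2) (val_le v c) (val_le v d) f1 f2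
      refine ⟨v.valuation K (β : K) * g, ?_⟩
      rw [hGK, map_mul, hg, map_pow, mul_pow])
  have hcong := norm_congr p (a * (a + β)) (s ^ 2 * (s ^ 2 + 1)) (by
    rw [show a * (a + β) - s ^ 2 * (s ^ 2 + 1) = (a + s ^ 2 + 1) * (a - s ^ 2) + a * (β - 1) by ring]
    exact Ideal.add_mem _ (Ideal.mul_mem_left _ _ has) (Ideal.mul_mem_left _ _ hβ))
  rw [hcong, map_mul, map_pow] at hsq
  push_cast at hsq
  obtain ⟨s', hs'⟩ := hs
  have hNs := norm_congr p (s * s') 1 hs'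
  rw [map_mul, map_one] at hNs
  push_cast at hNs
  have hNs0 : ((Algebra.norm ℤ s : ℤ) : ZMod p) ≠ 0 := left_ne_zero_of_mul_eq_one hNs
  apply hN
  obtain ⟨e, he⟩ := hsq
  refine ⟨e / ((Algebra.norm ℤ s : ℤ) : ZMod p), ?_⟩
  field_simp
  linear_combination he

end NoPoint
end HasseDense

namespace HasseDense

section ChooseP
variable [NumberField K]

lemma int_in_prime (v : HeightOneSpectrum (𝓞 K)) (p : ℕ) [hp : Fact p.Prime]
    (hv : (p : 𝓞 K) ∈ v.asIdeal) (n : ℤ) (hn : (n : 𝓞 K) ∈ v.asIdeal) : (p : ℤ) ∣ n := by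
  by_contra hnd
  have hcop : IsCoprime (p : ℤ) n :=
    (Int.prime_iff_natAbs_prime.mpr (by simpa using hp.out)).coprime_iff_not_dvd.mpr hnd
  obtain ⟨a, b, hab⟩ := hcop
  apply v.isPrime.ne_top
  rw [Ideal.eq_top_iff_one]
  have : (1 : 𝓞 K) = (a : 𝓞 K) * p + (b : 𝓞 K) * n := by
    have := congrArg (Int.cast : ℤ → 𝓞 K) hab
    push_cast at this
    exact this.symm
  rw [this]
  exact add_mem (Ideal.mul_mem_left _ _ hv) (Ideal.mul_mem_left _ _ hn)

lemma nat_notin (v : HeightOneSpectrum (𝓞 K)) (p : ℕ) [hp : Fact p.Prime]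
    (hv : (p : 𝓞 K) ∈ v.asIdeal) (n : ℕ) (h0 : 0 < n) (hn : n < p) : (n : 𝓞 K) ∉ v.asIdeal := by
  intro h
  have := int_in_prime v p hv n (by exact_mod_cast h)
  have := Int.le_of_dvd (by exact_mod_cast h0) this
  omega

lemma unram (p : ℕ) [hp : Fact p.Prime] (hpd : (discr K).natAbs < p)
    (v : HeightOneSpectrum (𝓞 K)) (hv : (p : 𝓞 K) ∈ v.asIdeal) :
    (p : 𝓞 K) ∉ v.asIdeal ^ 2 := by
  intro h
  have hd : differentIdeal ℤ (𝓞 K) ≤ v.asIdeal := by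
    have := pow_sub_one_dvd_differentIdeal ℤ v.asIdeal 2 (p := Ideal.span {(p : ℤ)})
      (by simpa using hp.out.ne_zero)
      (by
        rw [Ideal.dvd_iff_le, Ideal.map_span, Ideal.span_le]
        simpa using h)
    simpa using Ideal.le_of_dvd this
  have h2 := hd (discr_mem_differentIdeal K (𝓞 K))
  have h3 := int_in_prime v p hv _ h2
  have h4 := Int.natAbs_dvd_natAbs.mpr h3
  have h5 := Nat.le_of_dvd (Int.natAbs_pos.mpr (discr_ne_zero K)) h4
  simp at h5
  omega

lemma p_ne (p : ℕ) [hp : Fact p.Prime] : (p : 𝓞 K) ≠ 0 := by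
  exact_mod_cast hp.out.ne_zero

lemma mem_prime_above (p : ℕ) [hp : Fact p.Prime] (I : Ideal (𝓞 K)) (hI : I ≠ ⊤)
    (hpI : (p : 𝓞 K) ∈ I) : ∃ v : HeightOneSpectrum (𝓞 K), I ≤ v.asIdeal ∧ (p : 𝓞 K) ∈ v.asIdeal := by
  obtain ⟨m, hm, hIm⟩ := Ideal.exists_le_maximal I hI
  refine ⟨⟨m, hm.isPrime, ?_⟩, hIm, hIm hpI⟩
  rintro rfl
  have := hIm hpI
  exact p_ne p ((Submodule.mem_bot _).mp this)

lemma rad_of_unr (p : ℕ) [hp : Fact p.Prime]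
    (hunr : ∀ v : HeightOneSpectrum (𝓞 K), (p : 𝓞 K) ∈ v.asIdeal → (p : 𝓞 K) ∉ v.asIdeal ^ 2)
    (x : 𝓞 K) (hx : ∀ v : HeightOneSpectrum (𝓞 K), (p : 𝓞 K) ∈ v.asIdeal → x ∈ v.asIdeal) :
    x ∈ Ideal.span {(p : 𝓞 K)} := by
  have hsq : Squarefree (Ideal.span {(p : 𝓞 K)}) := by
    intro J hJ
    by_contra hJu
    rw [Ideal.isUnit_iff] at hJu
    have hle := Ideal.le_of_dvd hJ
    have hpJ : (p : 𝓞 K) ∈ J * J := hle (Ideal.mem_span_singleton_self _)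
    obtain ⟨v, hv, hpv⟩ := mem_prime_above p J hJu (Ideal.mul_le_left hpJ)
    apply hunr v hpv
    rw [pow_two]
    exact Ideal.mul_mono hv hv hpJ
  have hrad : (Ideal.span {(p : 𝓞 K)}).IsRadical := by
    intro y hy
    obtain ⟨n, hn⟩ := hy
    have h1 : Ideal.span {(p : 𝓞 K)} ∣ (Ideal.span {y}) ^ n := by
      rw [Ideal.dvd_iff_le, Ideal.span_singleton_pow, Ideal.span_singleton_le_iff_mem]
      exact hn
    have := hsq.isRadical n _ h1
    rw [Ideal.dvd_iff_le, Ideal.span_singleton_le_iff_mem] at this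
    exact this
  rw [← hrad.radical, Ideal.radical_eq_sInf, Submodule.mem_sInf]
  rintro P ⟨hP1, hP2⟩
  have hpP : (p : 𝓞 K) ∈ P := hP1 (Ideal.mem_span_singleton_self _)
  exact hx ⟨P, hP2, by rintro rfl; exact p_ne p ((Submodule.mem_bot _).mp hpP)⟩ hpP

lemma inv_mod (p : ℕ) [hp : Fact p.Prime] (x : 𝓞 K)
    (hx : ∀ v : HeightOneSpectrum (𝓞 K), (p : 𝓞 K) ∈ v.asIdeal → x ∉ v.asIdeal) :
    ∃ y : 𝓞 K, x * y - 1 ∈ Ideal.span {(p : 𝓞 K)} := by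
  have htop : Ideal.span {x, (p : 𝓞 K)} = ⊤ := by
    by_contra hne
    obtain ⟨v, hv, hpv⟩ := mem_prime_above p _ hne (Ideal.subset_span (by simp))
    exact hx v hpv (hv (Ideal.subset_span (by simp)))
  have h1 : (1 : 𝓞 K) ∈ Ideal.span {x, (p : 𝓞 K)} := by rw [htop]; trivial
  obtain ⟨a, b, hab⟩ := Ideal.mem_span_pair.mp h1
  refine ⟨a, Ideal.mem_span_singleton.mpr ⟨-b, ?_⟩⟩
  linear_combination hab

lemma crt_p (p : ℕ) [hp : Fact p.Prime] (f : HeightOneSpectrum (𝓞 K) → 𝓞 K) :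
    ∃ x : 𝓞 K, ∀ v : HeightOneSpectrum (𝓞 K), (p : 𝓞 K) ∈ v.asIdeal → x - f v ∈ v.asIdeal := by
  have hfin : {v : HeightOneSpectrum (𝓞 K) | v.asIdeal ∣ Ideal.span {(p : 𝓞 K)}}.Finite :=
    Ideal.finite_factors (by simpa using hp.out.ne_zero)
  obtain ⟨y, hy⟩ := IsDedekindDomain.exists_forall_sub_mem_ideal (s := hfin.toFinset)
    (fun v : HeightOneSpectrum (𝓞 K) => v.asIdeal) (fun _ => 1) (fun v _ => v.prime)
    (fun v _ w _ hvw h => hvw (HeightOneSpectrum.ext h)) (fun v => f v.1)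
  refine ⟨y, fun v hv => ?_⟩
  have := hy v (by
    rw [Set.Finite.mem_toFinset]
    change v.asIdeal ∣ _
    rw [Ideal.dvd_iff_le, Ideal.span_singleton_le_iff_mem]
    exact hv)
  simpa using this

lemma span_le_v (p : ℕ) (v : HeightOneSpectrum (𝓞 K)) (hv : (p : 𝓞 K) ∈ v.asIdeal) {x : 𝓞 K}
    (hx : x ∈ Ideal.span {(p : 𝓞 K)}) : x ∈ v.asIdeal :=
  (Ideal.span_singleton_le_iff_mem _).mpr hv hx

lemma exists_t (p : ℕ) [hp : Fact p.Prime] (hp2 : 2 < p) :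
    ∃ t : 𝓞 K, ∀ v : HeightOneSpectrum (𝓞 K), (p : 𝓞 K) ∈ v.asIdeal →
      ∀ x : 𝓞 K, x ^ 2 - t ∉ v.asIdeal := by
  have key : ∀ v : HeightOneSpectrum (𝓞 K), ∃ t : 𝓞 K, (p : 𝓞 K) ∈ v.asIdeal →
      ∀ x : 𝓞 K, x ^ 2 - t ∉ v.asIdeal := by
    intro v
    by_cases hv : (p : 𝓞 K) ∈ v.asIdeal
    · have := v.isMaximal
      letI : Field (𝓞 K ⧸ v.asIdeal) := Ideal.Quotient.field _
      haveI : Finite (𝓞 K ⧸ v.asIdeal) := Ideal.finiteQuotientOfFreeOfNeBot _ v.ne_bot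
      have h2 : ringChar (𝓞 K ⧸ v.asIdeal) ≠ 2 := by
        intro h
        have h3 : ((2 : ℕ) : 𝓞 K ⧸ v.asIdeal) = 0 := by rw [← h]; exact ringChar.Nat.cast_ringChar
        apply nat_notin v p hv 2 (by norm_num) hp2
        rw [← Ideal.Quotient.eq_zero_iff_mem]
        rw [map_natCast]
        exact h3
      obtain ⟨a, ha⟩ := FiniteField.exists_nonsquare h2
      obtain ⟨t, rfl⟩ := Ideal.Quotient.mk_surjective a
      refine ⟨t, fun _ x hx => ha ⟨Ideal.Quotient.mk _ x, ?_⟩⟩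
      rw [← map_mul, eq_comm, Ideal.Quotient.eq, ← pow_two]
      exact hx
    · exact ⟨0, fun h => absurd h hv⟩
  choose f hf using key
  obtain ⟨t, ht⟩ := crt_p p f
  refine ⟨t, fun v hv x hx => hf v hv x ?_⟩
  have := add_mem hx (ht v hv)
  convert this using 1
  ring

end ChooseP
end HasseDense

namespace HasseDense

lemma det_of_ker_id {F V k : Type*} [Field F] [AddCommGroup V] [Module F V] [Module.Finite F V]
    [AddCommGroup k] [Module F k] (π : V →ₗ[F] k) (hπ : Function.Surjective π)
    (f : V →ₗ[F] V) (g : k →ₗ[F] k) (hfg : ∀ x, π (f x) = g (π x))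
    (hid : ∀ x, π x = 0 → f x = x) : LinearMap.det f = LinearMap.det g := by
  have he : LinearMap.ker π ≤ (LinearMap.ker π).comap f := by
    intro x hx
    rw [LinearMap.mem_ker] at hx
    rw [Submodule.mem_comap, LinearMap.mem_ker, hfg, hx, map_zero]
  have hr : f.restrict he = LinearMap.id := by
    ext x
    have := hid x.1 (LinearMap.mem_ker.mp x.2)
    simpa using this
  rw [LinearMap.det_eq_det_mul_det (LinearMap.ker π) f he, hr, LinearMap.det_id, one_mul]
  let e := π.quotKerEquivOfSurjective hπ
  rw [← LinearMap.det_conj _ e]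
  congr 1
  ext y
  obtain ⟨x, rfl⟩ := hπ y
  have : e.symm (π x) = (LinearMap.ker π).mkQ x := by
    rw [LinearEquiv.symm_apply_eq]; rfl
  simp only [LinearMap.comp_apply, LinearEquiv.coe_coe, this]
  rw [Submodule.mkQ_apply, Submodule.mapQ_apply, ← hfg]
  rfl

section NonSq
variable [NumberField K]

lemma exists_above (p : ℕ) [hp : Fact p.Prime] :
    ∃ v : HeightOneSpectrum (𝓞 K), (p : 𝓞 K) ∈ v.asIdeal := by
  have : Ideal.span {(p : 𝓞 K)} ≠ ⊤ := by
    intro h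
    have h1 : (1 : 𝓞 K) ∈ Ideal.span {(p : 𝓞 K)} := by rw [h]; trivial
    obtain ⟨y, hy⟩ := Ideal.mem_span_singleton.mp h1
    have h2 := congrArg (Algebra.norm ℤ) hy
    rw [map_one, map_mul] at h2
    have h3 : Algebra.norm ℤ (p : 𝓞 K) = (p : ℤ) ^ Module.finrank ℤ (𝓞 K) := by
      have := Algebra.norm_algebraMap_of_basis (RingOfIntegers.basis K) (p : ℤ)
      rw [Module.finrank_eq_card_basis (RingOfIntegers.basis K), ← this]
      simp
    rw [h3] at h2
    have h4 : IsUnit ((p : ℤ) ^ Module.finrank ℤ (𝓞 K)) := IsUnit.of_mul_eq_one _ h2.symm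
    have h5 : Module.finrank ℤ (𝓞 K) ≠ 0 := by
      rw [RingOfIntegers.rank]; exact Module.finrank_pos.ne'
    rw [isUnit_pow_iff h5] at h4
    exact (Nat.prime_iff_prime_int.mp hp.out).not_isUnit h4
  obtain ⟨v, _, hv⟩ := mem_prime_above p _ this (Ideal.mem_span_singleton_self _)
  exact ⟨v, hv⟩

lemma norm_eq_quot (p : ℕ) [hp : Fact p.Prime] (v : HeightOneSpectrum (𝓞 K))
    [Algebra (ZMod p) (𝓞 K ⧸ v.asIdeal)] (w : 𝓞 K)
    (hw : ∀ x ∈ v.asIdeal, (w - 1) * x ∈ Ideal.span {(p : 𝓞 K)}) :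
    ((Algebra.norm ℤ w : ℤ) : ZMod p)
      = Algebra.norm (ZMod p) (Ideal.Quotient.mk v.asIdeal w) := by
  let π : TensorProduct ℤ (ZMod p) (𝓞 K) →ₐ[ZMod p] (𝓞 K ⧸ v.asIdeal) :=
    Algebra.TensorProduct.lift (Algebra.ofId (ZMod p) (𝓞 K ⧸ v.asIdeal))
      (Ideal.Quotient.mkₐ ℤ v.asIdeal) (fun _ _ => mul_comm _ _)
  have hπ : ∀ x : 𝓞 K, π (1 ⊗ₜ[ℤ] x) = Ideal.Quotient.mk v.asIdeal x := by
    intro x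
    refine (Algebra.TensorProduct.lift_tmul _ _ _ (1 : ZMod p) x).trans ?_
    rw [map_one, one_mul]
    rfl
  have hall : ∀ y : TensorProduct ℤ (ZMod p) (𝓞 K), ∃ x : 𝓞 K, y = 1 ⊗ₜ[ℤ] x := by
    intro y
    induction y using TensorProduct.induction_on with
    | zero => exact ⟨0, by simp⟩
    | tmul z x =>
      obtain ⟨n, rfl⟩ := ZMod.intCast_surjective z
      refine ⟨n • x, ?_⟩
      rw [← TensorProduct.smul_tmul]
      simp
    | add a b ha hb =>
      obtain ⟨x, rfl⟩ := ha
      obtain ⟨y, rfl⟩ := hb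
      exact ⟨x + y, by rw [TensorProduct.tmul_add]⟩
  have hdet := det_of_ker_id π.toLinearMap
    (by
      intro y
      obtain ⟨x, rfl⟩ := Ideal.Quotient.mk_surjective y
      exact ⟨1 ⊗ₜ[ℤ] x, hπ x⟩)
    ((LinearMap.mulLeft ℤ w).baseChange (ZMod p))
    (LinearMap.mulLeft (ZMod p) (Ideal.Quotient.mk v.asIdeal w))
    (by
      intro y
      obtain ⟨x, rfl⟩ := hall y
      simp [hπ])
    (by
      intro y hy
      obtain ⟨x, rfl⟩ := hall y
      rw [AlgHom.toLinearMap_apply, hπ, Ideal.Quotient.eq_zero_iff_mem] at hy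
      obtain ⟨z, hz⟩ := Ideal.mem_span_singleton.mp (hw x hy)
      have h1 : w * x = x + (p : ℤ) • z := by
        rw [zsmul_eq_mul]; push_cast; linear_combination hz
      rw [LinearMap.baseChange_tmul, LinearMap.mulLeft_apply, h1, TensorProduct.tmul_add,
        ← TensorProduct.smul_tmul]
      simp)
  rw [LinearMap.det_baseChange] at hdet
  rw [Algebra.norm_apply, Algebra.norm_apply]
  exact hdet

lemma exists_w' (p : ℕ) [hp : Fact p.Prime] (hp2 : 2 < p)
    (hunr : ∀ v : HeightOneSpectrum (𝓞 K), (p : 𝓞 K) ∈ v.asIdeal → (p : 𝓞 K) ∉ v.asIdeal ^ 2) :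
    ∃ w : 𝓞 K, ¬ IsSquare ((Algebra.norm ℤ w : ℤ) : ZMod p) := by
  obtain ⟨v, hv⟩ := exists_above (K := K) p
  have := v.isMaximal
  let _ : Field (𝓞 K ⧸ v.asIdeal) := Ideal.Quotient.field _
  have : Finite (𝓞 K ⧸ v.asIdeal) := Ideal.finiteQuotientOfFreeOfNeBot _ v.ne_bot
  have hch : CharP (𝓞 K ⧸ v.asIdeal) p := by
    apply (CharP.charP_iff_prime_eq_zero hp.out).mpr
    rw [← map_natCast (Ideal.Quotient.mk v.asIdeal), Ideal.Quotient.eq_zero_iff_mem]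
    exact hv
  let _ : Algebra (ZMod p) (𝓞 K ⧸ v.asIdeal) := ZMod.algebra _ p
  obtain ⟨a, ha⟩ := FiniteField.exists_nonsquare (F := ZMod p) (by
    rw [ZMod.ringChar_zmod_n]; omega)
  obtain ⟨y, hy⟩ := FiniteField.norm_surjective (ZMod p) (𝓞 K ⧸ v.asIdeal) a
  obtain ⟨w0, rfl⟩ := Ideal.Quotient.mk_surjective y
  obtain ⟨J, hJ⟩ : v.asIdeal ∣ Ideal.span {(p : 𝓞 K)} := by
    rw [Ideal.dvd_iff_le, Ideal.span_singleton_le_iff_mem]; exact hv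
  have hcop : v.asIdeal ⊔ J = ⊤ := by
    by_contra hne
    have h1 := v.isMaximal.eq_of_le hne le_sup_left
    have h2 : J ≤ v.asIdeal := by rw [h1]; exact le_sup_right
    apply hunr v hv
    rw [pow_two]
    apply Ideal.mul_mono le_rfl h2
    rw [← hJ]
    exact Ideal.mem_span_singleton_self _
  obtain ⟨α, hα, β, hβ, hab⟩ := Submodule.mem_sup.mp
    (show (1 : 𝓞 K) ∈ v.asIdeal ⊔ J by rw [hcop]; trivial)
  refine ⟨w0 * β + α, ?_⟩
  rw [norm_eq_quot p v]
  · have : Ideal.Quotient.mk v.asIdeal (w0 * β + α) = Ideal.Quotient.mk v.asIdeal w0 := by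
      rw [Ideal.Quotient.eq]
      have : w0 * β + α - w0 = (1 - w0) * α := by linear_combination w0 * hab
      rw [this]
      exact Ideal.mul_mem_left _ _ hα
    rw [this, hy]
    exact ha
  · intro x hx
    have : (w0 * β + α - 1) * x = (w0 - 1) * (x * β) := by linear_combination x * hab
    rw [this]
    apply Ideal.mul_mem_left
    rw [hJ]
    exact Ideal.mul_mem_mul hx hβ

lemma notmem_of_norm (p : ℕ) [hp : Fact p.Prime] (w : 𝓞 K)
    (hw : ((Algebra.norm ℤ w : ℤ) : ZMod p) ≠ 0) (v : HeightOneSpectrum (𝓞 K))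
    (hv : (p : 𝓞 K) ∈ v.asIdeal) : w ∉ v.asIdeal := by
  intro h
  apply hw
  rw [ZMod.intCast_zmod_eq_zero_iff_dvd]
  have h1 := Ideal.absNorm_dvd_norm_of_mem h
  refine dvd_trans ?_ h1
  apply int_in_prime v p hv
  have := Ideal.absNorm_mem v.asIdeal
  exact_mod_cast this

end NonSq
end HasseDense

namespace HasseDense

section Params
variable [NumberField K]

lemma nonsq_mul (p : ℕ) [hp : Fact p.Prime] (w u : 𝓞 K)
    (hw : ¬ IsSquare ((Algebra.norm ℤ w : ℤ) : ZMod p))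
    (hu : ∀ v : HeightOneSpectrum (𝓞 K), (p : 𝓞 K) ∈ v.asIdeal → u ∉ v.asIdeal) :
    ¬ IsSquare ((Algebra.norm ℤ (w * u ^ 2) : ℤ) : ZMod p) := by
  obtain ⟨u', hu'⟩ := inv_mod p u hu
  have h1 := norm_congr p _ _ hu'
  rw [map_mul, map_one] at h1
  rw [map_mul, map_pow]
  push_cast at h1 ⊢
  rintro ⟨r, hr⟩
  apply hw
  refine ⟨r * ((Algebra.norm ℤ u' : ℤ) : ZMod p), ?_⟩
  set A := ((Algebra.norm ℤ w : ℤ) : ZMod p)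
  set B := ((Algebra.norm ℤ u : ℤ) : ZMod p)
  set C := ((Algebra.norm ℤ u' : ℤ) : ZMod p)
  linear_combination C ^ 2 * hr - A * (B * C + 1) * h1

lemma exists_s (p : ℕ) [hp : Fact p.Prime] (hp8 : p % 8 = 1)
    (hunr : ∀ v : HeightOneSpectrum (𝓞 K), (p : 𝓞 K) ∈ v.asIdeal → (p : 𝓞 K) ∉ v.asIdeal ^ 2) :
    ∃ j s : 𝓞 K, j ^ 2 + 1 ∈ Ideal.span {(p : 𝓞 K)} ∧
      (∀ v : HeightOneSpectrum (𝓞 K), (p : 𝓞 K) ∈ v.asIdeal → s ∉ v.asIdeal) ∧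
      (∀ v : HeightOneSpectrum (𝓞 K), (p : 𝓞 K) ∈ v.asIdeal → 1 + s ^ 2 ∉ v.asIdeal) ∧
      ¬ IsSquare ((Algebra.norm ℤ (s ^ 2 + 1) : ℤ) : ZMod p) := by
  have hp17 : 8 < p := by
    have := hp.out.two_le
    rcases Nat.lt_or_ge 8 p with h | h
    · exact h
    · interval_cases p <;> omega
  obtain ⟨w, hw⟩ := exists_w' (K := K) p (by omega) hunr
  have hw0 : ∀ v : HeightOneSpectrum (𝓞 K), (p : 𝓞 K) ∈ v.asIdeal → w ∉ v.asIdeal :=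
    notmem_of_norm p w (fun h => hw (by rw [h]; exact IsSquare.zero))
  have key : ∀ v : HeightOneSpectrum (𝓞 K), ∃ e : 𝓞 K, (p : 𝓞 K) ∈ v.asIdeal →
      e ∉ v.asIdeal ∧ w * e ^ 2 - 1 ∉ v.asIdeal ∧ w * e ^ 2 + 1 ∉ v.asIdeal := by
    intro v
    by_contra! hcon
    obtain ⟨hv, h1⟩ := hcon 1
    obtain ⟨-, h2⟩ := hcon 2
    have n1 : (1 : 𝓞 K) ∉ v.asIdeal := by
      have := nat_notin v p hv 1 (by omega) (by omega); exact_mod_cast this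
    have n2 : (2 : 𝓞 K) ∉ v.asIdeal := by
      have := nat_notin v p hv 2 (by omega) (by omega); exact_mod_cast this
    have n3 : (3 : 𝓞 K) ∉ v.asIdeal := by
      have := nat_notin v p hv 3 (by omega) (by omega); exact_mod_cast this
    have n5 : (5 : 𝓞 K) ∉ v.asIdeal := by
      have := nat_notin v p hv 5 (by omega) (by omega); exact_mod_cast this
    have h1 := h1 n1
    have h2 := h2 n2
    by_cases a1 : w * 1 ^ 2 - 1 ∈ v.asIdeal
    · by_cases a2 : w * 2 ^ 2 - 1 ∈ v.asIdeal
      · apply n3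
        convert sub_mem a2 (Ideal.mul_mem_left _ 4 a1) using 1; ring
      · apply n5
        convert sub_mem (h2 a2) (Ideal.mul_mem_left _ 4 a1) using 1; ring
    · by_cases a2 : w * 2 ^ 2 - 1 ∈ v.asIdeal
      · apply n5
        convert sub_mem (Ideal.mul_mem_left _ 4 (h1 a1)) a2 using 1; ring
      · apply n3
        convert sub_mem (Ideal.mul_mem_left _ 4 (h1 a1)) (h2 a2) using 1; ring
  choose f hf using key
  obtain ⟨e, he⟩ := crt_p p f
  have he0 : ∀ v : HeightOneSpectrum (𝓞 K), (p : 𝓞 K) ∈ v.asIdeal → e ∉ v.asIdeal := by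
    intro v hv h
    apply (hf v hv).1
    convert sub_mem h (he v hv) using 1; ring
  have hm : ∀ v : HeightOneSpectrum (𝓞 K), (p : 𝓞 K) ∈ v.asIdeal →
      w * e ^ 2 - 1 ∉ v.asIdeal := by
    intro v hv h
    apply (hf v hv).2.1
    convert sub_mem h (Ideal.mul_mem_left _ (w * (e + f v)) (he v hv)) using 1; ring
  have hq : ∀ v : HeightOneSpectrum (𝓞 K), (p : 𝓞 K) ∈ v.asIdeal →
      w * e ^ 2 + 1 ∉ v.asIdeal := by
    intro v hv h
    apply (hf v hv).2.2
    convert sub_mem h (Ideal.mul_mem_left _ (w * (e + f v)) (he v hv)) using 1; ring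
  obtain ⟨m, hmm⟩ := inv_mod p _ hm
  obtain ⟨j, hj⟩ : ∃ j : 𝓞 K, j ^ 2 + 1 ∈ Ideal.span {(p : 𝓞 K)} := by
    obtain ⟨r, hr⟩ := (ZMod.exists_sq_eq_neg_one_iff (p := p)).mpr (by omega)
    obtain ⟨n, rfl⟩ := ZMod.intCast_surjective r
    have h1 : ((n ^ 2 + 1 : ℤ) : ZMod p) = 0 := by
      push_cast; linear_combination -hr
    rw [ZMod.intCast_zmod_eq_zero_iff_dvd] at h1
    obtain ⟨k, hk⟩ := h1
    refine ⟨n, Ideal.mem_span_singleton.mpr ⟨k, ?_⟩⟩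
    exact_mod_cast congrArg (Int.cast : ℤ → 𝓞 K) hk
  have n1 : ∀ v : HeightOneSpectrum (𝓞 K), (1 : 𝓞 K) ∉ v.asIdeal :=
    fun v h => v.isPrime.ne_top ((Ideal.eq_top_iff_one _).mpr h)
  have hj0 : ∀ v : HeightOneSpectrum (𝓞 K), (p : 𝓞 K) ∈ v.asIdeal → j ∉ v.asIdeal := by
    intro v hv h
    apply n1 v
    convert sub_mem (span_le_v p v hv hj) (Ideal.mul_mem_left _ j h) using 1; ring
  have hm0 : ∀ v : HeightOneSpectrum (𝓞 K), (p : 𝓞 K) ∈ v.asIdeal → m ∉ v.asIdeal := by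
    intro v hv h
    apply n1 v
    convert sub_mem (Ideal.mul_mem_left _ (w * e ^ 2 - 1) h) (span_le_v p v hv hmm) using 1; ring
  have hu0 : ∀ v : HeightOneSpectrum (𝓞 K), (p : 𝓞 K) ∈ v.asIdeal →
      2 * j * m * e ∉ v.asIdeal := by
    intro v hv h
    have n2 : (2 : 𝓞 K) ∉ v.asIdeal := by
      have := nat_notin v p hv 2 (by omega) (by omega); exact_mod_cast this
    rcases v.isPrime.mem_or_mem h with h | h
    · rcases v.isPrime.mem_or_mem h with h | h
      · rcases v.isPrime.mem_or_mem h with h | h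
        · exact n2 h
        · exact hj0 v hv h
      · exact hm0 v hv h
    · exact he0 v hv h
  have hcong : ((j * (w * e ^ 2 + 1) * m) ^ 2 + 1) - w * (2 * j * m * e) ^ 2
      ∈ Ideal.span {(p : 𝓞 K)} := by
    have h1 := Ideal.mul_mem_left _ ((w * e ^ 2 - 1) ^ 2 * m ^ 2) hj
    have h2 := Ideal.mul_mem_left _ ((w * e ^ 2 - 1) * m + 1) hmm
    convert sub_mem h1 h2 using 1; ring
  refine ⟨j, j * (w * e ^ 2 + 1) * m, hj, ?_, ?_, ?_⟩
  · intro v hv h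
    rcases v.isPrime.mem_or_mem h with h | h
    · rcases v.isPrime.mem_or_mem h with h | h
      · exact hj0 v hv h
      · exact hq v hv h
    · exact hm0 v hv h
  · intro v hv h
    have h1 : w * (2 * j * m * e) ^ 2 ∈ v.asIdeal := by
      convert sub_mem h (span_le_v p v hv hcong) using 1; ring
    rcases v.isPrime.mem_or_mem h1 with h | h
    · exact hw0 v hv h
    · exact hu0 v hv (v.isPrime.mem_of_pow_mem _ h)
  · rw [norm_congr p _ _ hcong]
    exact nonsq_mul p w _ hw hu0

def Good (p : ℕ) (s t c d : 𝓞 K) : Prop :=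
  c ≠ 0 ∧ d ≠ 0 ∧ c ≠ d ∧ (c + d - 1) ^ 2 - 4 * c * d ≠ 0 ∧
    (∀ v : HeightOneSpectrum (𝓞 K), ¬ (c ∈ v.asIdeal ∧ d ∈ v.asIdeal)) ∧
    c * ((1 + s ^ 2) * (1 + t)) - 1 ∈ Ideal.span {(p : 𝓞 K)} ∧
    d - c * s ^ 2 * t ∈ Ideal.span {(p : 𝓞 K)}

lemma good_infinite (p : ℕ) [hp : Fact p.Prime] (s t c0 : 𝓞 K)
    (h0 : c0 * ((1 + s ^ 2) * (1 + t)) - 1 ∈ Ideal.span {(p : 𝓞 K)}) :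
    {a : K | {b : K | ∃ c d : 𝓞 K, (c : K) = a ∧ (d : K) = b ∧ Good p s t c d}.Infinite}.Infinite := by
  have hcoe : Function.Injective (fun x : 𝓞 K => (x : K)) := RingOfIntegers.coe_injective
  have hpp : (p : 𝓞 K) ≠ 0 := p_ne p
  suffices h : ∀ n : ℕ,
      {b : K | ∃ c d : 𝓞 K, (c : K) = ((c0 + p * n : 𝓞 K) : K) ∧ (d : K) = b ∧
        Good p s t c d}.Infinite by
    refine Set.infinite_of_injective_forall_mem
      (f := fun n : ℕ => ((c0 + p * n : 𝓞 K) : K)) ?_ h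
    intro a b hab
    have h1 := hcoe hab
    simp only [add_right_inj] at h1
    exact_mod_cast mul_left_cancel₀ hpp h1
  intro n
  set c := c0 + p * (n : 𝓞 K) with hc
  obtain ⟨z, hz⟩ : ∃ z, c * ((1 + s ^ 2) * (1 + t)) - 1 = p * z := by
    obtain ⟨z, hz⟩ := Ideal.mem_span_singleton.mp h0
    exact ⟨z + n * ((1 + s ^ 2) * (1 + t)), by rw [hc]; linear_combination hz⟩
  have hc0 : c ≠ 0 := by
    intro h
    rw [h] at hz
    obtain ⟨v, hv⟩ := exists_above (K := K) p
    apply v.isPrime.ne_top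
    rw [Ideal.eq_top_iff_one]
    have : (1 : 𝓞 K) = -z * p := by linear_combination -hz
    rw [this]
    exact Ideal.mul_mem_left _ _ hv
  let D : ℕ → 𝓞 K := fun k =>
    1 + (c * s ^ 2 * t - 1) * (c * ((1 + s ^ 2) * (1 + t))) + k * (c * p)
  have hD : Function.Injective D := by
    intro a b hab
    simp only [D, add_right_inj] at hab
    exact_mod_cast mul_right_cancel₀ (mul_ne_zero hc0 hpp) hab
  have hfin : {d : 𝓞 K | (d - (c + 1)) ^ 2 = 4 * c}.Finite := by
    by_cases hex : ∃ d0 : 𝓞 K, (d0 - (c + 1)) ^ 2 = 4 * c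
    · obtain ⟨d0, hd0⟩ := hex
      apply (Set.toFinite {d0, 2 * (c + 1) - d0}).subset
      intro d hd
      have hd : (d - (c + 1)) ^ 2 = 4 * c := hd
      rw [← hd0, sq_eq_sq_iff_eq_or_eq_neg] at hd
      rcases hd with h | h
      · left; linear_combination h
      · right
        change d = 2 * (c + 1) - d0
        linear_combination h
    · convert Set.finite_empty
      ext d
      simp only [Set.mem_empty_iff_false, iff_false]
      exact fun h => hex ⟨d, h⟩
  have hbad : ({0, c} ∪ {d : 𝓞 K | (d - (c + 1)) ^ 2 = 4 * c}).Finite :=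
    (Set.toFinite _).union hfin
  have hinf := ((Set.infinite_range_of_injective hD).sdiff hbad).image
    (f := fun x : 𝓞 K => (x : K)) hcoe.injOn
  refine hinf.mono ?_
  rintro _ ⟨d, ⟨⟨k, hk⟩, hnb⟩, rfl⟩
  simp only [Set.mem_union, not_or] at hnb
  obtain ⟨hnb1, hnb2⟩ := hnb
  refine ⟨c, d, rfl, rfl, hc0, ?_, ?_, ?_, ?_, Ideal.mem_span_singleton.mpr ⟨z, hz⟩, ?_⟩
  · rintro rfl; exact hnb1 (by simp)
  · rintro h; exact hnb1 (by simp [h])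
  · intro h
    apply hnb2
    change (d - (c + 1)) ^ 2 = 4 * c
    linear_combination h
  · rintro v ⟨h1, h2⟩
    apply v.isPrime.ne_top
    rw [Ideal.eq_top_iff_one]
    have : (1 : 𝓞 K) = d -
      ((c * s ^ 2 * t - 1) * ((1 + s ^ 2) * (1 + t)) + k * p) * c := by
      rw [← hk]; simp only [D]; ring
    rw [this]
    exact sub_mem h2 (Ideal.mul_mem_left _ _ h1)
  · refine Ideal.mem_span_singleton.mpr ⟨(c * s ^ 2 * t - 1) * z + k * c, ?_⟩
    rw [← hk]; simp only [D]
    linear_combination (c * s ^ 2 * t - 1) * hz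

end Params
end HasseDense

/-- Theorem 1/2: over every number field `K`, the degree four del Pezzo surfaces
violating the Hasse principle are Zariski dense in the space of pairs of quinary
quadratic forms: every polynomial in the 30 coefficients vanishing on all Hasse
counterexamples is zero. -/
theorem hasse_counterexamples_zariski_dense
    (K : Type*) [Field K] [NumberField K]
    (P : MvPolynomial (Fin 2 × QIdx) K)
    (hP : ∀ c : Fin 2 → QIdx → K, IsHasseCounterexample c →
      MvPolynomial.eval (fun q => c q.1 q.2) P = 0) :
    P = 0 := by
  obtain ⟨p, hpp, hpgt, hpmod⟩ :=
    Nat.exists_prime_gt_modEq_one (k := 8) (discr K).natAbs (by norm_num)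
  have hp : Fact p.Prime := ⟨hpp⟩
  have hp8 : p % 8 = 1 := hpmod
  have hp2 : 2 < p := by have := hpp.two_le; omega
  have hunr := HasseDense.unram (K := K) p hpgt
  have hrad := HasseDense.rad_of_unr (K := K) p hunr
  obtain ⟨t, ht⟩ := HasseDense.exists_t (K := K) p hp2
  obtain ⟨j, s, hj, hs, hs1, hN⟩ := HasseDense.exists_s (K := K) p hp8 hunr
  obtain ⟨c0, h0⟩ := HasseDense.inv_mod p ((1 + s ^ 2) * (1 + t)) (by
    intro v hv h
    rcases v.isPrime.mem_or_mem h with h | h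
    · exact hs1 v hv h
    · apply ht v hv j
      convert sub_mem (HasseDense.span_le_v p v hv hj) h using 1
      ring)
  rw [mul_comm] at h0
  refine HasseDense.density (p : K) (by exact_mod_cast hpp.ne_zero) _
    (HasseDense.good_infinite p s t c0 h0) P ?_
  rintro g h hg hh _ _ ⟨c, d, rfl, rfl, hc, hd, hcd, hΔ, hcop, h1, h3⟩
  refine hP (HasseDense.act g h (HasseDense.Mx (p : K) (c : K) (d : K)))
    (HasseDense.isHasse_act g h hg hh _ ?_)
  have hinj : Function.Injective (algebraMap (𝓞 K) K) := RingOfIntegers.coe_injective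
  refine HasseDense.isHasse_of p hpp.ne_zero _ _ ?_ ?_ ?_ ?_ ?_ ?_
  · exact fun h => hc (hinj (h.trans (map_zero _).symm))
  · exact fun h => hd (hinj (h.trans (map_zero _).symm))
  · exact fun h => hcd (hinj h)
  · intro h
    apply hΔ
    apply hinj
    rw [map_zero, ← h]
    simp only [map_sub, map_mul, map_pow, map_add, map_one, map_ofNat]
  · intro v
    by_cases h2 : (2 : 𝓞 K) ∈ v.asIdeal
    · exact HasseDense.loc_two v p (p / 8) (by omega) c d h2
    by_cases hv : (p : 𝓞 K) ∈ v.asIdeal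
    · exact HasseDense.loc_p v p c d s t h2 (hs v hv) (ht v hv s)
        (HasseDense.span_le_v p v hv h1) (HasseDense.span_le_v p v hv h3)
    · exact HasseDense.loc_good v p c d hv h2 (hcop v)
  · exact HasseDense.no_point p hp8 c d s t hunr hrad ht (HasseDense.inv_mod p s hs) h1 h3 hN
end

section
/- Consider the surface S in P^4 over ℚ given by the equations T0·T1 = T2² − 17·T3² and (T0 + 9·T1)(T0 + 11·T1) = T2² − 17·T4². Then S has a real point and, for every prime number p, a point over the p-adic field ℚ_p (so S(𝔸_ℚ) ≠ ∅), but S has no ℚ-rational point: there is no nonzero tuple (t0,…,t4) ∈ ℚ^5 satisfying both equations. -/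
/-- The affine equations defining the surface `S^{(D;A,B)}`:
`t0·t1 = t2² − D·t3²` and `(t0 + A·t1)(t0 + B·t1) = t2² − D·t4²`. -/
def SPoint {F : Type*} [Field F] (A B D : F) (t : Fin 5 → F) : Prop :=
  t 0 * t 1 = t 2 ^ 2 - D * t 3 ^ 2 ∧
  (t 0 + A * t 1) * (t 0 + B * t 1) = t 2 ^ 2 - D * t 4 ^ 2

/-- `S^{(D;A,B)}(F) ≠ ∅`: there is a nonzero solution of the two equations over `F`. -/
def HasPoint (F : Type*) [Field F] (A B D : F) : Prop :=
  ∃ t : Fin 5 → F, t ≠ 0 ∧ SPoint A B D t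

lemma aux3a : (1 : ZMod 3) ≠ 0 := by decide
lemma aux3b : (-17 : ZMod 3) = 1 ^ 2 := by decide
lemma aux7a : (2 : ZMod 7) ≠ 0 := by decide
lemma aux7b : (-17 : ZMod 7) = 2 ^ 2 := by decide
lemma aux11a : (4 : ZMod 11) ≠ 0 := by decide
lemma aux11b : (-17 : ZMod 11) = 4 ^ 2 := by decide
lemma aux5a : (2 : ZMod 5) ≠ 0 := by decide
lemma aux5b : (17 : ZMod 5) * (0 ^ 2 - -2 * 1) = 2 ^ 2 := by decide
lemma aux5c : (17 : ZMod 5) * (0 ^ 2 - (-2 + 9 * 1) * (-2 + 11 * 1)) = 2 ^ 2 := by decide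
lemma aux17a : (7 : ZMod 17) ≠ 0 := by decide
lemma aux17b : (-2 : ZMod 17) = 7 ^ 2 := by decide

lemma hasPoint_of_sq {F : Type*} [Field F] (h17 : (17 : F) ≠ 0) (s : F) (hs : s ^ 2 = 17) :
    HasPoint F 9 11 17 := by
  have hs0 : s ≠ 0 := by
    rintro rfl
    apply h17
    rw [← hs]
    ring
  refine ⟨![1, 0, 1, s⁻¹, 0], ?_, ?_, ?_⟩
  · intro h
    have := congrFun h 0
    simp at this
  · simp [← hs, hs0]
  · simp

lemma hasPoint_of_neg_sq {F : Type*} [Field F] (h17 : (17 : F) ≠ 0) (s : F) (hs : s ^ 2 = -17) :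
    HasPoint F 9 11 17 := by
  have hs0 : s ≠ 0 := by
    rintro rfl
    apply h17
    linear_combination hs
  have h2 : (17 : F) = - s ^ 2 := by rw [hs]; ring
  refine ⟨![1, 0, 0, 0, s⁻¹], ?_, ?_, ?_⟩
  · intro h
    have := congrFun h 0
    simp at this
  · simp
  · simp only [h2]
    simp [hs0]

section padic

variable {p : ℕ} [hp : Fact p.Prime]

lemma norm_eq_one_of_res {u : ℤ_[p]} (h : PadicInt.toZMod u ≠ 0) : ‖u‖ = 1 := by
  rw [← PadicInt.isUnit_iff]
  by_contra hu
  apply h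
  rw [← RingHom.mem_ker, PadicInt.ker_toZMod]
  exact (IsLocalRing.mem_maximalIdeal _).mpr hu

lemma norm_lt_one_of_res {u : ℤ_[p]} (h : PadicInt.toZMod u = 0) : ‖u‖ < 1 := by
  rw [← RingHom.mem_ker, PadicInt.ker_toZMod, IsLocalRing.mem_maximalIdeal] at h
  exact PadicInt.mem_nonunits.mp h

lemma hensel_sq (u a : ℤ_[p]) (h : ‖a ^ 2 - u‖ < ‖2 * a‖ ^ 2) : ∃ z : ℤ_[p], z ^ 2 = u := by
  have := @hensels_lemma p _ ℤ_[p] _ _ (Polynomial.X ^ 2 - Polynomial.C u) a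
    (by
      simp [one_add_one_eq_two] at h ⊢
      exact h)
  obtain ⟨z, hz, -⟩ := this
  refine ⟨z, ?_⟩
  simp at hz
  linear_combination hz

lemma two_ne (h2 : p ≠ 2) : (2 : ZMod p) ≠ 0 := by
  have := ZMod.prime_ne_zero p 2 (hq := ⟨Nat.prime_two⟩) h2
  exact_mod_cast this

lemma sq_of_res (h2 : p ≠ 2) (u : ℤ_[p]) (w : ZMod p) (hw : w ≠ 0)
    (hu : PadicInt.toZMod u = w ^ 2) :
    ∃ z : ℤ_[p], z ^ 2 = u ∧ PadicInt.toZMod z = w := by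
  obtain ⟨a, ha⟩ := ZMod.ringHom_surjective (PadicInt.toZMod (p := p)) w
  obtain ⟨z, hz⟩ := hensel_sq u a (by
    rw [norm_eq_one_of_res (u := 2 * a)]
    · have : ‖a ^ 2 - u‖ < 1 := norm_lt_one_of_res (by simp [ha, hu])
      simpa using this
    · simp only [map_mul, map_ofNat, ha]
      exact mul_ne_zero (two_ne h2) hw)
  have h3 : PadicInt.toZMod z ^ 2 = w ^ 2 := by rw [← map_pow, hz, hu]
  rcases sq_eq_sq_iff_eq_or_eq_neg.mp h3 with h | h
  · exact ⟨z, hz, h⟩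
  · exact ⟨-z, by rw [← hz]; ring, by simp [h]⟩

lemma hasPoint_mk (a b c d e : ℤ_[p]) (h1 : d ^ 2 = 17 * (c ^ 2 - a * b))
    (h2 : e ^ 2 = 17 * (c ^ 2 - (a + 9 * b) * (a + 11 * b)))
    (h : a ≠ 0 ∨ b ≠ 0 ∨ c ≠ 0) : HasPoint ℚ_[p] 9 11 17 := by
  have hh_one : (d : ℚ_[p]) ^ 2 = 17 * (c ^ 2 - a * b) := by
    have := congrArg (fun x : ℤ_[p] => (x : ℚ_[p])) h1
    push_cast at this
    exact this
  have hh_two : (e : ℚ_[p]) ^ 2 = 17 * (c ^ 2 - (a + 9 * b) * (a + 11 * b)) := by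
    have := congrArg (fun x : ℤ_[p] => (x : ℚ_[p])) h2
    push_cast at this
    exact this
  refine ⟨![a, b, c, d / 17, e / 17], ?_, ?_, ?_⟩
  · intro h0
    have e0 := congrFun h0 0
    have e1 := congrFun h0 1
    have e2 := congrFun h0 2
    simp at e0 e1 e2
    simp [e0, e1, e2] at h
  · simp
    field_simp
    linear_combination hh_one
  · simp
    field_simp
    linear_combination hh_two

/-- A point mod `p` with `t3, t4` nonzero lifts. -/
lemma lift_point (h2 : p ≠ 2) (A B C : ℤ_[p]) (d e : ZMod p) (h : A ≠ 0 ∨ B ≠ 0 ∨ C ≠ 0)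
    (h1 : 17 * (C ^ 2 - A * B) = 0 ∨
      (d ≠ 0 ∧ PadicInt.toZMod (17 * (C ^ 2 - A * B)) = d ^ 2))
    (h3 : 17 * (C ^ 2 - (A + 9 * B) * (A + 11 * B)) = 0 ∨
      (e ≠ 0 ∧ PadicInt.toZMod (17 * (C ^ 2 - (A + 9 * B) * (A + 11 * B))) = e ^ 2)) :
    HasPoint ℚ_[p] 9 11 17 := by
  have key : ∀ (u : ℤ_[p]) (w : ZMod p), (u = 0 ∨ (w ≠ 0 ∧ PadicInt.toZMod u = w ^ 2)) →
      ∃ z : ℤ_[p], z ^ 2 = u := by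
    rintro u w (rfl | ⟨hw, hu⟩)
    · exact ⟨0, by simp⟩
    · obtain ⟨z, hz, -⟩ := sq_of_res h2 u w hw hu
      exact ⟨z, hz⟩
  obtain ⟨z, hz⟩ := key _ _ h1
  obtain ⟨y, hy⟩ := key _ _ h3
  exact hasPoint_mk A B C z y hz hy h

lemma res_ne {x : ℤ_[p]} {y : ZMod p} (h : PadicInt.toZMod x = y) (hy : y ≠ 0) : x ≠ 0 := by
  rintro rfl
  exact hy (by rw [← h, map_zero])

open MvPolynomial in
/-- Chevalley–Warning -/
lemma exists_mod_p : ∃ t : Fin 5 → ZMod p, t ≠ 0 ∧ SPoint 9 11 17 t := by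
  let f₁ : MvPolynomial (Fin 5) (ZMod p) := X 0 * X 1 - (X 2 * X 2 - C 17 * (X 3 * X 3))
  let f₂ : MvPolynomial (Fin 5) (ZMod p) :=
    (X 0 + C 9 * X 1) * (X 0 + C 11 * X 1) - (X 2 * X 2 - C 17 * (X 4 * X 4))
  have hX : ∀ i j : Fin 5, (X i * X j : MvPolynomial (Fin 5) (ZMod p)).totalDegree ≤ 2 := by
    intro i j
    refine (totalDegree_mul _ _).trans ?_
    simp
  have hC : ∀ (c : ZMod p) (q : MvPolynomial (Fin 5) (ZMod p)),
      (C c * q).totalDegree ≤ q.totalDegree := by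
    intro c q
    refine (totalDegree_mul _ _).trans ?_
    simp
  have hs : ∀ (q r : MvPolynomial (Fin 5) (ZMod p)) (n : ℕ), q.totalDegree ≤ n →
      r.totalDegree ≤ n → (q - r).totalDegree ≤ n := fun q r n h1 h2 =>
    (totalDegree_sub _ _).trans (max_le h1 h2)
  have hl : ∀ c : ZMod p, (X 0 + C c * X 1 : MvPolynomial (Fin 5) (ZMod p)).totalDegree ≤ 1 := by
    intro c
    refine (totalDegree_add _ _).trans (max_le ?_ ((hC _ _).trans ?_)) <;> simp
  have d1 : f₁.totalDegree ≤ 2 :=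
    hs _ _ _ (hX _ _) (hs _ _ _ (hX _ _) ((hC _ _).trans (hX _ _)))
  have d2 : f₂.totalDegree ≤ 2 :=
    hs _ _ _ ((totalDegree_mul _ _).trans (by have := hl 9; have := hl 11; omega))
      (hs _ _ _ (hX _ _) ((hC _ _).trans (hX _ _)))
  have hdvd := char_dvd_card_solutions_of_add_lt (K := ZMod p) p (f₁ := f₁) (f₂ := f₂)
    (by simp only [Fintype.card_fin]; omega)
  have z : {x : Fin 5 → ZMod p // eval x f₁ = 0 ∧ eval x f₂ = 0} :=
    ⟨0, by simp [f₁], by simp [f₂]⟩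
  have hpos : 0 < Fintype.card {x : Fin 5 → ZMod p // eval x f₁ = 0 ∧ eval x f₂ = 0} :=
    Fintype.card_pos_iff.mpr ⟨z⟩
  have hgt : 1 < Fintype.card {x : Fin 5 → ZMod p // eval x f₁ = 0 ∧ eval x f₂ = 0} :=
    lt_of_lt_of_le hp.out.one_lt (Nat.le_of_dvd hpos hdvd)
  obtain ⟨⟨x, hx1, hx2⟩, hx⟩ := Fintype.exists_ne_of_one_lt_card hgt
    ⟨0, by simp [f₁], by simp [f₂]⟩
  refine ⟨x, fun h => hx (Subtype.ext h), ?_, ?_⟩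
  · simp [f₁] at hx1
    linear_combination hx1
  · simp [f₂] at hx2
    linear_combination hx2

lemma prime_ne_zero' (q : ℕ) (hq : q.Prime) (h : p ≠ q) : (q : ZMod p) ≠ 0 :=
  ZMod.prime_ne_zero p q (hq := ⟨hq⟩) h

lemma hasPoint_big (h2 : p ≠ 2) (h3 : p ≠ 3) (h5 : p ≠ 5) (h7 : p ≠ 7) (h11 : p ≠ 11)
    (h17 : p ≠ 17) : HasPoint ℚ_[p] 9 11 17 := by
  have n2 : (2 : ZMod p) ≠ 0 := two_ne h2
  have n3 : (3 : ZMod p) ≠ 0 := by exact_mod_cast prime_ne_zero' 3 (by norm_num) h3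
  have n5 : (5 : ZMod p) ≠ 0 := by exact_mod_cast prime_ne_zero' 5 (by norm_num) h5
  have n7 : (7 : ZMod p) ≠ 0 := by exact_mod_cast prime_ne_zero' 7 (by norm_num) h7
  have n11 : (11 : ZMod p) ≠ 0 := by exact_mod_cast prime_ne_zero' 11 (by norm_num) h11
  have n17 : (17 : ZMod p) ≠ 0 := by exact_mod_cast prime_ne_zero' 17 (by norm_num) h17
  have n99 : (99 : ZMod p) ≠ 0 := by
    have : (99 : ZMod p) = 3 * 3 * 11 := by norm_num
    rw [this]
    exact mul_ne_zero (mul_ne_zero n3 n3) n11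
  have n35 : (35 : ZMod p) ≠ 0 := by
    have : (35 : ZMod p) = 5 * 7 := by norm_num
    rw [this]
    exact mul_ne_zero n5 n7
  obtain ⟨t, ht, e1, e2⟩ := exists_mod_p (p := p)
  obtain ⟨a, ha⟩ : ∃ a, a = t 0 := ⟨_, rfl⟩
  obtain ⟨b, hb⟩ : ∃ a, a = t 1 := ⟨_, rfl⟩
  obtain ⟨c, hc⟩ : ∃ a, a = t 2 := ⟨_, rfl⟩
  obtain ⟨d, hd⟩ : ∃ a, a = t 3 := ⟨_, rfl⟩
  obtain ⟨e, he⟩ : ∃ a, a = t 4 := ⟨_, rfl⟩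
  rw [← ha, ← hb, ← hc, ← hd] at e1
  rw [← ha, ← hb, ← hc, ← he] at e2
  have hne : ¬ (a = 0 ∧ b = 0 ∧ c = 0) := by
    rintro ⟨rfl, rfl, rfl⟩
    have hd0 : d = 0 := by
      have : 17 * d ^ 2 = 0 := by linear_combination e1
      simpa [n17] using this
    have he0 : e = 0 := by
      have : 17 * e ^ 2 = 0 := by linear_combination e2
      simpa [n17] using this
    apply ht
    ext i
    fin_cases i <;> simp [← ha, ← hb, ← hc, ← hd, ← he, hd0, he0]
  clear ha hb hc hd he ht t
  obtain ⟨A, hA⟩ := ZMod.ringHom_surjective (PadicInt.toZMod (p := p)) a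
  obtain ⟨B, hB⟩ := ZMod.ringHom_surjective (PadicInt.toZMod (p := p)) b
  obtain ⟨C, hC⟩ := ZMod.ringHom_surjective (PadicInt.toZMod (p := p)) c
  by_cases hd : d = 0
  · subst hd
    have hab : a * b = c ^ 2 := by linear_combination e1
    by_cases he : e = 0
    · subst he
      have hb : b ≠ 0 := by
        rintro rfl
        have hc : c = 0 := by simpa using hab.symm
        subst hc
        have ha : a = 0 := by
          have : a ^ 2 = 0 := by linear_combination e2
          simpa using this
        exact hne ⟨ha, rfl, rfl⟩
      have hc : c ≠ 0 := by
        rintro rfl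
        have ha : a = 0 := by simpa [hb] using hab
        subst ha
        have : 99 * b ^ 2 = 0 := by linear_combination e2
        simp [n99, hb] at this
      have hq : a ^ 2 + 19 * a * b + 99 * b ^ 2 = 0 := by linear_combination e2 - e1
      have hs2 : ((2 * a + 19 * b) / b) ^ 2 = -35 := by
        field_simp
        linear_combination 4 * hq
      obtain ⟨S, hS, hS'⟩ := sq_of_res h2 (-35) ((2 * a + 19 * b) / b)
        (by
          intro h
          rw [h] at hs2
          apply n35
          linear_combination hs2)
        (by rw [hs2]; simp only [map_neg, map_ofNat])
      have hw : (4 : ZMod p) * c / b ≠ 0 := by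
        have : (4 : ZMod p) = 2 * 2 := by norm_num
        rw [this]
        exact div_ne_zero (mul_ne_zero (mul_ne_zero n2 n2) hc) hb
      obtain ⟨T, hT, hT'⟩ := sq_of_res h2 (8 * (S - 19)) (4 * c / b) hw
        (by
          simp only [map_mul, map_sub, map_ofNat, hS']
          field_simp
          linear_combination 16 * hab)
      refine lift_point h2 (2 * (S - 19)) 4 T 0 0 (Or.inr (Or.inr (res_ne hT' hw)))
        (Or.inl ?_) (Or.inl ?_)
      · linear_combination 17 * hT
      · linear_combination 17 * hT - 68 * hS
    · by_cases hb : b ≠ 0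
      · refine lift_point h2 (C ^ 2) (B ^ 2) (C * B) 0 (17 * (b * e))
          (Or.inr (Or.inl (pow_ne_zero 2 (res_ne hB hb)))) (Or.inl (by ring))
          (Or.inr ⟨mul_ne_zero n17 (mul_ne_zero hb he), ?_⟩)
        simp only [map_mul, map_sub, map_add, map_pow, map_ofNat, hB, hC, mul_pow, ← hab]
        linear_combination -17 * b ^ 2 * e2 + 17 * b ^ 2 * e1
      · rw [not_not] at hb
        subst hb
        have hc : c = 0 := by simpa using hab.symm
        subst hc
        have ha : a ≠ 0 := fun h => hne ⟨h, rfl, rfl⟩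
        refine lift_point h2 A 0 0 0 (17 * e)
          (Or.inl (res_ne hA ha)) (Or.inl (by ring))
          (Or.inr ⟨mul_ne_zero n17 he, ?_⟩)
        simp only [map_mul, map_sub, map_add, map_pow, map_ofNat, map_zero, hA]
        linear_combination -17 * e2
  · by_cases he : e = 0
    · subst he
      have huv : (a + 9 * b) * (a + 11 * b) = c ^ 2 := by linear_combination e2
      obtain ⟨v, hv⟩ : ∃ v, v = a + 11 * b := ⟨_, rfl⟩
      have hV : PadicInt.toZMod (A + 11 * B) = v := by
        simp only [map_add, map_mul, map_ofNat, hA, hB, hv]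
      by_cases hv0 : v ≠ 0
      · refine lift_point h2 (11 * C ^ 2 - 9 * (A + 11 * B) ^ 2) ((A + 11 * B) ^ 2 - C ^ 2)
          (2 * C * (A + 11 * B)) (17 * (2 * v * d)) 0 ?_
          (Or.inr ⟨mul_ne_zero n17 (mul_ne_zero (mul_ne_zero n2 hv0) hd), ?_⟩)
          (Or.inl (by ring))
        · by_contra! hcon
          obtain ⟨q1, q2, -⟩ := hcon
          have h0 : 2 * (A + 11 * B) ^ 2 = 0 := by linear_combination q1 + 11 * q2
          have := congrArg (PadicInt.toZMod (p := p)) h0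
          simp only [map_mul, map_pow, hV, map_ofNat, map_zero] at this
          simp [n2, hv0] at this
        · have : PadicInt.toZMod C ^ 2 = (a + 9 * b) * v := by rw [hC, hv, huv]
          simp only [map_mul, map_sub, map_pow, map_ofNat, hV, mul_pow, this]
          subst hv
          linear_combination (-68) * (a + 11 * b) ^ 2 * (e1 - huv)
      · rw [not_not] at hv0
        have hc : c = 0 := by
          rw [← hv, hv0, mul_zero] at huv
          simpa using huv.symm
        subst hc
        have hab : a = -11 * b := by linear_combination hv0 - hv
        subst hab
        have hb : b ≠ 0 := by
          rintro rfl
          exact hne ⟨by simp, rfl, rfl⟩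
        refine lift_point h2 (-11 * B) B 0 (17 * d) 0
          (Or.inr (Or.inl (res_ne hB hb))) 
          (Or.inr ⟨mul_ne_zero n17 hd, ?_⟩) (Or.inl (by ring))
        simp only [map_mul, map_sub, map_pow, map_ofNat, map_neg, map_zero, hB]
        linear_combination -17 * e1
    · refine lift_point h2 A B C (17 * d) (17 * e) ?_
        (Or.inr ⟨mul_ne_zero n17 hd, ?_⟩) (Or.inr ⟨mul_ne_zero n17 he, ?_⟩)
      · by_contra! hcon
        obtain ⟨rfl, rfl, rfl⟩ := hcon
        exact hne ⟨by simpa using hA.symm, by simpa using hB.symm, by simpa using hC.symm⟩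
      · simp only [map_mul, map_sub, map_pow, map_ofNat, hA, hB, hC]
        linear_combination -17 * e1
      · simp only [map_mul, map_sub, map_add, map_pow, map_ofNat, hA, hB, hC]
        linear_combination -17 * e2

lemma hasPoint_of_neg_res (h2 : p ≠ 2) (w : ZMod p) (hw : w ≠ 0) (h : (-17 : ZMod p) = w ^ 2) :
    HasPoint ℚ_[p] 9 11 17 := by
  obtain ⟨z, hz, -⟩ := sq_of_res h2 (-17) w hw (by rw [← h]; simp only [map_neg, map_ofNat])
  refine hasPoint_of_neg_sq (by norm_num) (z : ℚ_[p]) ?_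
  have := congrArg (fun x : ℤ_[p] => (x : ℚ_[p])) hz
  push_cast at this
  exact this

end padic

lemma hasPoint_two [Fact (Nat.Prime 2)] : HasPoint ℚ_[2] 9 11 17 := by
  obtain ⟨z, hz⟩ := hensel_sq (p := 2) 17 1 (by
    have e : (1 : ℤ_[2]) ^ 2 - 17 = - ((2 : ℕ) : ℤ_[2]) ^ 4 := by norm_num
    have e' : (2 : ℤ_[2]) * 1 = ((2 : ℕ) : ℤ_[2]) := by norm_num
    rw [e, e', norm_neg, norm_pow, PadicInt.norm_p]
    norm_num)
  refine hasPoint_of_sq (by norm_num) (z : ℚ_[2]) ?_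
  have := congrArg (fun x : ℤ_[2] => (x : ℚ_[2])) hz
  push_cast at this
  exact this

lemma hasPoint_five [Fact (Nat.Prime 5)] : HasPoint ℚ_[5] 9 11 17 :=
  lift_point (by norm_num) (-2) 1 0 2 2 (by simp)
    (Or.inr ⟨aux5a, by
      simp only [map_mul, map_sub, map_pow, map_ofNat, map_neg, map_one, map_zero]
      exact aux5b⟩)
    (Or.inr ⟨aux5a, by
      simp only [map_mul, map_sub, map_add, map_pow, map_ofNat, map_neg, map_one, map_zero]
      exact aux5c⟩)

lemma hasPoint_seventeen [Fact (Nat.Prime 17)] : HasPoint ℚ_[17] 9 11 17 := by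
  obtain ⟨z, hz, -⟩ := sq_of_res (p := 17) (by norm_num) (-2) 7 aux17a
    (by simp only [map_neg, map_ofNat]; exact aux17b)
  refine hasPoint_mk (-9) 8 9 (17 * 3) (17 * 12 * z) (by norm_num) ?_ (by simp)
  rw [mul_pow, hz]
  norm_num

lemma hasPoint_padic (p : ℕ) [hp : Fact p.Prime] : HasPoint ℚ_[p] 9 11 17 := by
  by_cases h2 : p = 2
  · subst h2; exact hasPoint_two
  by_cases h3 : p = 3
  · subst h3; exact hasPoint_of_neg_res (by norm_num) 1 aux3a aux3b
  by_cases h5 : p = 5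
  · subst h5; exact hasPoint_five
  by_cases h7 : p = 7
  · subst h7; exact hasPoint_of_neg_res (by norm_num) 2 aux7a aux7b
  by_cases h11 : p = 11
  · subst h11; exact hasPoint_of_neg_res (by norm_num) 4 aux11a aux11b
  by_cases h17 : p = 17
  · subst h17; exact hasPoint_seventeen
  exact hasPoint_big h2 h3 h5 h7 h11 h17

lemma hasPoint_real : HasPoint ℝ 9 11 17 :=
  hasPoint_of_sq (by norm_num) (Real.sqrt 17) (Real.sq_sqrt (by norm_num))

lemma two_sq17 : IsSquare ((2 : ℕ) : ZMod 17) := ⟨6, by decide⟩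

lemma neg_one_sq17 : IsSquare (-1 : ZMod 17) := ⟨4, by decide⟩

/-- A number in which every non-residue prime mod 17 occurs to an even power is a square mod 17. -/
lemma nat_sq17 (n : ℕ) (hn : n ≠ 0)
    (h : ∀ p : ℕ, p.Prime → ¬ IsSquare (p : ZMod 17) → Even (n.factorization p)) :
    IsSquare (n : ZMod 17) := by
  rw [← Nat.prod_factorization_pow_eq_self hn, Finsupp.prod, Nat.cast_prod]
  apply Finset.prod_induction _ (fun x => IsSquare x)
  · intro a b ha hb; exact ha.mul hb
  · exact IsSquare.one
  · intro p hp
    rw [Nat.cast_pow]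
    by_cases hs : IsSquare (p : ZMod 17)
    · exact hs.pow _
    · exact (h p (Nat.prime_of_mem_primeFactors hp) hs).isSquare_pow _

lemma int_sq17 (n : ℤ) (hn : n ≠ 0)
    (h : ∀ p : ℕ, p.Prime → ¬ IsSquare (p : ZMod 17) → Even (n.natAbs.factorization p)) :
    IsSquare (n : ZMod 17) := by
  have := nat_sq17 n.natAbs (by simpa using hn) h
  rcases Int.natAbs_eq n with h' | h'
  · rw [h']; simpa using this
  · rw [h']
    have := neg_one_sq17.mul this
    simpa using this

/-- Primes that are non-residues mod 17 are odd and inert: if they divide a norm, they divide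
both coordinates. -/
lemma inert (p : ℕ) (hp : p.Prime) (h : ¬ IsSquare (p : ZMod 17)) (x y : ℤ)
    (hd : (p : ℤ) ∣ x ^ 2 - 17 * y ^ 2) : (p : ℤ) ∣ x ∧ (p : ℤ) ∣ y := by
  have : Fact p.Prime := ⟨hp⟩
  have : Fact (Nat.Prime 17) := ⟨by norm_num⟩
  have hp2 : p ≠ 2 := by
    rintro rfl
    exact h two_sq17
  have h17 : ¬ IsSquare ((17 : ℕ) : ZMod p) := by
    rwa [← ZMod.exists_sq_eq_prime_iff_of_mod_four_eq_one (p := 17) (q := p) (by norm_num) hp2]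
  have h0 : (x : ZMod p) ^ 2 = 17 * (y : ZMod p) ^ 2 := by
    have := (ZMod.intCast_zmod_eq_zero_iff_dvd _ p).mpr hd
    push_cast at this
    linear_combination this
  have hy : (y : ZMod p) = 0 := by
    by_contra hy
    apply h17
    refine ⟨x / y, ?_⟩
    field_simp
    push_cast
    linear_combination -h0
  have hx : (x : ZMod p) = 0 := by
    rw [hy] at h0
    simpa using h0
  exact ⟨(ZMod.intCast_zmod_eq_zero_iff_dvd _ p).mp hx,
    (ZMod.intCast_zmod_eq_zero_iff_dvd _ p).mp hy⟩

lemma even_val_norm (p : ℕ) (hp : p.Prime) (h : ¬ IsSquare (p : ZMod 17)) :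
    ∀ (k : ℕ) (x y : ℤ), (x ^ 2 - 17 * y ^ 2).natAbs = k → k ≠ 0 → Even (k.factorization p) := by
  intro k
  induction k using Nat.strong_induction_on with
  | _ k ih =>
    intro x y hk hk0
    by_cases hd : p ∣ k
    · have hd' : (p : ℤ) ∣ x ^ 2 - 17 * y ^ 2 := by
        rw [← hk] at hd
        exact Int.natCast_dvd.mpr hd
      obtain ⟨⟨x', rfl⟩, ⟨y', rfl⟩⟩ := inert p hp h x y hd'
      have e : k = p ^ 2 * (x' ^ 2 - 17 * y' ^ 2).natAbs := by
        rw [← hk, show ((p : ℤ) * x') ^ 2 - 17 * (p * y') ^ 2 =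
          (p : ℤ) ^ 2 * (x' ^ 2 - 17 * y' ^ 2) by ring, Int.natAbs_mul, Int.natAbs_pow,
          Int.natAbs_natCast]
      obtain ⟨m, hm⟩ : ∃ m, m = (x' ^ 2 - 17 * y' ^ 2).natAbs := ⟨_, rfl⟩
      rw [← hm] at e
      have hm0 : m ≠ 0 := by
        rintro rfl
        exact hk0 (by simp [e])
      have hlt : m < k := by
        rw [e]
        have : 1 < p ^ 2 := Nat.one_lt_pow (by norm_num) hp.one_lt
        nlinarith [Nat.pos_of_ne_zero hm0]
      have := ih m hlt x' y' hm.symm hm0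
      rw [e, Nat.factorization_mul (pow_ne_zero 2 hp.ne_zero) hm0]
      simp [hp.factorization_self, this, Nat.even_add]
    · rw [Nat.factorization_eq_zero_of_not_dvd hd]
      exact Even.zero

/-- if `u v g² = x² - 17 y²` is non-zero and `p` is inert and does not divide both `u` and `v`,
the valuation of `u` is even -/
lemma even_val (p : ℕ) (hp : p.Prime) (h : ¬ IsSquare (p : ZMod 17)) (u v g x y : ℤ)
    (hu : u ≠ 0) (hv : v ≠ 0) (hg : g ≠ 0) (e : u * v * g ^ 2 = x ^ 2 - 17 * y ^ 2)
    (hc : (p : ℤ) ∣ u → ¬ (p : ℤ) ∣ v) : Even (u.natAbs.factorization p) := by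
  by_cases hd : (p : ℤ) ∣ u
  · have hu' : u.natAbs ≠ 0 := by simpa using hu
    have hv' : v.natAbs ≠ 0 := by simpa using hv
    have hg' : g.natAbs ≠ 0 := by simpa using hg
    have h1 := even_val_norm p hp h _ x y rfl (by
      rw [← e]
      simp [hu, hv, hg])
    have hvd : v.natAbs.factorization p = 0 :=
      Nat.factorization_eq_zero_of_not_dvd (fun hh => hc hd (Int.natCast_dvd.mpr hh))
    rw [← e, Int.natAbs_mul, Int.natAbs_mul, Int.natAbs_pow,
      Nat.factorization_mul (mul_ne_zero hu' hv') (pow_ne_zero 2 hg'),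
      Nat.factorization_mul hu' hv', Nat.factorization_pow] at h1
    simpa [hvd, Nat.even_add] using h1
  · rw [Nat.factorization_eq_zero_of_not_dvd (fun hh => hd (Int.natCast_dvd.mpr hh))]
    exact Even.zero

lemma mod17 (a b : ℤ) : ∀ (n : ℕ) (g x y z : ℤ), g.natAbs = n → g ≠ 0 →
    a * b * g ^ 2 = x ^ 2 - 17 * y ^ 2 →
    (a + 9 * b) * (a + 11 * b) * g ^ 2 = x ^ 2 - 17 * z ^ 2 →
    (17 : ℤ) ∣ a ^ 2 + 19 * a * b + 99 * b ^ 2 := by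
  have hP : Prime (17 : ℤ) := by norm_num
  intro n
  induction n using Nat.strong_induction_on with
  | _ n ih =>
    intro g x y z hn hg e1 e2
    by_cases hd : (17 : ℤ) ∣ g
    · obtain ⟨g', rfl⟩ := hd
      have hx : (17 : ℤ) ∣ x := hP.dvd_of_dvd_pow (n := 2)
        ⟨a * b * 17 * g' ^ 2 + y ^ 2, by linear_combination -e1⟩
      obtain ⟨x', rfl⟩ := hx
      have hy : (17 : ℤ) ∣ y := hP.dvd_of_dvd_pow (n := 2)
        ⟨x' ^ 2 - a * b * g' ^ 2, by linarith⟩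
      have hz : (17 : ℤ) ∣ z := hP.dvd_of_dvd_pow (n := 2)
        ⟨x' ^ 2 - (a + 9 * b) * (a + 11 * b) * g' ^ 2, by linarith⟩
      obtain ⟨y', rfl⟩ := hy
      obtain ⟨z', rfl⟩ := hz
      have hg' : g' ≠ 0 := by
        rintro rfl
        simp at hg
      exact ih g'.natAbs (by omega) g' x' y' z' rfl hg' (by linarith) (by linarith)
    · have : (17 : ℤ) ∣ (a ^ 2 + 19 * a * b + 99 * b ^ 2) * g ^ 2 :=
        ⟨y ^ 2 - z ^ 2, by linear_combination e2 - e1⟩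
      rcases hP.dvd_or_dvd this with h | h
      · exact h
      · exact absurd (hP.dvd_of_dvd_pow h) hd

lemma final17 : ∀ a b : ZMod 17, b ≠ 0 → IsSquare b → IsSquare (a + 9 * b) →
    a ^ 2 + 19 * a * b + 99 * b ^ 2 = 0 → False := by
  decide

lemma irr17 {x y : ℤ} (h : x ^ 2 = 17 * y ^ 2) : x = 0 ∧ y = 0 := by
  have hy : y = 0 := by
    by_contra hy
    have hq : (y : ℚ) ≠ 0 := by exact_mod_cast hy
    have h' : (x : ℚ) ^ 2 = 17 * (y : ℚ) ^ 2 := by exact_mod_cast h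
    have : IsSquare (17 : ℚ) := ⟨x / y, by field_simp; linarith⟩
    revert this
    norm_num
  subst hy
  exact ⟨by simpa using h, rfl⟩

lemma not_coprime_sol (a b g x y z : ℤ) (hg : g ≠ 0) (hab : IsCoprime a b)
    (e1 : a * b * g ^ 2 = x ^ 2 - 17 * y ^ 2)
    (e2 : (a + 9 * b) * (a + 11 * b) * g ^ 2 = x ^ 2 - 17 * z ^ 2) : False := by
  have hab0 : a = 0 → b = 0 → False := by
    rintro rfl rfl
    exact not_isCoprime_zero_zero hab
  have hg2 : 0 < g ^ 2 := by positivity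
  have ha : a ≠ 0 := by
    rintro rfl
    obtain ⟨rfl, rfl⟩ := irr17 (x := x) (y := y) (by linarith)
    have : 0 < b ^ 2 * g ^ 2 := mul_pos (by
      have : b ≠ 0 := hab0 rfl
      positivity) hg2
    nlinarith [sq_nonneg z]
  have hb : b ≠ 0 := by
    rintro rfl
    obtain ⟨rfl, rfl⟩ := irr17 (x := x) (y := y) (by linarith)
    have : 0 < a ^ 2 * g ^ 2 := mul_pos (by positivity) hg2
    nlinarith [sq_nonneg z]
  have hu : a + 9 * b ≠ 0 := by
    intro h
    obtain ⟨rfl, rfl⟩ := irr17 (x := x) (y := z) (by rw [h] at e2; linarith)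
    have ha' : a = -9 * b := by linarith
    subst ha'
    have := irr17 (x := 3 * b * g) (y := y) (by linear_combination -e1)
    obtain ⟨h3, -⟩ := this
    simp [hb, hg] at h3
  have hv : a + 11 * b ≠ 0 := by
    intro h
    obtain ⟨rfl, rfl⟩ := irr17 (x := x) (y := z) (by rw [h] at e2; linarith)
    have ha' : a = -11 * b := by linarith
    subst ha'
    have h11 : 11 * (b * g) ^ 2 = 17 * y ^ 2 := by linarith
    have hq : (y : ℚ) ≠ 0 := by
      intro hy
      have hy : y = 0 := by exact_mod_cast hy
      subst hy
      simp [hb, hg] at h11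
    have h' : 11 * ((b : ℚ) * g) ^ 2 = 17 * (y : ℚ) ^ 2 := by exact_mod_cast h11
    have : IsSquare (17 * 11 : ℚ) := ⟨11 * (b * g) / y, by field_simp; linarith⟩
    revert this
    norm_num
  have hdiv : ∀ p : ℕ, p.Prime → (p : ℤ) ∣ a → (p : ℤ) ∣ b → False := by
    intro p hp h1 h2
    have := hab.isUnit_of_dvd' h1 h2
    exact (Nat.prime_iff_prime_int.mp hp).not_isUnit this
  have sb : IsSquare (b : ZMod 17) := int_sq17 b hb (fun p hp h =>
    even_val p hp h b a g x y hb ha hg (by linarith) (fun h1 h2 => hdiv p hp h2 h1))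
  have su : IsSquare ((a + 9 * b : ℤ) : ZMod 17) := int_sq17 _ hu (fun p hp h =>
    even_val p hp h _ _ g x z hu hv hg e2 (fun h1 h2 => by
      have h3 : (p : ℤ) ∣ 2 * b := by
        have := dvd_sub h2 h1
        have e : a + 11 * b - (a + 9 * b) = 2 * b := by ring
        rwa [e] at this
      have hP := Nat.prime_iff_prime_int.mp hp
      rcases hP.dvd_or_dvd h3 with h4 | h4
      · have h5 : p ∣ 2 := by exact_mod_cast h4
        have h6 := (Nat.prime_dvd_prime_iff_eq hp Nat.prime_two).mp h5
        subst h6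
        exact h two_sq17
      · refine hdiv p hp ?_ h4
        have := dvd_sub h1 (h4.mul_left 9)
        simpa using this))
  have h17 := mod17 a b _ g x y z rfl hg e1 e2
  have h17' : (a : ZMod 17) ^ 2 + 19 * a * b + 99 * (b : ZMod 17) ^ 2 = 0 := by
    have := (ZMod.intCast_zmod_eq_zero_iff_dvd _ 17).mpr h17
    push_cast at this
    exact this
  refine final17 (a : ZMod 17) (b : ZMod 17) ?_ sb (by push_cast at su; exact su) h17'
  intro hb0
  rw [hb0] at h17'
  have : Fact (Nat.Prime 17) := ⟨by norm_num⟩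
  have ha0 : (a : ZMod 17) = 0 := by simpa using h17'
  exact hdiv 17 (by norm_num) ((ZMod.intCast_zmod_eq_zero_iff_dvd _ 17).mp ha0)
    ((ZMod.intCast_zmod_eq_zero_iff_dvd _ 17).mp hb0)

lemma not_int_sol (t0 t1 x y z : ℤ)
    (e1 : t0 * t1 = x ^ 2 - 17 * y ^ 2)
    (e2 : (t0 + 9 * t1) * (t0 + 11 * t1) = x ^ 2 - 17 * z ^ 2) :
    t0 = 0 ∧ t1 = 0 ∧ x = 0 ∧ y = 0 ∧ z = 0 := by
  by_cases h : t0 = 0 ∧ t1 = 0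
  · obtain ⟨rfl, rfl⟩ := h
    obtain ⟨rfl, rfl⟩ := irr17 (x := x) (y := y) (by linarith)
    obtain ⟨-, rfl⟩ := irr17 (x := 0) (y := z) (by linarith)
    simp
  · exfalso
    have hg : (Int.gcd t0 t1 : ℤ) ≠ 0 := by
      intro hh
      exact h (Int.gcd_eq_zero_iff.mp (by exact_mod_cast hh))
    obtain ⟨g, a, b, -, hc, h0, h1⟩ := Int.exists_gcd_one' (m := t0) (n := t1)
      (Nat.pos_of_ne_zero (by exact_mod_cast hg))
    have hg' : (g : ℤ) ≠ 0 := by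
      intro hh
      rw [hh] at h0 h1
      exact h ⟨by simpa using h0, by simpa using h1⟩
    refine not_coprime_sol a b g x y z hg' (Int.isCoprime_iff_gcd_eq_one.mpr hc) ?_ ?_
    · rw [← e1, h0, h1]; ring
    · rw [← e2, h0, h1]; ring

lemma not_hasPoint_rat : ¬ HasPoint ℚ 9 11 17 := by
  rintro ⟨t, ht, e1, e2⟩
  obtain ⟨⟨d, hd⟩, hI⟩ := IsLocalization.exist_integer_multiples_of_finite (nonZeroDivisors ℤ) t
  have hd0 : (d : ℚ) ≠ 0 := by exact_mod_cast nonZeroDivisors.ne_zero hd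
  choose T hT using hI
  have hT' : ∀ i, (T i : ℚ) = d * t i := by
    intro i
    have := hT i
    simpa [Submonoid.smul_def] using this
  have := not_int_sol (T 0) (T 1) (T 2) (T 3) (T 4) (by
      have : (T 0 : ℚ) * T 1 = T 2 ^ 2 - 17 * T 3 ^ 2 := by
        simp only [hT']
        linear_combination (d : ℚ) ^ 2 * e1
      exact_mod_cast this) (by
      have : ((T 0 : ℚ) + 9 * T 1) * (T 0 + 11 * T 1) = T 2 ^ 2 - 17 * T 4 ^ 2 := by
        simp only [hT']
        linear_combination (d : ℚ) ^ 2 * e2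
      exact_mod_cast this)
  obtain ⟨z0, z1, z2, z3, z4⟩ := this
  apply ht
  ext i
  have hz : T i = 0 := by fin_cases i <;> assumption
  have := hT' i
  rw [hz] at this
  simpa [hd0] using this.symm

/-- The surface in `P⁴` over `ℚ` given by `T0·T1 = T2² − 17·T3²` and
`(T0 + 9·T1)(T0 + 11·T1) = T2² − 17·T4²` has points over `ℝ` and over every `ℚ_p`,
but no rational point. -/
theorem example_17_9_11_violates_Hasse_principle :
    HasPoint ℝ 9 11 17 ∧
    (∀ (p : ℕ) [Fact p.Prime], HasPoint ℚ_[p] 9 11 17) ∧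
    ¬ HasPoint ℚ 9 11 17 :=
  ⟨hasPoint_real, fun p _ => hasPoint_padic p, not_hasPoint_rat⟩
end

section
/- Let K be a field of characteristic ≠ 2 and A, B, D ∈ K. Then the surface S^{(D;A,B)} is nonsingular if and only if A·B·D ≠ 0, A ≠ B, and A² − 2AB + B² − 2A − 2B + 1 ≠ 0. -/
open IsDedekindDomain NumberField

/-- The Jacobian matrix of the two defining equations at a point `t`. -/
noncomputable def jacobian {F : Type*} [Field F] (A B D : F) (t : Fin 5 → F) :
    Matrix (Fin 2) (Fin 5) F :=
  !![t 1, t 0, -2 * t 2, 2 * D * t 3, 0;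
     2 * t 0 + (A + B) * t 1, (A + B) * t 0 + 2 * A * B * t 1, -2 * t 2, 0, 2 * D * t 4]

/-- `S^{(D;A,B)}` is nonsingular: it has no singular point over an algebraic closure,
i.e. no nonzero solution of the two equations at which the Jacobian has rank at most 1. -/
def Nonsingular (F : Type*) [Field F] (A B D : F) : Prop :=
  ∀ t : Fin 5 → AlgebraicClosure F, t ≠ 0 →
    SPoint (algebraMap F (AlgebraicClosure F) A) (algebraMap F (AlgebraicClosure F) B)
      (algebraMap F (AlgebraicClosure F) D) t →
    ¬ (jacobian (algebraMap F (AlgebraicClosure F) A) (algebraMap F (AlgebraicClosure F) B)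
      (algebraMap F (AlgebraicClosure F) D) t).rank ≤ 1

theorem rank_le_one_iff_aux {F : Type*} [Field F] (M : Matrix (Fin 2) (Fin 5) F) :
    M.rank ≤ 1 ↔ ∃ l m : F, (l ≠ 0 ∨ m ≠ 0) ∧ ∀ j, l * M 0 j + m * M 1 j = 0 := by
  have h1 : M.rank ≤ 1 ↔ ¬ LinearIndependent F M.row := by
    rw [linearIndependent_iff_card_eq_finrank_span, Set.finrank, ← Matrix.rank_eq_finrank_span_row]
    have := M.rank_le_height
    simp only [Fintype.card_fin]
    omega
  have h2 : M.row = ![M 0, M 1] := by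
    ext i j; fin_cases i <;> rfl
  rw [h1, h2, LinearIndependent.pair_iff]
  push Not
  constructor
  · rintro ⟨l, m, h, h'⟩
    refine ⟨l, m, ?_, fun j => by simpa using congrFun h j⟩
    by_cases hl : l = 0
    · exact Or.inr (h' hl)
    · exact Or.inl hl
  · rintro ⟨l, m, h, h'⟩
    refine ⟨l, m, ?_, fun hl => ?_⟩
    · ext j; simpa using h' j
    · rcases h with h | h
      · exact absurd hl h
      · exact h

/-- Rank condition on the Jacobian, spelled out. -/
theorem jacobian_rank_iff_aux {F : Type*} [Field F] (A B D : F) (t : Fin 5 → F) :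
    (jacobian A B D t).rank ≤ 1 ↔ ∃ l m : F, (l ≠ 0 ∨ m ≠ 0) ∧
      l * t 1 + m * (2 * t 0 + (A + B) * t 1) = 0 ∧
      l * t 0 + m * ((A + B) * t 0 + 2 * A * B * t 1) = 0 ∧
      (l + m) * (2 * t 2) = 0 ∧ l * (2 * D * t 3) = 0 ∧ m * (2 * D * t 4) = 0 := by
  rw [rank_le_one_iff_aux]
  refine exists_congr fun l => exists_congr fun m => and_congr_right fun _ => ?_
  constructor
  · intro h
    have h0 := h 0
    have h1 := h 1
    have h2 := h 2
    have h3 := h 3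
    have h4 := h 4
    simp only [jacobian, Matrix.of_apply, Matrix.cons_val', Matrix.cons_val_zero,
      Matrix.cons_val_one, Matrix.cons_val, Matrix.cons_val_fin_one] at h0 h1 h2 h3 h4
    exact ⟨h0, h1, by linear_combination -h2, by linear_combination h3,
      by linear_combination h4⟩
  · rintro ⟨h0, h1, h2, h3, h4⟩ j
    fin_cases j <;>
      simp only [jacobian, Matrix.of_apply, Matrix.cons_val', Matrix.cons_val_zero,
        Matrix.cons_val_one, Matrix.cons_val, Matrix.cons_val_fin_one, Fin.zero_eta,
        Fin.mk_one, Fin.reduceFinMk]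
    · exact h0
    · exact h1
    · linear_combination -h2
    · linear_combination h3
    · linear_combination h4

theorem forward_aux {F : Type*} [Field F] (h2 : (2 : F) ≠ 0) (A B D : F)
    (hA : A ≠ 0) (hB : B ≠ 0) (hD : D ≠ 0) (hAB : A ≠ B)
    (hd : A ^ 2 - 2 * A * B + B ^ 2 - 2 * A - 2 * B + 1 ≠ 0)
    (t : Fin 5 → F) (hs : SPoint A B D t) (hr : (jacobian A B D t).rank ≤ 1) : t = 0 := by
  obtain ⟨e1, e2⟩ := hs
  rw [jacobian_rank_iff_aux] at hr
  obtain ⟨l, m, hlm, c0, c1, c2, c3, c4⟩ := hr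
  have key : t 0 = 0 → t 1 = 0 → t 2 = 0 → t 3 = 0 → t 4 = 0 → t = 0 := by
    intro a b c d e
    ext i; fin_cases i <;> assumption
  generalize t 0 = x at *
  generalize t 1 = y at *
  generalize t 2 = z at *
  generalize t 3 = u at *
  generalize t 4 = v at *
  have hAB' : A - B ≠ 0 := sub_ne_zero.mpr hAB
  have c2' : (l + m) = 0 ∨ z = 0 := by simpa [h2] using c2
  have c3' : l = 0 ∨ u = 0 := by simpa [h2, hD] using c3
  have c4' : m = 0 ∨ v = 0 := by simpa [h2, hD] using c4
  by_cases hm : m = 0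
  · subst hm
    have hl : l ≠ 0 := by simpa using hlm
    have hu : u = 0 := by simpa [hl] using c3'
    have hz : z = 0 := by simpa [hl] using c2'
    have hy : y = 0 := by simpa [hl] using c0
    have hx : x = 0 := by simpa [hl] using c1
    subst hu hz hy hx
    have hv : v = 0 := by simpa [hD] using e2
    exact key rfl rfl rfl rfl hv
  have hv : v = 0 := by simpa [hm] using c4'
  by_cases hl : l = 0
  · subst hl
    have hz : z = 0 := by simpa [hm] using c2'
    have d0 : 2 * x + (A + B) * y = 0 := by simpa [hm] using c0
    have d1 : (A + B) * x + 2 * A * B * y = 0 := by simpa [hm] using c1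
    have hy : y = 0 := by
      have : (A - B) ^ 2 * y = 0 := by linear_combination (A + B) * d0 - 2 * d1
      simpa [hAB'] using this
    subst hy
    have hx : x = 0 := by simpa [h2] using d0
    subst hx hz
    have hu : u = 0 := by simpa [hD] using e1
    exact key rfl rfl rfl hu hv
  have hu : u = 0 := by simpa [hl] using c3'
  by_cases hs : l + m = 0
  · have hl' : l = -m := by linear_combination hs
    subst hl'
    have d0 : 2 * x + (A + B - 1) * y = 0 := by
      apply mul_left_cancel₀ hm; linear_combination c0
    have d1 : (A + B - 1) * x + 2 * A * B * y = 0 := by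
      apply mul_left_cancel₀ hm; linear_combination c1
    have hy : y = 0 := by
      apply mul_left_cancel₀ hd
      linear_combination (A + B - 1) * d0 - 2 * d1
    subst hy
    have hx : x = 0 := by simpa [h2] using d0
    subst hx hu
    have hz : z = 0 := by
      have : z ^ 2 = 0 := by linear_combination -e1
      simpa using this
    exact key rfl rfl hz rfl hv
  · have hz : z = 0 := by simpa [hs] using c2'
    subst hz hu hv
    have hxy : x = 0 ∨ y = 0 := by simpa using e1
    rcases hxy with rfl | rfl
    · have hy : y = 0 := by simpa [hA, hB] using e2
      exact key rfl hy rfl rfl rfl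
    · have hx : x = 0 := by simpa using e2
      exact key hx rfl rfl rfl rfl

theorem backward_aux {F : Type*} [Field F] [IsAlgClosed F] (h2 : (2 : F) ≠ 0) (A B D : F)
    (h : A * B * D = 0 ∨ A = B ∨ A ^ 2 - 2 * A * B + B ^ 2 - 2 * A - 2 * B + 1 = 0) :
    ∃ t : Fin 5 → F, t ≠ 0 ∧ SPoint A B D t ∧ (jacobian A B D t).rank ≤ 1 := by
  simp only [jacobian_rank_iff_aux, SPoint]
  by_cases hD : D = 0
  · refine ⟨![0, 0, 0, 0, 1], fun h => one_ne_zero (congrFun h 4), ?_, 1, 0, ?_⟩ <;> simp [hD]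
  rcases h with h | h | h
  · have hAB : A * B = 0 := by simpa [hD] using h
    refine ⟨![0, 1, 0, 0, 0], fun h => one_ne_zero (congrFun h 1), ?_, -(A + B), 1, ?_⟩
    · simpa using hAB
    · simpa [mul_assoc, h2] using hAB
  · subst h
    obtain ⟨u, hu⟩ := IsAlgClosed.exists_pow_nat_eq (A / D) (n := 2) (by norm_num)
    refine ⟨![-A, 1, 0, u, 0], fun h => one_ne_zero (congrFun h 1), ?_, 0, 1, ?_⟩
    · simp [hu]; field_simp
    · simp; constructor <;> ring
  · obtain ⟨w, hw⟩ : ∃ w : F, 2 * w = -(A + B - 1) := ⟨-(A + B - 1) / 2, by field_simp⟩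
    obtain ⟨z, hz⟩ := IsAlgClosed.exists_pow_nat_eq w (n := 2) (by norm_num)
    have e : w ^ 2 + (A + B - 1) * w + A * B = 0 := by
      have : (2 : F) * 2 * (w ^ 2 + (A + B - 1) * w + A * B) = 0 := by
        linear_combination (2 * w + (A + B - 1)) * hw - h
      simpa [h2] using this
    refine ⟨![w, 1, z, 0, 0], fun h => one_ne_zero (congrFun h 1), ?_, -1, 1, ?_⟩
    · simp [hz]; linear_combination e
    · simp
      constructor
      · linear_combination hw
      · linear_combination 2 * e - w * hw

/-- Proposition 1 a): for `char K ≠ 2`, the surface `S^{(D;A,B)}` is nonsingular iff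
`ABD ≠ 0`, `A ≠ B` and `A² − 2AB + B² − 2A − 2B + 1 ≠ 0`. -/
theorem nonsingular_iff (K : Type*) [Field K] (hchar : ringChar K ≠ 2) (A B D : K) :
    Nonsingular K A B D ↔
      A * B * D ≠ 0 ∧ A ≠ B ∧ A ^ 2 - 2 * A * B + B ^ 2 - 2 * A - 2 * B + 1 ≠ 0 := by
  have hK : (2 : K) ≠ 0 := Ring.two_ne_zero hchar
  have inj := (algebraMap K (AlgebraicClosure K)).injective
  have h2 : (2 : AlgebraicClosure K) ≠ 0 := by
    intro h
    apply hK
    apply inj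
    rw [map_ofNat, map_zero, h]
  constructor
  · intro hN
    by_contra hc
    have hc' : A * B * D = 0 ∨ A = B ∨
        A ^ 2 - 2 * A * B + B ^ 2 - 2 * A - 2 * B + 1 = 0 := by tauto
    obtain ⟨t, ht, hs, hr⟩ := backward_aux h2 (algebraMap K (AlgebraicClosure K) A)
      (algebraMap K (AlgebraicClosure K) B) (algebraMap K (AlgebraicClosure K) D) (by
        rcases hc' with h | h | h
        · left; simpa using congrArg (algebraMap K (AlgebraicClosure K)) h
        · right; left; rw [h]
        · right; right; simpa [map_ofNat (algebraMap K (AlgebraicClosure K)) 2] using congrArg (algebraMap K (AlgebraicClosure K)) h)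
    exact hN t ht hs hr
  · rintro ⟨hABD, hAB, hd⟩ t ht hs hr
    have hA : A ≠ 0 := by rintro rfl; simp at hABD
    have hB : B ≠ 0 := by rintro rfl; simp at hABD
    have hD : D ≠ 0 := by rintro rfl; simp at hABD
    refine ht (forward_aux h2 _ _ _ (by simpa using hA) (by simpa using hB)
      (by simpa using hD) (fun h => hAB (inj h)) (fun h => hd (inj ?_)) t hs hr)
    simpa [map_ofNat (algebraMap K (AlgebraicClosure K)) 2] using h
end
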